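/- Under Assumption (A) with a > 5 and Assumption (B) with p > 2, if Σ > 0 then for ℙ-a.e. ω and all t ∈ ℝ, lim_{n→∞} κ_ω{ n^{−1/2} S̄_n^ω f ≤ t Σ } = Φ(t), where Φ(t) = (2π)^{−1/2} ∫_{−∞}^t e^{−x²/2} dx. -/

import Mathlib

open MeasureTheory ProbabilityTheory Filter
open scoped ENNReal NNReal

noncomputable section

variable {𝒴 : Type*} [MeasurableSpace 𝒴]

/-- The left shift on the two-sided sequence space `𝒴^ℤ`. -/
def shift (ω : ℤ → 𝒴) : ℤ → 𝒴 := fun i => ω (i + 1)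

/-- The inverse of the left shift. -/
def shiftInv (ω : ℤ → 𝒴) : ℤ → 𝒴 := fun i => ω (i - 1)

/-- The σ-algebra `ℱ_S` generated by the coordinates `ω_i`, `i ∈ S`. -/
def cylSigma (𝒴 : Type*) [MeasurableSpace 𝒴] (S : Set ℤ) : MeasurableSpace (ℤ → 𝒴) :=
  ⨆ i ∈ S, MeasurableSpace.comap (fun ω => ω i) inferInstance

/-- The α-mixing coefficients of the stationary sequence of coordinates under `Pr`. -/
def alphaMix (Pr : Measure (ℤ → 𝒴)) (n : ℕ) : ℝ :=
  sSup {c | ∃ (k : ℤ) (A B : Set (ℤ → 𝒴)),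
    MeasurableSet[cylSigma 𝒴 (Set.Iic k)] A ∧
    MeasurableSet[cylSigma 𝒴 (Set.Ici (k + n))] B ∧
    c = |(Pr (A ∩ B)).toReal - (Pr A).toReal * (Pr B).toReal|}

/-- The `ψ_U`-mixing coefficients of the stationary sequence of coordinates under `Pr`. -/
def psiUMix (Pr : Measure (ℤ → 𝒴)) (n : ℕ) : ℝ≥0∞ :=
  sSup {c | ∃ (k : ℤ) (A B : Set (ℤ → 𝒴)),
    MeasurableSet[cylSigma 𝒴 (Set.Iic k)] A ∧
    MeasurableSet[cylSigma 𝒴 (Set.Ici (k + n))] B ∧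
    Pr A ≠ 0 ∧ Pr B ≠ 0 ∧ c = Pr (A ∩ B) / (Pr A * Pr B) - 1}

/-- Strong mixing of the map `θ` with respect to `Pr`. -/
def StrongMixing {Ω : Type*} [MeasurableSpace Ω] (Pr : Measure Ω) (θ : Ω → Ω) : Prop :=
  ∀ A B : Set Ω, MeasurableSet A → MeasurableSet B →
    Tendsto (fun n => Pr (A ∩ θ^[n] ⁻¹' B)) atTop (nhds (Pr A * Pr B))

/-- The `n`-step transition kernels `P_{ω,n} = P_ω ∘ P_{θω} ∘ ⋯ ∘ P_{θ^{n−1}ω}` of a Markov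
chain in the random environment `ω`. -/
noncomputable def envKernel {Ω 𝒳 : Type*} [MeasurableSpace Ω] [MeasurableSpace 𝒳]
    (θ : Ω → Ω) (P : Ω → Kernel 𝒳 𝒳) : ℕ → Ω → Kernel 𝒳 𝒳
  | 0, _ => Kernel.id
  | n + 1, ω => (envKernel θ P n (θ ω)) ∘ₖ (P ω)

/-- The σ-algebra on path space generated by the coordinates up to time `k`. -/
def pathSigma (𝒳 : Type*) [MeasurableSpace 𝒳] (k : ℕ) : MeasurableSpace (ℕ → 𝒳) :=
  ⨆ i ∈ Set.Iic k, MeasurableSpace.comap (fun y => y i) inferInstance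

/-- The partial sums `S_n^ω f = Σ_{j<n} f_{θ^j ω}(X_{ω,j})` along a path of the chain. -/
def pathSum {𝒴 𝒳 : Type*} (f : (ℤ → 𝒴) → 𝒳 → ℝ) (ω : ℤ → 𝒴) (n : ℕ) (y : ℕ → 𝒳) : ℝ :=
  ∑ j ∈ Finset.range n, f (shift^[j] ω) (y j)

/-- The standard normal distribution function `Φ`. -/
def stdNormalCDF (t : ℝ) : ℝ := (gaussianReal 0 1 (Set.Iic t)).toReal

set_option linter.unusedSectionVars false

section Birkhoff
variable {Ω₀ : Type*} [MeasurableSpace Ω₀]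

/-- Birkhoff sums. -/
def bsum (T : Ω₀ → Ω₀) (g : Ω₀ → ℝ) (n : ℕ) (ω : Ω₀) : ℝ := ∑ j ∈ Finset.range n, g (T^[j] ω)

/-- Running maxima of the Birkhoff sums. -/
def bmax (T : Ω₀ → Ω₀) (g : Ω₀ → ℝ) : ℕ → Ω₀ → ℝ
  | 0, _ => 0
  | n + 1, ω => max 0 (g ω + bmax T g n (T ω))

lemma bsum_succ (T : Ω₀ → Ω₀) (g : Ω₀ → ℝ) (n : ℕ) (ω : Ω₀) :
    bsum T g (n + 1) ω = g ω + bsum T g n (T ω) := by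
  unfold bsum
  rw [Finset.sum_range_succ']
  simp [Function.iterate_succ_apply, add_comm]

lemma bmax_nonneg (T : Ω₀ → Ω₀) (g : Ω₀ → ℝ) (n : ℕ) (ω : Ω₀) : 0 ≤ bmax T g n ω := by
  cases n <;> simp [bmax]

lemma bsum_le_bmax (T : Ω₀ → Ω₀) (g : Ω₀ → ℝ) (n : ℕ) (ω : Ω₀) :
    bsum T g n ω ≤ bmax T g n ω := by
  induction n generalizing ω with
  | zero => simp [bsum, bmax]
  | succ n ih =>
    rw [bsum_succ]
    exact le_max_of_le_right (by linarith [ih (T ω)])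

lemma bmax_mono (T : Ω₀ → Ω₀) (g : Ω₀ → ℝ) (n : ℕ) (ω : Ω₀) :
    bmax T g n ω ≤ bmax T g (n + 1) ω := by
  induction n generalizing ω with
  | zero => simp [bmax]
  | succ n ih =>
    show max 0 (g ω + bmax T g n (T ω)) ≤ max 0 (g ω + bmax T g (n + 1) (T ω))
    exact max_le_max le_rfl (by linarith [ih (T ω)])

lemma bmax_measurable {T : Ω₀ → Ω₀} (hT : Measurable T) {g : Ω₀ → ℝ} (hg : Measurable g) (n : ℕ) :
    Measurable (bmax T g n) := by
  induction n with
  | zero => exact measurable_const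
  | succ n ih => exact measurable_const.max (hg.add (ih.comp hT))

lemma bmax_integrable {μ : Measure Ω₀} [IsProbabilityMeasure μ] {T : Ω₀ → Ω₀}
    (hT : MeasurePreserving T μ μ) {g : Ω₀ → ℝ} (hg : Integrable g μ) (n : ℕ) :
    Integrable (bmax T g n) μ := by
  induction n with
  | zero => exact integrable_const _
  | succ n ih => exact (integrable_const (0:ℝ)).sup (hg.add (hT.integrable_comp_of_integrable ih))

lemma birkhoff_bddAbove {μ : Measure Ω₀} [IsProbabilityMeasure μ] {T : Ω₀ → Ω₀}
    (hT : Ergodic T μ) {g : Ω₀ → ℝ} (hgm : Measurable g) (hg : Integrable g μ)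
    (hneg : ∫ ω, g ω ∂μ < 0) :
    ∀ᵐ ω ∂μ, ∃ C : ℕ, ∀ n, bmax T g n ω ≤ C := by
  set E : Set Ω₀ := {ω | ∃ C : ℕ, ∀ n, bmax T g n ω ≤ C} with hE
  have hEm : MeasurableSet E := by
    have : E = ⋃ C : ℕ, ⋂ n, {ω | bmax T g n ω ≤ C} := by ext; simp [hE]
    rw [this]
    exact MeasurableSet.iUnion fun C => MeasurableSet.iInter fun n =>
      measurableSet_le (bmax_measurable hT.measurable hgm n) measurable_const
  have hinv : T ⁻¹' E = E := by
    ext ω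
    simp only [hE, Set.mem_preimage, Set.mem_ofPred_eq]
    constructor
    · rintro ⟨C, hC⟩
      obtain ⟨K, hK⟩ := exists_nat_ge (max 0 (g ω + C))
      refine ⟨K, fun n => ?_⟩
      cases n with
      | zero => simp [bmax]
      | succ n => exact (max_le_max le_rfl (by linarith [hC n])).trans hK
    · rintro ⟨C, hC⟩
      obtain ⟨K, hK⟩ := exists_nat_ge (C - g ω)
      refine ⟨K, fun n => ?_⟩
      have := hC (n + 1)
      have h2 : g ω + bmax T g n (T ω) ≤ C := (le_max_right _ _).trans this
      linarith
  rcases hT.ae_empty_or_univ_of_preimage_ae_le hEm.nullMeasurableSet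
      (by rw [hinv]; exact EventuallyLE.refl _ _) with h | h
  · exfalso
    have hcomp : ∀ᵐ ω ∂μ, ω ∉ E := by
      filter_upwards [h] with ω hω hmem
      have : E ω = (∅ : Set Ω₀) ω := hω
      have h3 : (∅ : Set Ω₀) ω := this ▸ hmem
      exact h3
    have hlim : Tendsto (fun n => ∫ ω, max (-(bmax T g n (T ω))) (g ω) ∂μ) atTop
        (nhds (∫ ω, g ω ∂μ)) := by
      refine tendsto_integral_of_dominated_convergence (fun ω => |g ω|) ?_ hg.abs ?_ ?_
      · intro n
        exact (((bmax_measurable hT.measurable hgm n).comp hT.measurable).neg.max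
          hgm).aestronglyMeasurable
      · intro n
        refine Eventually.of_forall fun ω => ?_
        have := bmax_nonneg T g n (T ω)
        rw [Real.norm_eq_abs]
        rcases max_cases (-(bmax T g n (T ω))) (g ω) with ⟨h1, h2⟩ | ⟨h1, h2⟩ <;> rw [h1]
        · rw [abs_neg, abs_of_nonneg this]
          exact (by linarith : bmax T g n (T ω) ≤ -g ω).trans (neg_le_abs _)
      · filter_upwards [hcomp] with ω hω
        have hTω : T ω ∉ E := by rw [← Set.mem_preimage, hinv]; exact hω
        obtain ⟨K, hK⟩ := exists_nat_ge (-g ω)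
        simp only [hE, Set.mem_ofPred_eq, not_exists, not_forall, not_le] at hTω
        obtain ⟨n₀, hn₀⟩ := hTω K
        apply tendsto_const_nhds.congr'
        filter_upwards [eventually_ge_atTop n₀] with n hn
        have hmono : bmax T g n₀ (T ω) ≤ bmax T g n (T ω) :=
          monotone_nat_of_le_succ (fun n => bmax_mono T g n (T ω)) hn
        rw [max_eq_right]
        linarith
    have hpos : ∀ n, 0 ≤ ∫ ω, max (-(bmax T g n (T ω))) (g ω) ∂μ := by
      intro n
      have e : ∀ ω, max (-(bmax T g n (T ω))) (g ω)
          = bmax T g (n + 1) ω - bmax T g n (T ω) := by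
        intro ω
        show _ = max 0 (g ω + bmax T g n (T ω)) - _
        rw [← max_sub_sub_right]; simp
      simp_rw [e]
      rw [integral_sub (bmax_integrable hT.toMeasurePreserving hg _)
        (g := fun ω => bmax T g n (T ω)) (hT.toMeasurePreserving.integrable_comp_of_integrable
          (bmax_integrable hT.toMeasurePreserving hg n))]
      have h1 : ∫ ω, bmax T g n (T ω) ∂μ = ∫ ω, bmax T g n ω ∂μ := by
        have := integral_map (μ := μ) hT.measurable.aemeasurable
          (f := bmax T g n) (bmax_measurable hT.measurable hgm n).aestronglyMeasurable
        rw [hT.map_eq] at this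
        exact this.symm
      rw [h1, sub_nonneg]
      exact integral_mono (bmax_integrable hT.toMeasurePreserving hg _)
        (bmax_integrable hT.toMeasurePreserving hg _) (fun ω => bmax_mono T g n ω)
    exact absurd (ge_of_tendsto' hlim hpos) (not_le.mpr hneg)
  · filter_upwards [h] with ω hω
    have : E ω = (Set.univ : Set Ω₀) ω := hω
    have h3 : E ω := this ▸ trivial
    exact h3

lemma birkhoff_upper {μ : Measure Ω₀} [IsProbabilityMeasure μ] {T : Ω₀ → Ω₀}
    (hT : Ergodic T μ) {g : Ω₀ → ℝ} (hgm : Measurable g) (hg : Integrable g μ) :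
    ∀ᵐ ω ∂μ, ∀ ε : ℝ, 0 < ε → ∀ᶠ n : ℕ in atTop, bsum T g n ω / n ≤ (∫ ω, g ω ∂μ) + ε := by
  have key : ∀ k : ℕ, ∀ᵐ ω ∂μ, ∃ C : ℕ, ∀ n,
      bmax T (fun ω => g ω - ((∫ ω, g ω ∂μ) + 1 / (k + 1 : ℝ))) n ω ≤ C := by
    intro k
    apply birkhoff_bddAbove hT (hgm.sub measurable_const) (hg.sub (integrable_const _))
    have e : ∫ ω, (g ω - ((∫ ω, g ω ∂μ) + 1 / (k + 1 : ℝ))) ∂μ = - (1 / (k + 1 : ℝ)) := by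
      rw [integral_sub hg (integrable_const _)]
      simp
    have hk : (0 : ℝ) < 1 / (k + 1 : ℝ) := by positivity
    calc _ = - (1 / (k + 1 : ℝ)) := e
      _ < 0 := by linarith
  filter_upwards [ae_all_iff.2 key] with ω hω ε hε
  obtain ⟨k, hk⟩ := exists_nat_one_div_lt (half_pos hε)
  obtain ⟨C, hC⟩ := hω k
  have hb : ∀ n : ℕ, bsum T g n ω - n * ((∫ ω, g ω ∂μ) + 1 / (k + 1 : ℝ)) ≤ C := by
    intro n
    have := (bsum_le_bmax T _ n ω).trans (hC n)
    simp only [bsum, Finset.sum_sub_distrib, Finset.sum_const, Finset.card_range, nsmul_eq_mul] at this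
    exact this
  have hlim : Tendsto (fun n : ℕ => (C : ℝ) / n) atTop (nhds 0) :=
    tendsto_const_div_atTop_nhds_zero_nat _
  filter_upwards [hlim.eventually (gt_mem_nhds (half_pos hε)), eventually_gt_atTop 0] with n h1 h2
  have hn : (0 : ℝ) < n := by exact_mod_cast h2
  rw [div_lt_iff₀ hn] at h1
  rw [div_le_iff₀ hn]
  have := hb n
  nlinarith

/-- Birkhoff's pointwise ergodic theorem for ergodic maps. -/
theorem birkhoff_ergodic {μ : Measure Ω₀} [IsProbabilityMeasure μ] {T : Ω₀ → Ω₀}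
    (hT : Ergodic T μ) {g : Ω₀ → ℝ} (hgm : Measurable g) (hg : Integrable g μ) :
    ∀ᵐ ω ∂μ, Tendsto (fun n : ℕ => bsum T g n ω / n) atTop (nhds (∫ ω, g ω ∂μ)) := by
  filter_upwards [birkhoff_upper hT hgm hg, birkhoff_upper hT hgm.neg hg.neg] with ω h1 h2
  rw [Metric.tendsto_nhds]
  intro ε hε
  filter_upwards [h1 (ε / 2) (by linarith), h2 (ε / 2) (by linarith)] with n a1 a2
  have e : bsum T (-g) n ω = - bsum T g n ω := by simp [bsum]
  rw [e, neg_div] at a2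
  simp only [Pi.neg_apply, integral_neg] at a2
  rw [Real.dist_eq, abs_lt]
  constructor <;> linarith

end Birkhoff

section Markov
variable {𝒳 : Type*} [MeasurableSpace 𝒳]

/-- The path stopped at time `k`. -/
def stopAt (k : ℕ) (y : ℕ → 𝒳) : ℕ → 𝒳 := fun i => y (min i k)

lemma measurable_stopAt (k : ℕ) : Measurable (stopAt (𝒳 := 𝒳) k) :=
  measurable_pi_lambda _ fun _ => measurable_pi_apply _

lemma pathSigma_le (k : ℕ) : pathSigma 𝒳 k ≤ MeasurableSpace.pi := by
  unfold pathSigma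
  exact iSup₂_le fun i _ => (measurable_pi_apply i).comap_le

lemma measurableSet_stopAt_preimage (k : ℕ) {S : Set (ℕ → 𝒳)} (hS : MeasurableSet S) :
    MeasurableSet[pathSigma 𝒳 k] (stopAt k ⁻¹' S) := by
  have : @Measurable _ _ (pathSigma 𝒳 k) _ (stopAt (𝒳 := 𝒳) k) := by
    refine @measurable_pi_lambda _ _ _ (pathSigma 𝒳 k) _ _ fun i => ?_
    have h1 : MeasurableSpace.comap (fun y : ℕ → 𝒳 => y (min i k)) inferInstance
        ≤ pathSigma 𝒳 k := by
      unfold pathSigma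
      exact le_iSup₂_of_le (min i k) (min_le_right i k) le_rfl
    exact (comap_measurable (fun y : ℕ → 𝒳 => y (min i k))).mono h1 le_rfl
  exact this hS

/-- One-step Markov property as an identity of measures. -/
lemma markov_map (κ : Measure (ℕ → 𝒳)) [IsProbabilityMeasure κ] (k : ℕ) (Q : Kernel 𝒳 𝒳)
    [IsMarkovKernel Q]
    (hM : ∀ Γ : Set 𝒳, MeasurableSet Γ →
      (κ[(fun y => Γ.indicator (fun _ => (1 : ℝ)) (y (k + 1))) | pathSigma 𝒳 k])
        =ᵐ[κ] fun y => (Q (y k) Γ).toReal) :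
    κ.map (fun y => (stopAt k y, y (k + 1)))
      = (κ.map (stopAt k)) ⊗ₘ (Q.comap (fun y : ℕ → 𝒳 => y k) (measurable_pi_apply k)) := by
  have : IsProbabilityMeasure (κ.map (stopAt (𝒳 := 𝒳) k)) :=
    Measure.isProbabilityMeasure_map (measurable_stopAt k).aemeasurable
  have hmm : Measurable (fun y : ℕ → 𝒳 => (stopAt k y, y (k + 1))) :=
    (measurable_stopAt k).prodMk (measurable_pi_apply _)
  have : IsProbabilityMeasure (κ.map (fun y => (stopAt k y, y (k + 1)))) :=
    Measure.isProbabilityMeasure_map hmm.aemeasurable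
  refine Measure.ext_prod fun {S Γ} hS hΓ => ?_
  rw [Measure.map_apply hmm (hS.prod hΓ), Measure.compProd_apply_prod hS hΓ,
    setLIntegral_map hS ((Kernel.measurable_coe _ hΓ)) (measurable_stopAt k)]
  have hS' := measurableSet_stopAt_preimage k hS
  have hS'' : MeasurableSet (stopAt (𝒳 := 𝒳) k ⁻¹' S) := measurable_stopAt k hS
  have hΓ' : MeasurableSet ((fun y : ℕ → 𝒳 => y (k + 1)) ⁻¹' Γ) := measurable_pi_apply (k+1) hΓ
  have hIntg : Integrable (fun y : ℕ → 𝒳 => Γ.indicator (fun _ => (1 : ℝ)) (y (k + 1))) κ := by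
    have : (fun y : ℕ → 𝒳 => Γ.indicator (fun _ => (1 : ℝ)) (y (k + 1)))
      = ((fun y : ℕ → 𝒳 => y (k + 1)) ⁻¹' Γ).indicator (fun _ => (1:ℝ)) := by
      ext y; by_cases h : y (k + 1) ∈ Γ <;> simp [h]
    rw [this]
    exact (integrable_const _).indicator hΓ'
  have h1 := setIntegral_condExp (pathSigma_le (𝒳 := 𝒳) k) hIntg hS'
  rw [setIntegral_congr_ae hS'' ((hM Γ hΓ).mono fun y hy _ => hy)] at h1
  have e1 : ∫ y in stopAt (𝒳 := 𝒳) k ⁻¹' S, Γ.indicator (fun _ => (1 : ℝ)) (y (k + 1)) ∂κ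
      = (κ (stopAt k ⁻¹' S ∩ (fun y : ℕ → 𝒳 => y (k + 1)) ⁻¹' Γ)).toReal := by
    have : (fun y : ℕ → 𝒳 => Γ.indicator (fun _ => (1 : ℝ)) (y (k + 1)))
      = ((fun y : ℕ → 𝒳 => y (k + 1)) ⁻¹' Γ).indicator (fun _ => (1:ℝ)) := by
      ext y; by_cases h : y (k + 1) ∈ Γ <;> simp [h]
    rw [this, setIntegral_indicator hΓ']
    simp [Measure.real]
  have hQm : Measurable (fun y : ℕ → 𝒳 => Q (y k) Γ) :=
    (Kernel.measurable_coe Q hΓ).comp (measurable_pi_apply k)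
  have e2 : ∫ y in stopAt (𝒳 := 𝒳) k ⁻¹' S, (Q (y k) Γ).toReal ∂κ
      = (∫⁻ y in stopAt (𝒳 := 𝒳) k ⁻¹' S, Q (y k) Γ ∂κ).toReal := by
    rw [integral_toReal hQm.aemeasurable]
    exact Eventually.of_forall fun y => (measure_lt_top _ _)
  rw [e1, e2] at h1
  have hfin : ∫⁻ y in stopAt (𝒳 := 𝒳) k ⁻¹' S, Q (y k) Γ ∂κ ≠ ∞ := by
    have : ∫⁻ y in stopAt (𝒳 := 𝒳) k ⁻¹' S, Q (y k) Γ ∂κ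
        ≤ ∫⁻ y in stopAt (𝒳 := 𝒳) k ⁻¹' S, 1 ∂κ := lintegral_mono fun y => prob_le_one
    refine ne_top_of_le_ne_top ?_ this
    simp
  have h2 := (ENNReal.toReal_eq_toReal_iff' hfin (measure_ne_top _ _)).1 h1
  have e3 : (fun y : ℕ → 𝒳 => (stopAt k y, y (k + 1))) ⁻¹' S ×ˢ Γ
      = stopAt k ⁻¹' S ∩ (fun y : ℕ → 𝒳 => y (k + 1)) ⁻¹' Γ := by
    ext y; simp
  rw [e3, ← h2]
  simp [Kernel.comap_apply, stopAt]

variable {𝕜 : Type*} [RCLike 𝕜]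

/-- One-step Markov property for bounded functions. -/
lemma markov_integral (κ : Measure (ℕ → 𝒳)) [IsProbabilityMeasure κ] (k : ℕ) (Q : Kernel 𝒳 𝒳)
    [IsMarkovKernel Q]
    (hM : ∀ Γ : Set 𝒳, MeasurableSet Γ →
      (κ[(fun y => Γ.indicator (fun _ => (1 : ℝ)) (y (k + 1))) | pathSigma 𝒳 k])
        =ᵐ[κ] fun y => (Q (y k) Γ).toReal)
    (φ : (ℕ → 𝒳) → 𝕜) (hφ : Measurable φ) (hφs : ∀ y, φ (stopAt k y) = φ y)
    {a : ℝ} (hφb : ∀ y, ‖φ y‖ ≤ a)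
    (H : 𝒳 → 𝒳 → 𝕜) (hH : Measurable (Function.uncurry H)) {b : ℝ} (hHb : ∀ x z, ‖H x z‖ ≤ b) :
    ∫ y, φ y * H (y k) (y (k + 1)) ∂κ = ∫ y, φ y * (∫ z, H (y k) z ∂(Q (y k))) ∂κ := by
  have : IsProbabilityMeasure (κ.map (stopAt (𝒳 := 𝒳) k)) :=
    Measure.isProbabilityMeasure_map (measurable_stopAt k).aemeasurable
  have hmm : Measurable (fun y : ℕ → 𝒳 => (stopAt k y, y (k + 1))) :=
    (measurable_stopAt k).prodMk (measurable_pi_apply _)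
  let Ψ : (ℕ → 𝒳) × 𝒳 → 𝕜 := fun q => φ q.1 * H (q.1 k) q.2
  have hΨ : Measurable Ψ := by
    refine (hφ.comp measurable_fst).mul ?_
    have hh : Measurable (fun q : (ℕ → 𝒳) × 𝒳 => (q.1 k, q.2)) :=
      ((measurable_pi_apply k).comp measurable_fst).prodMk measurable_snd
    exact hH.comp hh
  have h0 : ∀ y, Ψ (stopAt k y, y (k + 1)) = φ y * H (y k) (y (k + 1)) := by
    intro y; simp [Ψ, hφs, stopAt]
  have h1 : ∫ y, φ y * H (y k) (y (k + 1)) ∂κ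
      = ∫ q, Ψ q ∂(κ.map (fun y => (stopAt k y, y (k + 1)))) := by
    rw [integral_map hmm.aemeasurable hΨ.aestronglyMeasurable]
    simp_rw [h0]
  rw [h1, markov_map κ k Q hM, Measure.integral_compProd]
  · rw [integral_map (measurable_stopAt k).aemeasurable]
    · refine integral_congr_ae (Eventually.of_forall fun y => ?_)
      simp only [Ψ, hφs]
      rw [integral_const_mul]
      simp [Kernel.comap_apply, stopAt]
    · exact (hΨ.stronglyMeasurable.integral_kernel_prod_right'
        (κ := Q.comap (fun y : ℕ → 𝒳 => y k) (measurable_pi_apply k))).aestronglyMeasurable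
  · refine Integrable.of_bound hΨ.aestronglyMeasurable (a * b) (Eventually.of_forall fun q => ?_)
    simp only [Ψ, norm_mul]
    exact mul_le_mul (hφb _) (hHb _ _) (norm_nonneg _) ((norm_nonneg _).trans (hφb q.1))

end Markov

section Contraction
set_option linter.unusedSectionVars false
variable {Ω₀ : Type*} [MeasurableSpace Ω₀] {𝒳 : Type*} [MeasurableSpace 𝒳]

lemma envKernel_isMarkov (θ : Ω₀ → Ω₀) (P : Ω₀ → Kernel 𝒳 𝒳) (hP : ∀ ω, IsMarkovKernel (P ω))
    (n : ℕ) (ω : Ω₀) : IsMarkovKernel (envKernel θ P n ω) := by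
  induction n generalizing ω with
  | zero => unfold envKernel; infer_instance
  | succ n ih =>
    have := hP ω
    have := ih (θ ω)
    unfold envKernel; infer_instance

lemma envKernel_add (θ : Ω₀ → Ω₀) (P : Ω₀ → Kernel 𝒳 𝒳) (a b : ℕ) (ω : Ω₀) :
    envKernel θ P (a + b) ω = (envKernel θ P b (θ^[a] ω)) ∘ₖ (envKernel θ P a ω) := by
  induction a generalizing ω with
  | zero => simp [envKernel, Kernel.comp_id]
  | succ a ih =>
    rw [show a + 1 + b = (a + b) + 1 by ring]
    simp only [envKernel, Function.iterate_succ_apply]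
    rw [ih, Kernel.comp_assoc]

lemma integral_envKernel_add (θ : Ω₀ → Ω₀) (P : Ω₀ → Kernel 𝒳 𝒳)
    (hP : ∀ ω, IsMarkovKernel (P ω)) (a b : ℕ) (ω : Ω₀) {h : 𝒳 → ℝ} (hh : Measurable h)
    {B : ℝ} (hB : ∀ x, |h x| ≤ B) (x : 𝒳) :
    ∫ z, h z ∂(envKernel θ P (a + b) ω x)
      = ∫ w, (∫ z, h z ∂(envKernel θ P b (θ^[a] ω) w)) ∂(envKernel θ P a ω x) := by
  have := envKernel_isMarkov θ P hP
  rw [envKernel_add, Kernel.integral_comp]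
  exact Integrable.of_bound hh.aestronglyMeasurable B (Eventually.of_forall hB)

lemma measurable_integral_kernel (Q : Kernel 𝒳 𝒳) [IsMarkovKernel Q] {h : 𝒳 → ℝ}
    (hh : Measurable h) : Measurable fun x => ∫ z, h z ∂(Q x) :=
  (hh.stronglyMeasurable.integral_kernel (κ := Q)).measurable

lemma abs_integral_le_of_bound {α : Type*} [MeasurableSpace α] (ν : Measure α)
    [IsProbabilityMeasure ν] {h : α → ℝ} {B : ℝ} (hB : ∀ x, |h x| ≤ B) : |∫ z, h z ∂ν| ≤ B := by
  have := norm_integral_le_of_norm_le_const (μ := ν) (f := h) (C := B) (Eventually.of_forall hB)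
  simpa using this

/-- Two measures with a common minorant integrate functions of small oscillation similarly. -/
lemma osc_contr {E : Set 𝒳} (ν ν' m : Measure 𝒳) [IsProbabilityMeasure ν] [IsProbabilityMeasure ν']
    [IsProbabilityMeasure m] (hν : ∀ᵐ z ∂ν, z ∈ E) (hν' : ∀ᵐ z ∂ν', z ∈ E)
    {δ : ℝ} (hδ : 0 ≤ δ) (h1 : ENNReal.ofReal δ • m ≤ ν) (h2 : ENNReal.ofReal δ • m ≤ ν')
    {h : 𝒳 → ℝ} (hh : Measurable h) {B : ℝ} (hB : ∀ x, |h x| ≤ B) {c : ℝ}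
    (hc : ∀ x ∈ E, ∀ x' ∈ E, |h x - h x'| ≤ c) :
    |∫ z, h z ∂ν - ∫ z, h z ∂ν'| ≤ (1 - δ) * c := by
  obtain ⟨x₀, hx₀⟩ : E.Nonempty := by
    obtain ⟨x, hx⟩ := hν.exists
    exact ⟨x, hx⟩
  have hne : (h '' E).Nonempty := ⟨h x₀, x₀, hx₀, rfl⟩
  have hbdd : BddBelow (h '' E) := ⟨-B, by rintro _ ⟨x, _, rfl⟩; exact (abs_le.1 (hB x)).1⟩
  set a := sInf (h '' E)
  have ha1 : ∀ z ∈ E, a ≤ h z := fun z hz => csInf_le hbdd ⟨z, hz, rfl⟩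
  have ha2 : ∀ z ∈ E, h z ≤ a + c := by
    intro z hz
    have : h z - c ≤ a := by
      apply le_csInf hne
      rintro _ ⟨z', hz', rfl⟩
      have := (abs_le.1 (hc z hz z' hz')).2
      linarith
    linarith
  have hIntg : ∀ μ : Measure 𝒳, IsFiniteMeasure μ → Integrable h μ := fun μ _ =>
    Integrable.of_bound hh.aestronglyMeasurable B (Eventually.of_forall hB)
  have key : ∀ μ : Measure 𝒳, IsProbabilityMeasure μ → (∀ᵐ z ∂μ, z ∈ E) →
      ENNReal.ofReal δ • m ≤ μ →
      δ * (∫ z, h z ∂m - a) ≤ ∫ z, h z ∂μ - a ∧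
      δ * (a + c - ∫ z, h z ∂m) ≤ a + c - ∫ z, h z ∂μ := by
    intro μ _ hμ hle
    have i1 := integral_mono_measure (f := fun z => h z - a) hle
      (by filter_upwards [hμ] with z hz; simpa using ha1 z hz)
      ((hIntg μ inferInstance).sub (integrable_const _))
    have i2 := integral_mono_measure (f := fun z => a + c - h z) hle
      (by filter_upwards [hμ] with z hz; simpa using ha2 z hz)
      ((integrable_const _).sub (hIntg μ inferInstance))
    rw [integral_smul_measure, integral_sub (hIntg _ inferInstance) (integrable_const _),
      integral_sub (hIntg _ inferInstance) (integrable_const _)] at i1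
    rw [integral_smul_measure, integral_sub (integrable_const _) (hIntg _ inferInstance),
      integral_sub (integrable_const _) (hIntg _ inferInstance)] at i2
    simp only [ENNReal.toReal_ofReal hδ, integral_const, probReal_univ, smul_eq_mul,
      one_mul] at i1 i2
    exact ⟨i1, i2⟩
  obtain ⟨p1, p2⟩ := key ν inferInstance hν h1
  obtain ⟨p3, p4⟩ := key ν' inferInstance hν' h2
  rw [abs_le]
  constructor <;> linarith

lemma osc_le {E : Set 𝒳} (ν ν' : Measure 𝒳) [IsProbabilityMeasure ν] [IsProbabilityMeasure ν']
    (hν : ∀ᵐ z ∂ν, z ∈ E) (hν' : ∀ᵐ z ∂ν', z ∈ E)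
    {h : 𝒳 → ℝ} (hh : Measurable h) {B : ℝ} (hB : ∀ x, |h x| ≤ B) {c : ℝ}
    (hc : ∀ x ∈ E, ∀ x' ∈ E, |h x - h x'| ≤ c) :
    |∫ z, h z ∂ν - ∫ z, h z ∂ν'| ≤ c := by
  have := osc_contr (E := E) ν ν' ν hν hν' (le_refl (0:ℝ))
    (by rw [ENNReal.ofReal_zero, zero_smul]; exact Measure.zero_le _)
    (by rw [ENNReal.ofReal_zero, zero_smul]; exact Measure.zero_le _) hh hB hc
  simpa using this

/-- Number of visits of the orbit of `ω` to `A` during the times `1,…,k`. -/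
def vis (θ : Ω₀ → Ω₀) (A : Set Ω₀) (ω : Ω₀) (k : ℕ) : ℕ :=
  ∑ i ∈ Finset.range k, A.indicator (fun _ => (1 : ℕ)) (θ^[i + 1] ω)

lemma vis_add (θ : Ω₀ → Ω₀) (A : Set Ω₀) (ω : Ω₀) (a b : ℕ) :
    vis θ A ω (a + b) = vis θ A ω a + vis θ A (θ^[a] ω) b := by
  unfold vis
  rw [Finset.sum_range_add]
  congr 1
  refine Finset.sum_congr rfl fun i _ => ?_
  rw [← Function.iterate_add_apply]
  congr 2
  ring

lemma vis_le (θ : Ω₀ → Ω₀) (A : Set Ω₀) (ω : Ω₀) (a : ℕ) : vis θ A ω a ≤ a := by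
  unfold vis
  calc _ ≤ ∑ i ∈ Finset.range a, 1 := Finset.sum_le_sum fun i _ => by
        classical
        rw [Set.indicator_apply]; split_ifs <;> simp
    _ = a := by simp

/-- The properties of the environment `ω` along its forward orbit. -/
structure GoodEnv (θ : Ω₀ → Ω₀) (P : Ω₀ → Kernel 𝒳 𝒳) (E : Ω₀ → Set 𝒳) (A : Set Ω₀) (δ : ℝ)
    (M : ℕ) (ω : Ω₀) : Prop where
  fib : ∀ k, ∀ x ∈ E (θ^[k] ω), ∀ᵐ z ∂(P (θ^[k] ω) x), z ∈ E (θ^[k + 1] ω)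
  doeb : ∀ k, θ^[k] ω ∈ A → ∃ n ≤ M, n ≤ k → ∃ m : Measure 𝒳, IsProbabilityMeasure m ∧
    ∀ x ∈ E (θ^[k - n] ω), ENNReal.ofReal δ • m ≤ envKernel θ P n (θ^[k - n] ω) x

lemma GoodEnv.shift {θ : Ω₀ → Ω₀} {P : Ω₀ → Kernel 𝒳 𝒳} {E : Ω₀ → Set 𝒳} {A : Set Ω₀} {δ : ℝ}
    {M : ℕ} {ω : Ω₀} (h : GoodEnv θ P E A δ M ω) (j : ℕ) : GoodEnv θ P E A δ M (θ^[j] ω) := by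
  constructor
  · intro k x hx
    rw [← Function.iterate_add_apply] at hx ⊢
    rw [← Function.iterate_add_apply, show k + 1 + j = k + j + 1 by ring]
    exact h.fib (k + j) x hx
  · intro k hk
    rw [← Function.iterate_add_apply] at hk
    obtain ⟨n, hn, hm⟩ := h.doeb (k + j) hk
    refine ⟨n, hn, fun hnk => ?_⟩
    obtain ⟨m, hm1, hm2⟩ := hm (by omega)
    refine ⟨m, hm1, ?_⟩
    rw [← Function.iterate_add_apply, show k - n + j = k + j - n by omega]
    exact hm2

lemma GoodEnv.fib_iter {θ : Ω₀ → Ω₀} {P : Ω₀ → Kernel 𝒳 𝒳} {E : Ω₀ → Set 𝒳} {A : Set Ω₀}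
    {δ : ℝ} {M : ℕ} (hE : ∀ ω, MeasurableSet (E ω)) {ω : Ω₀} (h : GoodEnv θ P E A δ M ω) (k : ℕ)
    (x : 𝒳) (hx : x ∈ E ω) : ∀ᵐ z ∂(envKernel θ P k ω x), z ∈ E (θ^[k] ω) := by
  induction k generalizing ω x with
  | zero =>
    simp only [envKernel, Kernel.id_apply, Function.iterate_zero, id]
    exact (ae_dirac_iff (p := fun z => z ∈ E ω) (hE ω)).2 hx
  | succ k ih =>
    have h1 := h.fib 0 x hx
    simp only [Function.iterate_zero, id, zero_add, Function.iterate_one] at h1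
    rw [ae_iff]
    have : {z | ¬ z ∈ E (θ^[k+1] ω)} = (E (θ^[k+1] ω))ᶜ := rfl
    rw [this, envKernel, Kernel.comp_apply' _ _ _ (hE _).compl, lintegral_eq_zero_iff
      (Kernel.measurable_coe _ (hE _).compl)]
    filter_upwards [h1] with z hz
    have h2 := ih (h.shift 1) z hz
    rw [ae_iff] at h2
    exact h2

lemma GoodEnv.osc_iter {θ : Ω₀ → Ω₀} {P : Ω₀ → Kernel 𝒳 𝒳} (hP : ∀ ω, IsMarkovKernel (P ω))
    {E : Ω₀ → Set 𝒳} {A : Set Ω₀} {δ : ℝ} {M : ℕ} (hE : ∀ ω, MeasurableSet (E ω)) {ω : Ω₀}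
    (hg : GoodEnv θ P E A δ M ω) (k : ℕ) {h : 𝒳 → ℝ} (hh : Measurable h) {B : ℝ}
    (hB : ∀ x, |h x| ≤ B) {c : ℝ}
    (hc : ∀ x ∈ E (θ^[k] ω), ∀ x' ∈ E (θ^[k] ω), |h x - h x'| ≤ c) :
    ∀ x ∈ E ω, ∀ x' ∈ E ω,
      |∫ z, h z ∂(envKernel θ P k ω x) - ∫ z, h z ∂(envKernel θ P k ω x')| ≤ c := by
  intro x hx x' hx'
  have := envKernel_isMarkov θ P hP k ω
  exact osc_le _ _ (hg.fib_iter hE k x hx) (hg.fib_iter hE k x' hx') hh hB hc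

/-- Contraction of oscillations along the chain. -/
lemma GoodEnv.contr {θ : Ω₀ → Ω₀} {P : Ω₀ → Kernel 𝒳 𝒳} (hP : ∀ ω, IsMarkovKernel (P ω))
    {E : Ω₀ → Set 𝒳} {A : Set Ω₀} {δ : ℝ} (hδ : 0 < δ) (hδ1 : δ < 1) {M : ℕ} (hM : 1 ≤ M)
    (hE : ∀ ω, MeasurableSet (E ω)) {q : ℝ} (hq0 : 0 < q) (hq1 : q < 1) (hq : q ^ M = 1 - δ)
    {ω : Ω₀} (hg : GoodEnv θ P E A δ M ω) (k : ℕ) {h : 𝒳 → ℝ} (hh : Measurable h) {B : ℝ}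
    (hB : ∀ x, |h x| ≤ B) {c : ℝ} (hc0 : 0 ≤ c)
    (hc : ∀ x ∈ E (θ^[k] ω), ∀ x' ∈ E (θ^[k] ω), |h x - h x'| ≤ c) :
    ∀ x ∈ E ω, ∀ x' ∈ E ω,
      |∫ z, h z ∂(envKernel θ P k ω x) - ∫ z, h z ∂(envKernel θ P k ω x')|
        ≤ (1 - δ)⁻¹ * q ^ (vis θ A ω k) * c := by
  have hMk := envKernel_isMarkov θ P hP
  have hδ' : 0 < 1 - δ := by linarith
  have hC1 : 1 ≤ (1 - δ)⁻¹ := (one_le_inv₀ hδ').2 (by linarith)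
  induction k using Nat.strong_induction_on generalizing h c B with
  | _ k ih =>
  intro x hx x' hx'
  have hne := hg.osc_iter hP hE k hh hB hc x hx x' hx'
  by_cases hkM : k ≤ M
  · refine hne.trans ?_
    have h1 : q ^ M ≤ q ^ (vis θ A ω k) :=
      pow_le_pow_of_le_one hq0.le hq1.le ((vis_le θ A ω k).trans hkM)
    have h2 : 1 ≤ (1 - δ)⁻¹ * q ^ (vis θ A ω k) := by
      calc (1:ℝ) = (1 - δ)⁻¹ * q ^ M := by rw [hq]; field_simp
        _ ≤ _ := by gcongr
    nlinarith
  push Not at hkM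
  by_cases hkA : θ^[k] ω ∈ A
  · obtain ⟨n, hnM, hn⟩ := hg.doeb k hkA
    obtain ⟨m, hm1, hm2⟩ := hn (by omega)
    -- the function after `n` backward steps
    set h' : 𝒳 → ℝ := fun w => ∫ z, h z ∂(envKernel θ P n (θ^[k - n] ω) w) with hh'
    have hosc' : ∀ y ∈ E (θ^[k - n] ω), ∀ y' ∈ E (θ^[k - n] ω), |h' y - h' y'| ≤ (1 - δ) * c := by
      intro y hy y' hy'
      have e : θ^[n] (θ^[k - n] ω) = θ^[k] ω := by
        rw [← Function.iterate_add_apply]; congr 2; omega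
      have f1 := (hg.shift (k - n)).fib_iter hE n y hy
      have f2 := (hg.shift (k - n)).fib_iter hE n y' hy'
      rw [e] at f1 f2
      exact osc_contr _ _ m f1 f2 hδ.le (hm2 y hy) (hm2 y' hy') hh hB hc
    have hh'm : Measurable h' := measurable_integral_kernel _ hh
    have hh'B : ∀ y, |h' y| ≤ B := fun y => abs_integral_le_of_bound _ hB
    set h'' : 𝒳 → ℝ := fun w => ∫ z, h' z ∂(envKernel θ P (M - n) (θ^[k - M] ω) w) with hh''
    have e2 : θ^[M - n] (θ^[k - M] ω) = θ^[k - n] ω := by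
      rw [← Function.iterate_add_apply]; congr 2; omega
    have hosc'' : ∀ y ∈ E (θ^[k - M] ω), ∀ y' ∈ E (θ^[k - M] ω),
        |h'' y - h'' y'| ≤ (1 - δ) * c := by
      refine (hg.shift (k - M)).osc_iter hP hE (M - n) hh'm hh'B ?_
      rw [e2]; exact hosc'
    have hh''m : Measurable h'' := measurable_integral_kernel _ hh'm
    have hh''B : ∀ y, |h'' y| ≤ B := fun y => abs_integral_le_of_bound _ hh'B
    have hI := ih (k - M) (by omega) hh''m hh''B (by positivity) hosc'' x hx x' hx'
    have hcomp : ∀ x, ∫ z, h z ∂(envKernel θ P k ω x) = ∫ z, h'' z ∂(envKernel θ P (k - M) ω x) := by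
      intro x
      have e3 : k = (k - n) + n := by omega
      have e4 : k - n = (k - M) + (M - n) := by omega
      calc _ = ∫ z, h z ∂(envKernel θ P ((k - n) + n) ω x) := by rw [← e3]
        _ = ∫ z, h' z ∂(envKernel θ P (k - n) ω x) :=
          integral_envKernel_add θ P hP _ _ ω hh hB x
        _ = ∫ z, h' z ∂(envKernel θ P ((k - M) + (M - n)) ω x) := by rw [← e4]
        _ = _ := integral_envKernel_add θ P hP _ _ ω hh'm hh'B x
    rw [hcomp, hcomp]
    refine hI.trans ?_
    have hv : vis θ A ω k ≤ vis θ A ω (k - M) + M := by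
      have e5 : k = (k - M) + M := by omega
      conv_lhs => rw [e5]
      rw [vis_add]
      gcongr
      exact vis_le _ _ _ _
    have h3 : q ^ (vis θ A ω (k - M) + M) ≤ q ^ (vis θ A ω k) :=
      pow_le_pow_of_le_one hq0.le hq1.le hv
    rw [pow_add, hq] at h3
    calc (1 - δ)⁻¹ * q ^ vis θ A ω (k - M) * ((1 - δ) * c)
        = (1 - δ)⁻¹ * (q ^ vis θ A ω (k - M) * (1 - δ)) * c := by ring
      _ ≤ _ := by gcongr
  · obtain ⟨l, rfl⟩ : ∃ l, k = l + 1 := ⟨k - 1, by omega⟩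
    set h' : 𝒳 → ℝ := fun w => ∫ z, h z ∂(envKernel θ P 1 (θ^[l] ω) w) with hh'
    have hh'm : Measurable h' := measurable_integral_kernel _ hh
    have hh'B : ∀ y, |h' y| ≤ B := fun y => abs_integral_le_of_bound _ hB
    have hosc' : ∀ y ∈ E (θ^[l] ω), ∀ y' ∈ E (θ^[l] ω), |h' y - h' y'| ≤ c := by
      refine (hg.shift l).osc_iter hP hE 1 hh hB ?_
      rw [← Function.iterate_add_apply, add_comm]; exact hc
    have hI := ih l (by omega) hh'm hh'B hc0 hosc' x hx x' hx'
    rw [integral_envKernel_add θ P hP l 1 ω hh hB, integral_envKernel_add θ P hP l 1 ω hh hB]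
    have hv : vis θ A ω (l + 1) = vis θ A ω l := by
      unfold vis
      rw [Finset.sum_range_succ, Set.indicator_of_notMem hkA, add_zero]
    rw [hv]
    exact hI

end Contraction

section ChainLemmas
set_option linter.unusedSectionVars false
variable {Ω₀ : Type*} [MeasurableSpace Ω₀] {𝒳 : Type*} [MeasurableSpace 𝒳]

/-- A Markov chain in the good environment `ω`. -/
structure GoodChain (θ : Ω₀ → Ω₀) (P : Ω₀ → Kernel 𝒳 𝒳) (E : Ω₀ → Set 𝒳) (A : Set Ω₀) (δ : ℝ)
    (M : ℕ) (ω : Ω₀) (κ : Measure (ℕ → 𝒳)) : Prop where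
  env : GoodEnv θ P E A δ M ω
  supp : ∀ k : ℕ, ∀ᵐ y ∂κ, y k ∈ E (θ^[k] ω)
  mark : ∀ (k : ℕ) (Γ : Set 𝒳), MeasurableSet Γ →
      (κ[(fun y => Γ.indicator (fun _ => (1 : ℝ)) (y (k + 1))) | pathSigma 𝒳 k])
        =ᵐ[κ] fun y => (P (θ^[k] ω) (y k) Γ).toReal

variable {θ : Ω₀ → Ω₀} {P : Ω₀ → Kernel 𝒳 𝒳} {E : Ω₀ → Set 𝒳} {A : Set Ω₀} {δ : ℝ}
    {M : ℕ} {ω : Ω₀} {κ : Measure (ℕ → 𝒳)} [IsProbabilityMeasure κ] {𝕜 : Type*} [RCLike 𝕜]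

lemma adapt_mono {β : Type*} {φ : (ℕ → 𝒳) → β} {i j : ℕ} (hij : i ≤ j)
    (h : ∀ y, φ (stopAt i y) = φ y) (y : ℕ → 𝒳) : φ (stopAt j y) = φ y := by
  rw [← h, ← h y]
  congr 1
  funext m
  simp only [stopAt]
  congr 1
  omega

lemma GoodChain.multi (hP : ∀ ω, IsMarkovKernel (P ω)) (hc : GoodChain θ P E A δ M ω κ) (i k : ℕ)
    (φ : (ℕ → 𝒳) → 𝕜) (hφ : Measurable φ) (hφs : ∀ y, φ (stopAt i y) = φ y)
    {a : ℝ} (hφb : ∀ y, ‖φ y‖ ≤ a) {h : 𝒳 → ℝ} (hh : Measurable h) {b : ℝ}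
    (hb : ∀ x, |h x| ≤ b) :
    ∫ y, φ y * ((h (y (i + k)) : ℝ) : 𝕜) ∂κ
      = ∫ y, φ y * ((∫ z, h z ∂(envKernel θ P k (θ^[i] ω) (y i)) : ℝ) : 𝕜) ∂κ := by
  induction k generalizing h with
  | zero =>
    simp only [envKernel, Kernel.id_apply, add_zero]
    congr 1; funext y
    rw [integral_dirac' _ _ hh.stronglyMeasurable]
  | succ k ih =>
    have := hP (θ^[i + k] ω)
    have e1 := markov_integral κ (i + k) (P (θ^[i + k] ω)) (hc.mark (i + k)) φ hφ
      (adapt_mono (Nat.le_add_right i k) hφs) hφb (fun _ z => ((h z : ℝ) : 𝕜))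
      (RCLike.measurable_ofReal.comp (hh.comp measurable_snd)) (b := b)
      (fun x z => by simpa using hb z)
    rw [← add_assoc, e1]
    simp only [integral_ofReal]
    rw [ih (measurable_integral_kernel (P (θ^[i + k] ω)) hh)
      (fun x => abs_integral_le_of_bound _ hb)]
    congr 1; funext y
    rw [integral_envKernel_add θ P hP k 1 _ hh hb]
    congr 3
    funext w
    simp only [envKernel, Kernel.id_comp, ← Function.iterate_add_apply, add_comm k i]

/-- Martingale difference arrays. -/
structure MDiff (θ : Ω₀ → Ω₀) (P : Ω₀ → Kernel 𝒳 𝒳) (ω : Ω₀) (ξ : ℕ → 𝒳 → 𝒳 → ℝ) (b : ℝ) :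
    Prop where
  meas : ∀ j, Measurable (Function.uncurry (ξ j))
  bdd : ∀ j x z, |ξ j x z| ≤ b
  zero : ∀ j x, ∫ z, ξ j x z ∂(P (θ^[j] ω) x) = 0

/-- partial sums -/
def msum (ξ : ℕ → 𝒳 → 𝒳 → ℝ) (i l : ℕ) (y : ℕ → 𝒳) : ℝ :=
  ∑ k ∈ Finset.range l, ξ (i + k) (y (i + k)) (y (i + k + 1))

/-- conditional variances -/
def cvar (θ : Ω₀ → Ω₀) (P : Ω₀ → Kernel 𝒳 𝒳) (ω : Ω₀) (ξ : ℕ → 𝒳 → 𝒳 → ℝ) (j : ℕ) (x : 𝒳) : ℝ :=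
  ∫ z, (ξ j x z) ^ 2 ∂(P (θ^[j] ω) x)

lemma MDiff.b_nonneg {ξ : ℕ → 𝒳 → 𝒳 → ℝ} {b : ℝ} (hξ : MDiff θ P ω ξ b) [Nonempty 𝒳] : 0 ≤ b := by
  obtain ⟨x⟩ := ‹Nonempty 𝒳›
  exact (abs_nonneg _).trans (hξ.bdd 0 x x)

lemma measurable_pairEval {ζ : 𝒳 → 𝒳 → ℝ} (hζ : Measurable (Function.uncurry ζ)) (i j : ℕ) :
    Measurable fun y : ℕ → 𝒳 => ζ (y i) (y j) := by
  have h : Measurable fun y : ℕ → 𝒳 => (y i, y j) :=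
    (measurable_pi_apply i).prodMk (measurable_pi_apply j)
  exact hζ.comp h

lemma MDiff.measurable_msum {ξ : ℕ → 𝒳 → 𝒳 → ℝ} {b : ℝ} (hξ : MDiff θ P ω ξ b) (i l : ℕ) :
    Measurable (msum ξ i l) := by
  unfold msum
  refine Finset.measurable_sum _ fun k _ => ?_
  exact measurable_pairEval (hξ.meas (i + k)) _ _

lemma MDiff.abs_msum_le {ξ : ℕ → 𝒳 → 𝒳 → ℝ} {b : ℝ} (hξ : MDiff θ P ω ξ b) (i l : ℕ)
    (y : ℕ → 𝒳) : |msum ξ i l y| ≤ l * b := by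
  unfold msum
  refine (Finset.abs_sum_le_sum_abs _ _).trans ?_
  refine (Finset.sum_le_sum fun k _ => hξ.bdd _ _ _).trans ?_
  simp

lemma msum_stopAt (ξ : ℕ → 𝒳 → 𝒳 → ℝ) (i l : ℕ) (y : ℕ → 𝒳) :
    msum ξ i l (stopAt (i + l) y) = msum ξ i l y := by
  unfold msum
  refine Finset.sum_congr rfl fun k hk => ?_
  have := Finset.mem_range.1 hk
  simp only [stopAt]
  rw [min_eq_left (by omega), min_eq_left (by omega)]

lemma msum_add (ξ : ℕ → 𝒳 → 𝒳 → ℝ) (i a b : ℕ) (y : ℕ → 𝒳) :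
    msum ξ i (a + b) y = msum ξ i a y + msum ξ (i + a) b y := by
  unfold msum
  rw [Finset.sum_range_add]
  congr 1
  refine Finset.sum_congr rfl fun k _ => ?_
  simp only [add_assoc]

lemma msum_succ (ξ : ℕ → 𝒳 → 𝒳 → ℝ) (i a : ℕ) (y : ℕ → 𝒳) :
    msum ξ i (a + 1) y = msum ξ i a y + ξ (i + a) (y (i + a)) (y (i + a + 1)) := by
  unfold msum
  rw [Finset.sum_range_succ]

lemma MDiff.cvar_nonneg {ξ : ℕ → 𝒳 → 𝒳 → ℝ} (j : ℕ) (x : 𝒳) : 0 ≤ cvar θ P ω ξ j x :=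
  integral_nonneg fun _ => sq_nonneg _

lemma MDiff.cvar_le (hP : ∀ ω, IsMarkovKernel (P ω)) {ξ : ℕ → 𝒳 → 𝒳 → ℝ} {b : ℝ}
    (hξ : MDiff θ P ω ξ b) (j : ℕ) (x : 𝒳) : cvar θ P ω ξ j x ≤ b ^ 2 := by
  have := hP (θ^[j] ω)
  refine (le_abs_self _).trans (abs_integral_le_of_bound _ fun z => ?_)
  rw [abs_pow]
  exact pow_le_pow_left₀ (abs_nonneg _) (hξ.bdd _ _ _) 2

lemma MDiff.measurable_cvar (hP : ∀ ω, IsMarkovKernel (P ω)) {ξ : ℕ → 𝒳 → 𝒳 → ℝ} {b : ℝ}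
    (hξ : MDiff θ P ω ξ b) (j : ℕ) : Measurable (cvar θ P ω ξ j) := by
  have := hP (θ^[j] ω)
  have h1 : StronglyMeasurable (Function.uncurry fun x z => (ξ j x z) ^ 2) :=
    ((hξ.meas j).pow_const 2).stronglyMeasurable
  exact (h1.integral_kernel_prod_right (κ := P (θ^[j] ω))).measurable

lemma GoodChain.mart_zero (hP : ∀ ω, IsMarkovKernel (P ω)) (hc : GoodChain θ P E A δ M ω κ)
    {ξ : ℕ → 𝒳 → 𝒳 → ℝ} {b : ℝ} (hξ : MDiff θ P ω ξ b) (j : ℕ)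
    (φ : (ℕ → 𝒳) → 𝕜) (hφ : Measurable φ) (hφs : ∀ y, φ (stopAt j y) = φ y)
    {a : ℝ} (hφb : ∀ y, ‖φ y‖ ≤ a) :
    ∫ y, φ y * ((ξ j (y j) (y (j + 1)) : ℝ) : 𝕜) ∂κ = 0 := by
  have := hP (θ^[j] ω)
  rw [markov_integral κ j (P (θ^[j] ω)) (hc.mark j) φ hφ hφs hφb
    (fun x z => ((ξ j x z : ℝ) : 𝕜)) (RCLike.measurable_ofReal.comp (hξ.meas j)) (b := b)
    (fun x z => by simpa using hξ.bdd j x z)]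
  simp only [integral_ofReal, hξ.zero]
  simp

lemma GoodChain.mart_sq (hP : ∀ ω, IsMarkovKernel (P ω)) (hc : GoodChain θ P E A δ M ω κ)
    {ξ : ℕ → 𝒳 → 𝒳 → ℝ} {b : ℝ} (hξ : MDiff θ P ω ξ b) (j : ℕ)
    (φ : (ℕ → 𝒳) → 𝕜) (hφ : Measurable φ) (hφs : ∀ y, φ (stopAt j y) = φ y)
    {a : ℝ} (hφb : ∀ y, ‖φ y‖ ≤ a) :
    ∫ y, φ y * (((ξ j (y j) (y (j + 1))) ^ 2 : ℝ) : 𝕜) ∂κ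
      = ∫ y, φ y * ((cvar θ P ω ξ j (y j) : ℝ) : 𝕜) ∂κ := by
  have := hP (θ^[j] ω)
  rw [markov_integral κ j (P (θ^[j] ω)) (hc.mark j) φ hφ hφs hφb
    (fun x z => (((ξ j x z) ^ 2 : ℝ) : 𝕜)) (RCLike.measurable_ofReal.comp ((hξ.meas j).pow_const 2))
    (b := b ^ 2) (fun x z => ?_)]
  · simp only [integral_ofReal, cvar]
  · have := pow_le_pow_left₀ (abs_nonneg _) (hξ.bdd j x z) 2
    rw [RCLike.norm_ofReal, abs_pow]; exact this

lemma integrable_bdd {α : Type*} [MeasurableSpace α] {μ : Measure α} [IsFiniteMeasure μ]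
    {φ : α → 𝕜} (hφ : Measurable φ) {a : ℝ} (h : ∀ y, ‖φ y‖ ≤ a) : Integrable φ μ :=
  Integrable.of_bound hφ.aestronglyMeasurable a (Eventually.of_forall h)

lemma GoodChain.orth (hP : ∀ ω, IsMarkovKernel (P ω)) (hc : GoodChain θ P E A δ M ω κ)
    {ξ : ℕ → 𝒳 → 𝒳 → ℝ} {b : ℝ} (hξ : MDiff θ P ω ξ b) (i l : ℕ)
    (φ : (ℕ → 𝒳) → ℝ) (hφ : Measurable φ) (hφs : ∀ y, φ (stopAt i y) = φ y)
    {a : ℝ} (hφb : ∀ y, |φ y| ≤ a) :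
    ∫ y, (φ y + msum ξ i l y) ^ 2 ∂κ
      = ∫ y, (φ y) ^ 2 ∂κ + ∑ k ∈ Finset.range l, ∫ y, cvar θ P ω ξ (i + k) (y (i + k)) ∂κ := by
  induction l with
  | zero => simp [msum]
  | succ l ih =>
    rw [Finset.sum_range_succ, ← add_assoc, ← ih]
    set ψ : (ℕ → 𝒳) → ℝ := fun y => φ y + msum ξ i l y with hψ
    have hψm : Measurable ψ := hφ.add (hξ.measurable_msum i l)
    have hψb : ∀ y, ‖ψ y‖ ≤ a + l * b := fun y =>
      (abs_add_le _ _).trans (add_le_add (hφb y) (hξ.abs_msum_le i l y))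
    have hψs : ∀ y, ψ (stopAt (i + l) y) = ψ y := fun y => by
      simp only [hψ, msum_stopAt, adapt_mono (Nat.le_add_right i l) hφs]
    have e1 := hc.mart_zero hP hξ (i + l) ψ hψm hψs hψb
    have e2 := hc.mart_sq hP hξ (i + l) (fun _ => (1:ℝ)) measurable_const (fun _ => rfl)
      (a := 1) (fun _ => by simp)
    simp only [RCLike.ofReal_real_eq_id, id, one_mul] at e1 e2
    have hξm : Measurable fun y : ℕ → 𝒳 => ξ (i + l) (y (i + l)) (y (i + l + 1)) :=
      measurable_pairEval (hξ.meas (i + l)) _ _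
    have hξi : Integrable (fun y : ℕ → 𝒳 => (ξ (i + l) (y (i + l)) (y (i + l + 1))) ^ 2) κ :=
      integrable_bdd (hξm.pow_const 2) (a := b ^ 2) fun y => by
        rw [Real.norm_eq_abs, abs_pow]
        exact pow_le_pow_left₀ (abs_nonneg _) (hξ.bdd _ _ _) 2
    have hψi : Integrable (fun y => (ψ y) ^ 2) κ :=
      integrable_bdd (hψm.pow_const 2) (a := (a + l * b) ^ 2) fun y => by
        rw [Real.norm_eq_abs, abs_pow]
        exact pow_le_pow_left₀ (abs_nonneg _) (hψb y) 2
    have hci : Integrable (fun y => ψ y * ξ (i + l) (y (i + l)) (y (i + l + 1))) κ :=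
      integrable_bdd (hψm.mul hξm) (a := (a + l * b) * b) fun y => by
        rw [norm_mul]
        exact mul_le_mul (hψb y) (hξ.bdd _ _ _) (norm_nonneg _) ((norm_nonneg _).trans (hψb y))
    have e3 : ∀ y, (φ y + msum ξ i (l + 1) y) ^ 2
        = (ψ y) ^ 2 + 2 * (ψ y * ξ (i + l) (y (i + l)) (y (i + l + 1)))
          + (ξ (i + l) (y (i + l)) (y (i + l + 1))) ^ 2 := fun y => by
      rw [msum_succ]; simp only [hψ]; ring
    simp only [e3]
    have hsum : Integrable
        (fun y => (ψ y) ^ 2 + 2 * (ψ y * ξ (i + l) (y (i + l)) (y (i + l + 1)))) κ :=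
      hψi.add (hci.const_mul 2)
    rw [integral_add hsum hξi, integral_add hψi (hci.const_mul 2),
      integral_const_mul, e1, e2]
    ring

end ChainLemmas

section CharFunBound
set_option linter.unusedSectionVars false
variable {Ω₀ : Type*} [MeasurableSpace Ω₀] {𝒳 : Type*} [MeasurableSpace 𝒳]
variable {θ : Ω₀ → Ω₀} {P : Ω₀ → Kernel 𝒳 𝒳} {E : Ω₀ → Set 𝒳} {A : Set Ω₀} {δ : ℝ}
    {M : ℕ} {ω : Ω₀} {κ : Measure (ℕ → 𝒳)} [IsProbabilityMeasure κ]

lemma abs_sub_integral_le {α : Type*} [MeasurableSpace α] (μ : Measure α) [IsProbabilityMeasure μ]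
    {g : α → ℝ} (hg : Integrable g μ) {c ρ : ℝ} (h : ∀ᵐ y ∂μ, |c - g y| ≤ ρ) :
    |c - ∫ y, g y ∂μ| ≤ ρ := by
  have e : c - ∫ y, g y ∂μ = ∫ y, (c - g y) ∂μ := by
    rw [integral_sub (integrable_const _) hg]; simp
  rw [e]
  have := norm_integral_le_of_norm_le_const (μ := μ) (f := fun y => c - g y) (C := ρ) h
  simpa using this

lemma integral_abs_le_sqrt {α : Type*} [MeasurableSpace α] (μ : Measure α) [IsProbabilityMeasure μ]
    {g : α → ℝ} (hg : Measurable g) {a : ℝ} (ha : ∀ y, |g y| ≤ a) :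
    ∫ y, |g y| ∂μ ≤ √(∫ y, (g y) ^ 2 ∂μ) := by
  have hm : MemLp (fun y => |g y|) 2 μ :=
    MemLp.of_bound hg.abs.aestronglyMeasurable a (Eventually.of_forall fun y => by simpa using ha y)
  have h1 := variance_nonneg (fun y => |g y|) μ
  rw [variance_eq_sub hm] at h1
  apply Real.le_sqrt_of_sq_le
  have : ∫ y, ((fun y => |g y|) ^ 2) y ∂μ = ∫ y, (g y) ^ 2 ∂μ := by
    congr 1; funext y; simp [sq_abs]
  linarith

/-- Decorrelation. -/
lemma GoodChain.decorr (hP : ∀ ω, IsMarkovKernel (P ω)) (hδ : 0 < δ) (hδ1 : δ < 1) (hM : 1 ≤ M)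
    (hE : ∀ ω, MeasurableSet (E ω)) {q : ℝ} (hq0 : 0 < q) (hq1 : q < 1) (hq : q ^ M = 1 - δ)
    (hc : GoodChain θ P E A δ M ω κ) (i k : ℕ)
    (φ : (ℕ → 𝒳) → ℂ) (hφ : Measurable φ) (hφs : ∀ y, φ (stopAt i y) = φ y)
    (hφb : ∀ y, ‖φ y‖ ≤ 1) {h : 𝒳 → ℝ} (hh : Measurable h) {c : ℝ}
    (h0 : ∀ x, 0 ≤ h x) (h1 : ∀ x, h x ≤ c) (hc0 : 0 ≤ c) :
    ‖∫ y, φ y * (((∫ y', h (y' (i + k)) ∂κ) - h (y (i + k)) : ℝ) : ℂ) ∂κ‖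
      ≤ (1 - δ)⁻¹ * q ^ (vis θ A (θ^[i] ω) k) * c := by
  have hMk := envKernel_isMarkov θ P hP
  have hb : ∀ x, |h x| ≤ c := fun x => by rw [abs_of_nonneg (h0 x)]; exact h1 x
  set H : 𝒳 → ℝ := fun x => ∫ z, h z ∂(envKernel θ P k (θ^[i] ω) x) with hH
  have hHm : Measurable H := measurable_integral_kernel _ hh
  have hHb : ∀ x, |H x| ≤ c := fun x => abs_integral_le_of_bound _ hb
  have hHy : Measurable fun y : ℕ → 𝒳 => H (y i) := hHm.comp (measurable_pi_apply i)
  have hhy : Measurable fun y : ℕ → 𝒳 => h (y (i + k)) := hh.comp (measurable_pi_apply _)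
  have e1 := hc.multi hP i k φ hφ hφs hφb hh hb
  have e2 := hc.multi hP i k (fun _ => (1:ℝ)) measurable_const (fun _ => rfl) (a := 1)
    (fun _ => by simp) hh hb
  simp only [RCLike.ofReal_real_eq_id, id, one_mul] at e2
  rw [e2]
  set u := ∫ y, H (y i) ∂κ
  have hosc := hc.env.shift i |>.contr hP hδ hδ1 hM hE hq0 hq1 hq k hh hb hc0
    (fun x _ x' _ => by
      rw [abs_le]; constructor <;> linarith [h0 x, h0 x', h1 x, h1 x'])
  have hIntg : ∀ g : (ℕ → 𝒳) → ℝ, Measurable g → (∀ y, |g y| ≤ c) →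
      Integrable (fun y => φ y * ((g y : ℝ) : ℂ)) κ := fun g hg hgc =>
    integrable_bdd (hφ.mul (Complex.measurable_ofReal.comp hg)) (a := c) fun y => by
      rw [norm_mul, Complex.norm_real]
      calc _ ≤ 1 * c := mul_le_mul (hφb y) (hgc y) (abs_nonneg _) zero_le_one
        _ = c := one_mul _
  have hφi : Integrable (fun y => φ y * (u : ℂ)) κ :=
    (integrable_bdd hφ hφb).mul_const _
  have e3 : ∫ y, φ y * ((u - h (y (i + k)) : ℝ) : ℂ) ∂κ
      = ∫ y, φ y * ((u - H (y i) : ℝ) : ℂ) ∂κ := by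
    simp only [Complex.ofReal_sub, mul_sub]
    rw [integral_sub hφi (hIntg _ hhy fun y => hb _), integral_sub hφi (hIntg _ hHy fun y => hHb _)]
    congr 1
  rw [show (∫ y, φ y * (((∫ y, H (y i) ∂κ) - h (y (i + k)) : ℝ) : ℂ) ∂κ)
    = ∫ y, φ y * ((u - H (y i) : ℝ) : ℂ) ∂κ from e3]
  refine (norm_integral_le_of_norm_le_const (C := (1 - δ)⁻¹ * q ^ (vis θ A (θ^[i] ω) k) * c)
    ?_).trans (by simp)
  filter_upwards [hc.supp i] with y hy
  rw [norm_mul, Complex.norm_real]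
  have h3 : |u - H (y i)| ≤ (1 - δ)⁻¹ * q ^ (vis θ A (θ^[i] ω) k) * c := by
    rw [abs_sub_comm]
    apply abs_sub_integral_le κ (integrable_bdd hHy (a := c) fun y => hHb _)
    filter_upwards [hc.supp i] with y' hy'
    exact hosc _ hy _ hy'
  calc ‖φ y‖ * |u - H (y i)| ≤ 1 * _ := mul_le_mul (hφb y) h3 (abs_nonneg _) zero_le_one
    _ = _ := one_mul _

lemma exp_taylor {x : ℝ} {b : ℝ} (hx : |x| ≤ b) (hb1 : b ≤ 1) :
    ‖Complex.exp (Complex.I * x) - 1 - Complex.I * x + (x : ℂ) ^ 2 / 2‖ ≤ b ^ 3 / 2 := by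
  have hn : ‖Complex.I * (x : ℂ)‖ = |x| := by simp
  have h := Complex.exp_bound (x := Complex.I * x) (by rw [hn]; linarith) (n := 3) (by norm_num)
  rw [hn] at h
  simp only [Finset.sum_range_succ, Finset.sum_range_zero] at h
  have e : Complex.exp (Complex.I * x) - 1 - Complex.I * x + (x : ℂ) ^ 2 / 2
      = Complex.exp (Complex.I * ↑x) -
      (0 + (Complex.I * ↑x) ^ 0 / ↑(Nat.factorial 0) + (Complex.I * ↑x) ^ 1 / ↑(Nat.factorial 1) +
        (Complex.I * ↑x) ^ 2 / ↑(Nat.factorial 2)) := by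
    simp only [mul_pow, Complex.I_sq, Nat.factorial]
    push_cast
    ring
  rw [e]
  refine h.trans ?_
  have h3 : |x| ^ 3 ≤ b ^ 3 := pow_le_pow_left₀ (abs_nonneg _) hx 3
  have hb3 : 0 ≤ b ^ 3 := (pow_nonneg (abs_nonneg _) 3).trans h3
  norm_num [Nat.factorial]
  linarith

lemma MDiff.step (hP : ∀ ω, IsMarkovKernel (P ω)) (hδ : 0 < δ) (hδ1 : δ < 1) (hM : 1 ≤ M)
    (hE : ∀ ω, MeasurableSet (E ω)) {q : ℝ} (hq0 : 0 < q) (hq1 : q < 1) (hq : q ^ M = 1 - δ)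
    (hc : GoodChain θ P E A δ M ω κ) {ξ : ℕ → 𝒳 → 𝒳 → ℝ} {b : ℝ} (hξ : MDiff θ P ω ξ b)
    (hb0 : 0 ≤ b) (hb1 : b ≤ 1) (j l : ℕ) :
    ‖∫ y, Complex.exp (Complex.I * msum ξ 0 (j + 1) y) ∂κ
      - Complex.exp (-((∫ y, cvar θ P ω ξ j (y j) ∂κ) / 2 : ℝ)) *
          ∫ y, Complex.exp (Complex.I * msum ξ 0 j y) ∂κ‖
      ≤ 2 * b ^ 3 + b ^ 3 * √l + b ^ 2 * ((1 - δ)⁻¹ * q ^ (vis θ A (θ^[j - l] ω) (j - (j - l)))) := by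
  set u := ∫ y, cvar θ P ω ξ j (y j) ∂κ with hu
  set i := j - l with hi
  set k := j - i with hk
  have hik : i + k = j := by omega
  have hkl : k ≤ l := by omega
  set Φ : ℕ → (ℕ → 𝒳) → ℂ := fun m y => Complex.exp (Complex.I * msum ξ 0 m y) with hΦ
  have hΦm : ∀ m, Measurable (Φ m) := fun m =>
    Complex.measurable_exp.comp ((Complex.measurable_ofReal.comp (hξ.measurable_msum 0 m)).const_mul _)
  have hΦ1 : ∀ m y, ‖Φ m y‖ = 1 := fun m y => by
    simp only [hΦ]; rw [mul_comm]; exact Complex.norm_exp_ofReal_mul_I _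
  have hΦb : ∀ m y, ‖Φ m y‖ ≤ 1 := fun m y => (hΦ1 m y).le
  have hΦs : ∀ m y, Φ m (stopAt m y) = Φ m y := fun m y => by
    have := msum_stopAt ξ 0 m y
    rw [zero_add] at this
    simp only [hΦ, this]
  set X : (ℕ → 𝒳) → ℝ := fun y => ξ j (y j) (y (j + 1)) with hX
  have hXm : Measurable X := measurable_pairEval (hξ.meas j) _ _
  have hXb : ∀ y, |X y| ≤ b := fun y => hξ.bdd _ _ _
  set s : 𝒳 → ℝ := cvar θ P ω ξ j with hs
  have hsm : Measurable s := hξ.measurable_cvar hP j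
  have hs0 : ∀ x, 0 ≤ s x := fun x => MDiff.cvar_nonneg j x
  have hs1 : ∀ x, s x ≤ b ^ 2 := fun x => hξ.cvar_le hP j x
  have hsy : Measurable fun y : ℕ → 𝒳 => s (y j) := hsm.comp (measurable_pi_apply j)
  have hsabs : ∀ x, |s x| ≤ b ^ 2 := fun x => by rw [abs_of_nonneg (hs0 x)]; exact hs1 x
  have hu0 : 0 ≤ u := integral_nonneg fun y => hs0 _
  have hu1 : u ≤ b ^ 2 := (le_abs_self _).trans (abs_integral_le_of_bound _ fun y => hsabs _)
  -- integrability of bounded functions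
  have hintR : ∀ m, ∀ g : (ℕ → 𝒳) → ℝ, Measurable g → ∀ c : ℝ, (∀ y, |g y| ≤ c) →
      Integrable (fun y => Φ m y * ((g y : ℝ) : ℂ)) κ := fun m g hg c hgc =>
    integrable_bdd ((hΦm m).mul (Complex.measurable_ofReal.comp hg)) (a := c) fun y => by
      rw [norm_mul, Complex.norm_real, hΦ1, one_mul]
      exact hgc y
  have hX2 : ∀ y, |(X y) ^ 2| ≤ b ^ 2 := fun y => by
    rw [abs_pow]; exact pow_le_pow_left₀ (abs_nonneg _) (hXb y) 2
  have z1 := hc.mart_zero hP hξ j (Φ j) (hΦm j) (hΦs j) (hΦb j)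
  have z2 := hc.mart_sq hP hξ j (Φ j) (hΦm j) (hΦs j) (hΦb j)
  set R : (ℕ → 𝒳) → ℂ := fun y => (Complex.exp (Complex.I * X y) - 1 - Complex.I * X y
      + (X y : ℂ) ^ 2 / 2) - ((Real.exp (-(u / 2)) - 1 - (-(u / 2)) : ℝ) : ℂ) with hR
  have hRb : ∀ y, ‖R y‖ ≤ b ^ 3 := by
    intro y
    have h1 := exp_taylor (hXb y) hb1
    have hb3 : b ^ 3 ≤ b ^ 2 := pow_le_pow_of_le_one hb0 hb1 (by norm_num)
    have hb2 : b ^ 2 ≤ 1 := pow_le_one₀ hb0 hb1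
    have h2 := Real.abs_exp_sub_one_sub_id_le (x := -(u / 2)) (by rw [abs_neg, abs_of_nonneg] <;> linarith)
    have h3 : (-(u / 2)) ^ 2 ≤ b ^ 3 / 2 := by
      have : u ^ 2 ≤ (b ^ 2) ^ 2 := pow_le_pow_left₀ hu0 hu1 2
      have h4 : (b ^ 2) ^ 2 ≤ b ^ 3 := by
        rw [← pow_mul]; exact pow_le_pow_of_le_one hb0 hb1 (by norm_num)
      have : 0 ≤ b ^ 3 := by positivity
      nlinarith
    calc ‖R y‖ ≤ _ := norm_sub_le _ _
      _ ≤ b ^ 3 / 2 + b ^ 3 / 2 := by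
        refine add_le_add h1 ?_
        rw [Complex.norm_real]
        exact h2.trans h3
      _ = b ^ 3 := by ring
  have hRm : Measurable R := by
    have : Measurable fun y => (X y : ℂ) := Complex.measurable_ofReal.comp hXm
    refine Measurable.sub ?_ measurable_const
    exact (((Complex.measurable_exp.comp (this.const_mul _)).sub_const 1).sub
      (this.const_mul _)).add ((this.pow_const 2).div_const 2)
  have hΦR : Integrable (fun y => Φ j y * R y) κ :=
    integrable_bdd ((hΦm j).mul hRm) (a := b ^ 3) fun y => by
      rw [norm_mul, hΦ1, one_mul]; exact hRb y
  have hdec : ∀ y, Φ (j + 1) y = Complex.exp (-(u / 2 : ℝ)) * Φ j y + (Φ j y * R y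
      + Complex.I * (Φ j y * (X y : ℂ))
      + (1 / 2) * (Φ j y * (u : ℂ)) - (1 / 2) * (Φ j y * ((X y ^ 2 : ℝ) : ℂ))) := by
    intro y
    have e1 : Φ (j + 1) y = Φ j y * Complex.exp (Complex.I * X y) := by
      simp only [hΦ]
      rw [← Complex.exp_add, msum_succ]
      congr 1
      simp only [zero_add, hX]
      push_cast
      ring
    rw [e1]
    simp only [hR]
    push_cast
    ring
  have i1 : Integrable (fun y => Complex.exp (-(u / 2 : ℝ)) * Φ j y) κ :=
    (integrable_bdd (hΦm j) (hΦb j)).const_mul _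
  have i2 : Integrable (fun y => Complex.I * (Φ j y * (X y : ℂ))) κ :=
    (hintR j X hXm b hXb).const_mul _
  have i3 : Integrable (fun y => (1 / 2 : ℂ) * (Φ j y * (u : ℂ))) κ :=
    ((integrable_bdd (hΦm j) (hΦb j)).mul_const _).const_mul _
  have i4 : Integrable (fun y => (1 / 2 : ℂ) * (Φ j y * ((X y ^ 2 : ℝ) : ℂ))) κ :=
    (hintR j _ (hXm.pow_const 2) _ hX2).const_mul _
  have i23 : Integrable (fun y => Φ j y * R y + Complex.I * (Φ j y * (X y : ℂ))) κ := hΦR.add i2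
  have i234 : Integrable (fun y => Φ j y * R y + Complex.I * (Φ j y * (X y : ℂ))
    + (1 / 2 : ℂ) * (Φ j y * (u : ℂ))) κ := i23.add i3
  have i2345 : Integrable (fun y => Φ j y * R y + Complex.I * (Φ j y * (X y : ℂ))
    + (1 / 2 : ℂ) * (Φ j y * (u : ℂ)) - (1 / 2 : ℂ) * (Φ j y * ((X y ^ 2 : ℝ) : ℂ))) κ := i234.sub i4
  have htot : ∫ y, Φ (j + 1) y ∂κ - Complex.exp (-(u / 2 : ℝ)) * ∫ y, Φ j y ∂κ
      = ∫ y, Φ j y * R y ∂κ + (1 / 2 : ℂ) * ∫ y, Φ j y * ((u - s (y j) : ℝ) : ℂ) ∂κ := by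
    have e0 : ∫ y, Φ j y * ((u - s (y j) : ℝ) : ℂ) ∂κ
        = ∫ y, Φ j y * (u : ℂ) ∂κ - ∫ y, Φ j y * ((s (y j) : ℝ) : ℂ) ∂κ := by
      rw [← integral_sub ((integrable_bdd (hΦm j) (hΦb j)).mul_const _)
        (hintR j _ hsy _ fun y => hsabs _)]
      congr 1; funext y; push_cast; ring
    simp only [hdec]
    rw [integral_add i1 i2345, integral_sub i234 i4, integral_add i23 i3, integral_add hΦR i2,
      integral_const_mul, integral_const_mul, integral_const_mul, integral_const_mul, e0]
    have z1' : ∫ y, Φ j y * (X y : ℂ) ∂κ = 0 := z1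
    have z2' : ∫ y, Φ j y * ((X y ^ 2 : ℝ) : ℂ) ∂κ = ∫ y, Φ j y * ((s (y j) : ℝ) : ℂ) ∂κ := z2
    rw [z1', z2']
    ring
  have hgoal : ‖∫ y, Φ j y * R y ∂κ‖ ≤ b ^ 3 := by
    refine (norm_integral_le_of_norm_le_const (C := b ^ 3) (Eventually.of_forall fun y => ?_)).trans
      (by simp)
    rw [norm_mul, hΦ1, one_mul]; exact hRb y
  have hsplit : ∫ y, Φ j y * ((u - s (y j) : ℝ) : ℂ) ∂κ
      = ∫ y, Φ i y * ((u - s (y j) : ℝ) : ℂ) ∂κ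
        + ∫ y, (Φ j y - Φ i y) * ((u - s (y j) : ℝ) : ℂ) ∂κ := by
    have hus : ∀ y : ℕ → 𝒳, |u - s (y j)| ≤ b ^ 2 := fun y => by
      rw [abs_le]; constructor <;> linarith [hs0 (y j), hs1 (y j)]
    have j1 := hintR i _ (hsy.const_sub u) _ hus
    have j2 := hintR j _ (hsy.const_sub u) _ hus
    have j3 : Integrable (fun y => (Φ j y - Φ i y) * ((u - s (y j) : ℝ) : ℂ)) κ := by
      simp only [sub_mul]; exact j2.sub j1
    rw [← integral_add j1 j3]
    congr 1; funext y; ring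
  have hA1 : ‖∫ y, Φ i y * ((u - s (y j) : ℝ) : ℂ) ∂κ‖
      ≤ (1 - δ)⁻¹ * q ^ (vis θ A (θ^[i] ω) k) * b ^ 2 := by
    have := hc.decorr hP hδ hδ1 hM hE hq0 hq1 hq i k (Φ i) (hΦm i) (hΦs i) (hΦb i) hsm hs0 hs1
      (by positivity)
    rw [hik] at this
    exact this
  have hA2 : ‖∫ y, (Φ j y - Φ i y) * ((u - s (y j) : ℝ) : ℂ) ∂κ‖ ≤ b ^ 3 * √l := by
    have hmb : ∀ y, |msum ξ i k y| ≤ k * b := hξ.abs_msum_le i k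
    have hmm : Measurable (msum ξ i k) := hξ.measurable_msum i k
    have hle : ∀ y, ‖(Φ j y - Φ i y) * ((u - s (y j) : ℝ) : ℂ)‖ ≤ |msum ξ i k y| * b ^ 2 := by
      intro y
      rw [norm_mul, Complex.norm_real]
      refine mul_le_mul ?_ ?_ (norm_nonneg _) (abs_nonneg _)
      · have e : Φ j y - Φ i y = Φ i y * (Complex.exp (Complex.I * (msum ξ i k y : ℝ)) - 1) := by
          simp only [hΦ, mul_sub, mul_one, ← Complex.exp_add]
          congr 2
          rw [← hik, msum_add, zero_add]; push_cast; ring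
        rw [e, norm_mul, hΦ1, one_mul]
        exact Real.norm_exp_I_mul_ofReal_sub_one_le
      · rw [Real.norm_eq_abs, abs_le]; constructor <;> linarith [hs0 (y j), hs1 (y j)]
    have hib : Integrable (fun y => |msum ξ i k y| * b ^ 2) κ :=
      (integrable_bdd (𝕜 := ℝ) hmm.abs (a := k * b) fun y => by simpa using hmb y).mul_const _
    have h1 := norm_integral_le_of_norm_le hib (Eventually.of_forall hle)
    rw [integral_mul_const] at h1
    have h2 := integral_abs_le_sqrt κ hmm hmb
    have h3 := hc.orth hP hξ i k (fun _ => 0) measurable_const (fun _ => rfl) (a := 0) (by simp)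
    simp only [zero_add, ne_eq, OfNat.ofNat_ne_zero, not_false_eq_true, zero_pow,
      integral_zero] at h3
    have h4 : ∫ y, (msum ξ i k y) ^ 2 ∂κ ≤ l * b ^ 2 := by
      rw [h3]
      calc _ ≤ ∑ m ∈ Finset.range k, b ^ 2 := Finset.sum_le_sum fun m _ => by
            refine (le_abs_self _).trans (abs_integral_le_of_bound _ fun y => ?_)
            rw [abs_of_nonneg (MDiff.cvar_nonneg _ _)]
            exact hξ.cvar_le hP _ _
        _ = k * b ^ 2 := by simp
        _ ≤ l * b ^ 2 := by
          have : (k : ℝ) ≤ l := by exact_mod_cast hkl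
          gcongr
    have h5 : √(∫ y, (msum ξ i k y) ^ 2 ∂κ) ≤ √l * b := by
      calc _ ≤ √(l * b ^ 2) := Real.sqrt_le_sqrt h4
        _ = √l * b := by rw [Real.sqrt_mul (by positivity), Real.sqrt_sq hb0]
    calc _ ≤ _ := h1
      _ ≤ (√l * b) * b ^ 2 := by
        refine mul_le_mul_of_nonneg_right (h2.trans h5) (by positivity)
      _ = _ := by ring
  have hfin := htot
  rw [hsplit] at hfin
  have e5 : (∫ y, Complex.exp (Complex.I * msum ξ 0 (j + 1) y) ∂κ
      - Complex.exp (-((u / 2 : ℝ))) *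
          ∫ y, Complex.exp (Complex.I * msum ξ 0 j y) ∂κ) = _ := hfin
  rw [show (-((u / 2 : ℝ) : ℂ)) = ((-(u / 2 : ℝ) : ℝ) : ℂ) by push_cast; ring] at *
  rw [e5]
  refine (norm_add_le _ _).trans ?_
  rw [norm_mul]
  have hn := norm_add_le (∫ y, Φ i y * ((u - s (y j) : ℝ) : ℂ) ∂κ)
    (∫ y, (Φ j y - Φ i y) * ((u - s (y j) : ℝ) : ℂ) ∂κ)
  have h12 : ‖(1 / 2 : ℂ)‖ = 1 / 2 := by norm_num
  rw [h12]
  have p1 : 0 ≤ b ^ 3 * √l := by positivity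
  have p2 : 0 ≤ (1 - δ)⁻¹ * q ^ (vis θ A (θ^[i] ω) k) * b ^ 2 := (norm_nonneg _).trans hA1
  have p3 : 0 ≤ b ^ 3 := by positivity
  nlinarith

lemma MDiff.charfun_bound (hP : ∀ ω, IsMarkovKernel (P ω)) (hδ : 0 < δ) (hδ1 : δ < 1) (hM : 1 ≤ M)
    (hE : ∀ ω, MeasurableSet (E ω)) {q : ℝ} (hq0 : 0 < q) (hq1 : q < 1) (hq : q ^ M = 1 - δ)
    (hc : GoodChain θ P E A δ M ω κ) {ξ : ℕ → 𝒳 → 𝒳 → ℝ} {b : ℝ} (hξ : MDiff θ P ω ξ b)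
    (hb0 : 0 ≤ b) (hb1 : b ≤ 1) (n l : ℕ) :
    ‖∫ y, Complex.exp (Complex.I * msum ξ 0 n y) ∂κ
      - Complex.exp (-((∑ j ∈ Finset.range n, ∫ y, cvar θ P ω ξ j (y j) ∂κ) / 2 : ℝ))‖
      ≤ ∑ j ∈ Finset.range n, (2 * b ^ 3 + b ^ 3 * √l
        + b ^ 2 * ((1 - δ)⁻¹ * q ^ (vis θ A (θ^[j - l] ω) (j - (j - l))))) := by
  induction n with
  | zero => simp [msum]
  | succ n ih =>
    rw [Finset.sum_range_succ, Finset.sum_range_succ]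
    have hs := hξ.step hP hδ hδ1 hM hE hq0 hq1 hq hc hb0 hb1 n l
    set u := ∫ y, cvar θ P ω ξ n (y n) ∂κ
    set U := ∑ j ∈ Finset.range n, ∫ y, cvar θ P ω ξ j (y j) ∂κ
    have hu0 : 0 ≤ u := integral_nonneg fun y => MDiff.cvar_nonneg _ _
    have e : Complex.exp (-(((U + u) / 2 : ℝ))) = Complex.exp (-((u / 2 : ℝ)))
        * Complex.exp (-((U / 2 : ℝ))) := by
      rw [← Complex.exp_add]; congr 1; push_cast; ring
    rw [e]
    have hn : ‖Complex.exp (-((u / 2 : ℝ)))‖ ≤ 1 := by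
      rw [← Complex.ofReal_neg, Complex.norm_exp_ofReal]
      exact Real.exp_le_one_iff.2 (by linarith)
    have e2 : ∫ y, Complex.exp (Complex.I * msum ξ 0 (n + 1) y) ∂κ
        - Complex.exp (-((u / 2 : ℝ))) * Complex.exp (-((U / 2 : ℝ)))
        = (∫ y, Complex.exp (Complex.I * msum ξ 0 (n + 1) y) ∂κ
          - Complex.exp (-((u / 2 : ℝ))) * ∫ y, Complex.exp (Complex.I * msum ξ 0 n y) ∂κ)
        + Complex.exp (-((u / 2 : ℝ))) * (∫ y, Complex.exp (Complex.I * msum ξ 0 n y) ∂κ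
          - Complex.exp (-((U / 2 : ℝ)))) := by ring
    rw [e2]
    refine (norm_add_le _ _).trans ?_
    rw [norm_mul]
    have h3 := mul_le_mul hn ih (norm_nonneg _) zero_le_one
    rw [one_mul] at h3
    linarith
end CharFunBound

section MartApprox
set_option linter.unusedSectionVars false
variable {Ω₀ : Type*} [MeasurableSpace Ω₀] {𝒳 : Type*} [MeasurableSpace 𝒳]

/-- `hk k ω x = E[f(θ^k ω, X_k) | X_0 = x]`. -/
def hk (θ : Ω₀ → Ω₀) (P : Ω₀ → Kernel 𝒳 𝒳) (f : Ω₀ → 𝒳 → ℝ) : ℕ → Ω₀ → 𝒳 → ℝ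
  | 0, ω, x => f ω x
  | k + 1, ω, x => ∫ z, hk θ P f k (θ ω) z ∂(P ω x)

/-- Sum of the first `n` functions `hk`. -/
def gk (θ : Ω₀ → Ω₀) (P : Ω₀ → Kernel 𝒳 𝒳) (f : Ω₀ → 𝒳 → ℝ) (n : ℕ) (ω : Ω₀) (x : 𝒳) : ℝ :=
  ∑ k ∈ Finset.range n, hk θ P f k ω x

open Classical in
/-- Martingale differences. -/
def Dk (θ : Ω₀ → Ω₀) (P : Ω₀ → Kernel 𝒳 𝒳) (E : Ω₀ → Set 𝒳) (f : Ω₀ → 𝒳 → ℝ) (n : ℕ) (ω : Ω₀)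
    (x z : 𝒳) : ℝ :=
  if x ∈ E ω ∧ z ∈ E (θ ω) then gk θ P f n (θ ω) z - ∫ w, gk θ P f n (θ ω) w ∂(P ω x) else 0

/-- Conditional variances of the martingale differences. -/
def dk (θ : Ω₀ → Ω₀) (P : Ω₀ → Kernel 𝒳 𝒳) (E : Ω₀ → Set 𝒳) (f : Ω₀ → 𝒳 → ℝ) (n : ℕ) (ω : Ω₀)
    (x : 𝒳) : ℝ := ∫ z, (Dk θ P E f n ω x z) ^ 2 ∂(P ω x)

/-- Tails of the weighted sums. -/
def Tl (θ : Ω₀ → Ω₀) (A : Set Ω₀) (F : Ω₀ → ℝ) (r : ℝ) (ω : Ω₀) (n : ℕ) : ℝ :=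
  ∑' k : ℕ, F (θ^[n + k] ω) * r ^ (vis θ A ω (n + k))

variable {θ : Ω₀ → Ω₀} {P : Ω₀ → Kernel 𝒳 𝒳} {E : Ω₀ → Set 𝒳} {A : Set Ω₀} {δ : ℝ}
    {M : ℕ} {ω : Ω₀} {f : Ω₀ → 𝒳 → ℝ} {F : Ω₀ → ℝ}

lemma measurable_intP (hP : ∀ ω, IsMarkovKernel (P ω))
    (hPm : ∀ Γ : Set 𝒳, MeasurableSet Γ → Measurable fun q : Ω₀ × 𝒳 => P q.1 q.2 Γ)
    {H : Ω₀ → 𝒳 → 𝒳 → ℝ} (hH : Measurable fun q : (Ω₀ × 𝒳) × 𝒳 => H q.1.1 q.1.2 q.2) :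
    Measurable fun q : Ω₀ × 𝒳 => ∫ z, H q.1 q.2 z ∂(P q.1 q.2) := by
  let PK : Kernel (Ω₀ × 𝒳) 𝒳 :=
    ⟨fun q => P q.1 q.2, Measure.measurable_of_measurable_coe _ hPm⟩
  have : IsMarkovKernel PK := ⟨fun q => (hP q.1).isProbabilityMeasure q.2⟩
  exact (hH.stronglyMeasurable.integral_kernel_prod_right' (κ := PK)).measurable

lemma measurable_hk (hθ : Measurable θ) (hP : ∀ ω, IsMarkovKernel (P ω))
    (hPm : ∀ Γ : Set 𝒳, MeasurableSet Γ → Measurable fun q : Ω₀ × 𝒳 => P q.1 q.2 Γ)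
    (hf : Measurable (Function.uncurry f)) (k : ℕ) :
    Measurable (Function.uncurry (hk θ P f k)) := by
  induction k with
  | zero => exact hf
  | succ k ih =>
    refine measurable_intP (H := fun ω _ z => hk θ P f k (θ ω) z) hP hPm ?_
    exact ih.comp ((hθ.comp (measurable_fst.comp measurable_fst)).prodMk measurable_snd)

lemma measurable_gk (hθ : Measurable θ) (hP : ∀ ω, IsMarkovKernel (P ω))
    (hPm : ∀ Γ : Set 𝒳, MeasurableSet Γ → Measurable fun q : Ω₀ × 𝒳 => P q.1 q.2 Γ)
    (hf : Measurable (Function.uncurry f)) (n : ℕ) :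
    Measurable (Function.uncurry (gk θ P f n)) := by
  have : Function.uncurry (gk θ P f n)
      = fun q => ∑ k ∈ Finset.range n, Function.uncurry (hk θ P f k) q := by
    funext q; rfl
  rw [this]
  exact Finset.measurable_sum _ fun k _ => measurable_hk hθ hP hPm hf k

lemma measurable_Dk (hθ : Measurable θ) (hP : ∀ ω, IsMarkovKernel (P ω))
    (hPm : ∀ Γ : Set 𝒳, MeasurableSet Γ → Measurable fun q : Ω₀ × 𝒳 => P q.1 q.2 Γ)
    (hE : MeasurableSet {q : Ω₀ × 𝒳 | q.2 ∈ E q.1})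
    (hf : Measurable (Function.uncurry f)) (n : ℕ) :
    Measurable fun q : (Ω₀ × 𝒳) × 𝒳 => Dk θ P E f n q.1.1 q.1.2 q.2 := by
  unfold Dk
  have hgm := measurable_gk hθ hP hPm hf n
  have m1 : Measurable fun q : (Ω₀ × 𝒳) × 𝒳 => (θ q.1.1, q.2) :=
    (hθ.comp (measurable_fst.comp measurable_fst)).prodMk measurable_snd
  refine Measurable.ite ?_ ?_ measurable_const
  · exact (measurable_fst hE).inter (m1 hE)
  · refine (hgm.comp m1).sub ?_
    exact (measurable_intP (H := fun ω _ z => gk θ P f n (θ ω) z) hP hPm (hgm.comp m1)).comp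
      measurable_fst

lemma measurable_dk (hθ : Measurable θ) (hP : ∀ ω, IsMarkovKernel (P ω))
    (hPm : ∀ Γ : Set 𝒳, MeasurableSet Γ → Measurable fun q : Ω₀ × 𝒳 => P q.1 q.2 Γ)
    (hE : MeasurableSet {q : Ω₀ × 𝒳 | q.2 ∈ E q.1})
    (hf : Measurable (Function.uncurry f)) (n : ℕ) :
    Measurable (Function.uncurry (dk θ P E f n)) :=
  measurable_intP (H := fun ω x z => (Dk θ P E f n ω x z) ^ 2) hP hPm
    ((measurable_Dk hθ hP hPm hE hf n).pow_const 2)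

lemma abs_hk_le (hP : ∀ ω, IsMarkovKernel (P ω)) (hfF : ∀ ω x, |f ω x| ≤ F ω) (k : ℕ) (ω : Ω₀)
    (x : 𝒳) : |hk θ P f k ω x| ≤ F (θ^[k] ω) := by
  induction k generalizing ω x with
  | zero => exact hfF ω x
  | succ k ih =>
    have := hP ω
    rw [Function.iterate_succ_apply]
    exact abs_integral_le_of_bound _ fun z => ih (θ ω) z

lemma hk_eq (hP : ∀ ω, IsMarkovKernel (P ω)) (hf : Measurable (Function.uncurry f))
    (hfF : ∀ ω x, |f ω x| ≤ F ω) (k : ℕ) (ω : Ω₀) (x : 𝒳) :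
    hk θ P f k ω x = ∫ z, f (θ^[k] ω) z ∂(envKernel θ P k ω x) := by
  have hfm : ∀ ω, Measurable (f ω) := fun ω => hf.comp (measurable_const.prodMk measurable_id)
  induction k generalizing ω x with
  | zero =>
    simp only [hk, envKernel, Kernel.id_apply, Function.iterate_zero, id]
    rw [integral_dirac' _ _ (hfm ω).stronglyMeasurable]
  | succ k ih =>
    simp only [hk, ih]
    rw [add_comm k 1, integral_envKernel_add θ P hP 1 k ω (hfm _) (hfF _)]
    simp only [envKernel, Kernel.id_comp, Function.iterate_one]
    rw [add_comm 1 k, Function.iterate_succ_apply]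

lemma osc_hk (hP : ∀ ω, IsMarkovKernel (P ω)) (hδ : 0 < δ) (hδ1 : δ < 1) (hM : 1 ≤ M)
    (hE : ∀ ω, MeasurableSet (E ω)) {r : ℝ} (hr0 : 0 < r) (hr1 : r < 1) (hr : (r ^ 2) ^ M = 1 - δ)
    (hf : Measurable (Function.uncurry f)) (hfF : ∀ ω x, |f ω x| ≤ F ω)
    (hg : GoodEnv θ P E A δ M ω) (k : ℕ) :
    ∀ x ∈ E ω, ∀ x' ∈ E ω, |hk θ P f k ω x - hk θ P f k ω x'|
      ≤ 2 * (1 - δ)⁻¹ * (F (θ^[k] ω) * r ^ (vis θ A ω k)) := by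
  intro x hx x' hx'
  have hfm : ∀ ω, Measurable (f ω) := fun ω => hf.comp (measurable_const.prodMk measurable_id)
  have hF0 : 0 ≤ F (θ^[k] ω) := (abs_nonneg _).trans (hfF _ x)
  have hδ' : 0 < 1 - δ := by linarith
  rw [hk_eq hP hf hfF, hk_eq hP hf hfF]
  refine (hg.contr hP hδ hδ1 hM hE (q := r ^ 2) (by positivity) (by nlinarith) hr k (hfm _) (hfF _)
    (c := 2 * F (θ^[k] ω)) (by positivity) ?_ x hx x' hx').trans ?_
  · intro z _ z' _
    calc _ ≤ |f (θ^[k] ω) z| + |f (θ^[k] ω) z'| := abs_sub _ _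
      _ ≤ 2 * F (θ^[k] ω) := by linarith [hfF (θ^[k] ω) z, hfF (θ^[k] ω) z']
  · have h1 : (r ^ 2) ^ (vis θ A ω k) ≤ r ^ (vis θ A ω k) :=
      pow_le_pow_left₀ (by positivity) (by nlinarith) _
    have h2 : 0 ≤ (1 - δ)⁻¹ := by positivity
    calc (1 - δ)⁻¹ * (r ^ 2) ^ (vis θ A ω k) * (2 * F (θ^[k] ω))
        ≤ (1 - δ)⁻¹ * r ^ (vis θ A ω k) * (2 * F (θ^[k] ω)) := by gcongr
      _ = _ := by ring

lemma sum_Ico_le_Tl (hF0 : ∀ ω, 0 ≤ F ω) {r : ℝ} (hr0 : 0 < r)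
    (hs : Summable fun k : ℕ => F (θ^[k] ω) * r ^ (vis θ A ω k)) (n m : ℕ) :
    ∑ k ∈ Finset.Ico n m, F (θ^[k] ω) * r ^ (vis θ A ω k) ≤ Tl θ A F r ω n := by
  rw [Finset.sum_Ico_eq_sum_range]
  have hs' : Summable fun k : ℕ => F (θ^[n + k] ω) * r ^ (vis θ A ω (n + k)) := by
    have := (summable_nat_add_iff n).2 hs
    simpa only [add_comm n] using this
  exact hs'.sum_le_tsum _ fun k _ => mul_nonneg (hF0 _) (by positivity)

lemma Tl_nonneg (hF0 : ∀ ω, 0 ≤ F ω) {r : ℝ} (hr0 : 0 < r) (n : ℕ) : 0 ≤ Tl θ A F r ω n :=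
  tsum_nonneg fun k => mul_nonneg (hF0 _) (by positivity)

lemma gk_sub_osc (hP : ∀ ω, IsMarkovKernel (P ω)) (hδ : 0 < δ) (hδ1 : δ < 1) (hM : 1 ≤ M)
    (hE : ∀ ω, MeasurableSet (E ω)) {r : ℝ} (hr0 : 0 < r) (hr1 : r < 1) (hr : (r ^ 2) ^ M = 1 - δ)
    (hf : Measurable (Function.uncurry f)) (hfF : ∀ ω x, |f ω x| ≤ F ω) (hF0 : ∀ ω, 0 ≤ F ω)
    (hg : GoodEnv θ P E A δ M ω)
    (hs : Summable fun k : ℕ => F (θ^[k] ω) * r ^ (vis θ A ω k)) {n m : ℕ} (hnm : n ≤ m) :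
    ∀ x ∈ E ω, ∀ x' ∈ E ω,
      |(gk θ P f m ω x - gk θ P f n ω x) - (gk θ P f m ω x' - gk θ P f n ω x')|
      ≤ 2 * (1 - δ)⁻¹ * Tl θ A F r ω n := by
  intro x hx x' hx'
  have e : ∀ x, gk θ P f m ω x - gk θ P f n ω x = ∑ k ∈ Finset.Ico n m, hk θ P f k ω x := by
    intro x
    rw [Finset.sum_Ico_eq_sub _ hnm]; rfl
  rw [e, e, ← Finset.sum_sub_distrib]
  have hδ' : 0 < 1 - δ := by linarith
  calc _ ≤ _ := Finset.abs_sum_le_sum_abs _ _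
    _ ≤ ∑ k ∈ Finset.Ico n m, 2 * (1 - δ)⁻¹ * (F (θ^[k] ω) * r ^ (vis θ A ω k)) :=
      Finset.sum_le_sum fun k _ => osc_hk hP hδ hδ1 hM hE hr0 hr1 hr hf hfF hg k x hx x' hx'
    _ ≤ _ := by
      rw [← Finset.mul_sum]
      exact mul_le_mul_of_nonneg_left (sum_Ico_le_Tl hF0 hr0 hs n m) (by positivity)

lemma abs_gk_le (hP : ∀ ω, IsMarkovKernel (P ω)) (hfF : ∀ ω x, |f ω x| ≤ F ω) (n : ℕ) (ω : Ω₀)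
    (x : 𝒳) : |gk θ P f n ω x| ≤ ∑ k ∈ Finset.range n, F (θ^[k] ω) :=
  (Finset.abs_sum_le_sum_abs _ _).trans (Finset.sum_le_sum fun k _ => abs_hk_le hP hfF k ω x)

lemma Dk_sub_le (hP : ∀ ω, IsMarkovKernel (P ω)) (hδ : 0 < δ) (hδ1 : δ < 1) (hM : 1 ≤ M)
    (hE : ∀ ω, MeasurableSet (E ω)) {r : ℝ} (hr0 : 0 < r) (hr1 : r < 1) (hr : (r ^ 2) ^ M = 1 - δ)
    (hθ : Measurable θ)
    (hPm : ∀ Γ : Set 𝒳, MeasurableSet Γ → Measurable fun q : Ω₀ × 𝒳 => P q.1 q.2 Γ)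
    (hf : Measurable (Function.uncurry f)) (hfF : ∀ ω x, |f ω x| ≤ F ω) (hF0 : ∀ ω, 0 ≤ F ω)
    (hg : GoodEnv θ P E A δ M ω)
    (hs : Summable fun k : ℕ => F (θ^[k] (θ ω)) * r ^ (vis θ A (θ ω) k)) {n m : ℕ} (hnm : n ≤ m)
    (x z : 𝒳) :
    |Dk θ P E f m ω x z - Dk θ P E f n ω x z| ≤ 2 * (1 - δ)⁻¹ * Tl θ A F r (θ ω) n := by
  have hδ' : 0 < 1 - δ := by linarith
  have := hP ω
  by_cases hxz : x ∈ E ω ∧ z ∈ E (θ ω)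
  · simp only [Dk, if_pos hxz]
    have hgm : ∀ n, Measurable (gk θ P f n (θ ω)) := fun n =>
      (measurable_gk hθ hP hPm hf n).comp (measurable_const.prodMk measurable_id)
    have hgi : ∀ n, Integrable (gk θ P f n (θ ω)) (P ω x) := fun n =>
      integrable_bdd (𝕜 := ℝ) (hgm n) fun y => abs_gk_le hP hfF n (θ ω) y
    have e : gk θ P f m (θ ω) z - ∫ w, gk θ P f m (θ ω) w ∂(P ω x)
        - (gk θ P f n (θ ω) z - ∫ w, gk θ P f n (θ ω) w ∂(P ω x))
        = (gk θ P f m (θ ω) z - gk θ P f n (θ ω) z)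
          - ∫ w, (gk θ P f m (θ ω) w - gk θ P f n (θ ω) w) ∂(P ω x) := by
      rw [integral_sub (hgi m) (hgi n)]; ring
    rw [e]
    apply abs_sub_integral_le _ ((hgi m).sub (hgi n))
    have hf1 := hg.fib 0 x hxz.1
    simp only [Function.iterate_zero, id, zero_add, Function.iterate_one] at hf1
    filter_upwards [hf1] with w hw
    exact gk_sub_osc hP hδ hδ1 hM hE hr0 hr1 hr hf hfF hF0 (hg.shift 1) hs hnm z hxz.2 w hw
  · simp only [Dk, if_neg hxz, sub_zero, abs_zero]
    have := Tl_nonneg (θ := θ) (A := A) (F := F) (ω := θ ω) hF0 hr0 n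
    positivity

lemma Dk_zero (x z : 𝒳) : Dk θ P E f 0 ω x z = 0 := by
  simp [Dk, gk]

lemma Dk_le (hP : ∀ ω, IsMarkovKernel (P ω)) (hδ : 0 < δ) (hδ1 : δ < 1) (hM : 1 ≤ M)
    (hE : ∀ ω, MeasurableSet (E ω)) {r : ℝ} (hr0 : 0 < r) (hr1 : r < 1) (hr : (r ^ 2) ^ M = 1 - δ)
    (hθ : Measurable θ)
    (hPm : ∀ Γ : Set 𝒳, MeasurableSet Γ → Measurable fun q : Ω₀ × 𝒳 => P q.1 q.2 Γ)
    (hf : Measurable (Function.uncurry f)) (hfF : ∀ ω x, |f ω x| ≤ F ω) (hF0 : ∀ ω, 0 ≤ F ω)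
    (hg : GoodEnv θ P E A δ M ω)
    (hs : Summable fun k : ℕ => F (θ^[k] (θ ω)) * r ^ (vis θ A (θ ω) k)) (n : ℕ) (x z : 𝒳) :
    |Dk θ P E f n ω x z| ≤ 2 * (1 - δ)⁻¹ * Tl θ A F r (θ ω) 0 := by
  have := Dk_sub_le hP hδ hδ1 hM hE hr0 hr1 hr hθ hPm hf hfF hF0 hg hs (Nat.zero_le n) x z
  rwa [Dk_zero, sub_zero] at this

lemma integral_Dk (hP : ∀ ω, IsMarkovKernel (P ω)) (hθ : Measurable θ)
    (hPm : ∀ Γ : Set 𝒳, MeasurableSet Γ → Measurable fun q : Ω₀ × 𝒳 => P q.1 q.2 Γ)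
    (hf : Measurable (Function.uncurry f)) (hfF : ∀ ω x, |f ω x| ≤ F ω)
    (hg : GoodEnv θ P E A δ M ω) (n : ℕ) (x : 𝒳) :
    ∫ z, Dk θ P E f n ω x z ∂(P ω x) = 0 := by
  have := hP ω
  by_cases hx : x ∈ E ω
  · have hgm : Measurable (gk θ P f n (θ ω)) :=
      (measurable_gk hθ hP hPm hf n).comp (measurable_const.prodMk measurable_id)
    have hgi : Integrable (gk θ P f n (θ ω)) (P ω x) :=
      integrable_bdd (𝕜 := ℝ) hgm fun y => abs_gk_le hP hfF n (θ ω) y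
    have hf1 := hg.fib 0 x hx
    simp only [Function.iterate_zero, id, zero_add, Function.iterate_one] at hf1
    have e : ∫ z, Dk θ P E f n ω x z ∂(P ω x)
        = ∫ z, (gk θ P f n (θ ω) z - ∫ w, gk θ P f n (θ ω) w ∂(P ω x)) ∂(P ω x) := by
      apply integral_congr_ae
      filter_upwards [hf1] with z hz
      simp only [Dk, if_pos (And.intro hx hz)]
    rw [e, integral_sub hgi (integrable_const _)]
    simp
  · simp [Dk, hx]

lemma gk_succ (hP : ∀ ω, IsMarkovKernel (P ω)) (hθ : Measurable θ)
    (hPm : ∀ Γ : Set 𝒳, MeasurableSet Γ → Measurable fun q : Ω₀ × 𝒳 => P q.1 q.2 Γ)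
    (hf : Measurable (Function.uncurry f)) (hfF : ∀ ω x, |f ω x| ≤ F ω) (n : ℕ) (x : 𝒳) :
    gk θ P f (n + 1) ω x = f ω x + ∫ z, gk θ P f n (θ ω) z ∂(P ω x) := by
  have := hP ω
  unfold gk
  rw [Finset.sum_range_succ', integral_finsetSum]
  · rw [add_comm]; rfl
  · intro k _
    exact integrable_bdd (𝕜 := ℝ) ((measurable_hk hθ hP hPm hf k).comp
      (measurable_const.prodMk measurable_id)) fun y => abs_hk_le hP hfF k (θ ω) y

/-- Martingale decomposition of the partial sums. -/
lemma mart_decomp (hP : ∀ ω, IsMarkovKernel (P ω)) (hθ : Measurable θ)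
    (hPm : ∀ Γ : Set 𝒳, MeasurableSet Γ → Measurable fun q : Ω₀ × 𝒳 => P q.1 q.2 Γ)
    (hf : Measurable (Function.uncurry f)) (hfF : ∀ ω x, |f ω x| ≤ F ω) (n : ℕ) (y : ℕ → 𝒳)
    (hy : ∀ k, y k ∈ E (θ^[k] ω)) :
    ∑ j ∈ Finset.range n, f (θ^[j] ω) (y j)
      = gk θ P f n ω (y 0) + msum (fun j => Dk θ P E f (n - j - 1) (θ^[j] ω)) 0 n y := by
  have key : ∀ i ≤ n, ∑ j ∈ Finset.range i, f (θ^[j] ω) (y j)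
      = gk θ P f n ω (y 0) + msum (fun j => Dk θ P E f (n - j - 1) (θ^[j] ω)) 0 i y
        - gk θ P f (n - i) (θ^[i] ω) (y i) := by
    intro i
    induction i with
    | zero => intro _; simp [msum]
    | succ i ih =>
      intro hi
      rw [Finset.sum_range_succ, ih (by omega), msum_succ, zero_add]
      have hD : Dk θ P E f (n - i - 1) (θ^[i] ω) (y i) (y (i + 1))
          = gk θ P f (n - i - 1) (θ^[i + 1] ω) (y (i + 1))
            - ∫ w, gk θ P f (n - i - 1) (θ^[i + 1] ω) w ∂(P (θ^[i] ω) (y i)) := by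
        have h2 := hy (i + 1)
        rw [Function.iterate_succ_apply'] at h2 ⊢
        rw [Dk, if_pos ⟨hy i, h2⟩]
      have hG : gk θ P f (n - i) (θ^[i] ω) (y i) = f (θ^[i] ω) (y i)
          + ∫ w, gk θ P f (n - i - 1) (θ^[i + 1] ω) w ∂(P (θ^[i] ω) (y i)) := by
        have e : n - i = (n - i - 1) + 1 := by omega
        conv_lhs => rw [e]
        rw [gk_succ hP hθ hPm hf hfF, Function.iterate_succ_apply']
      rw [hG, hD, show n - (i + 1) = n - i - 1 by omega]
      ring
  have h := key n le_rfl
  rw [h, Nat.sub_self]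
  simp [gk]

end MartApprox

section Arrays
set_option linter.unusedSectionVars false
variable {Ω₀ : Type*} [MeasurableSpace Ω₀] {𝒳 : Type*} [MeasurableSpace 𝒳]

/-- Standing assumptions. -/
structure Setup (θ : Ω₀ → Ω₀) (P : Ω₀ → Kernel 𝒳 𝒳) (E : Ω₀ → Set 𝒳) (A : Set Ω₀) (δ : ℝ)
    (M : ℕ) (r : ℝ) (f : Ω₀ → 𝒳 → ℝ) (F : Ω₀ → ℝ) : Prop where
  hP : ∀ ω, IsMarkovKernel (P ω)
  hδ : 0 < δ
  hδ1 : δ < 1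
  hM : 1 ≤ M
  hEm : MeasurableSet {q : Ω₀ × 𝒳 | q.2 ∈ E q.1}
  hr0 : 0 < r
  hr1 : r < 1
  hr : (r ^ 2) ^ M = 1 - δ
  hθ : Measurable θ
  hPm : ∀ Γ : Set 𝒳, MeasurableSet Γ → Measurable fun q : Ω₀ × 𝒳 => P q.1 q.2 Γ
  hf : Measurable (Function.uncurry f)
  hfF : ∀ ω x, |f ω x| ≤ F ω
  hF0 : ∀ ω, 0 ≤ F ω
  hFm : Measurable F
  hAm : MeasurableSet A

variable {θ : Ω₀ → Ω₀} {P : Ω₀ → Kernel 𝒳 𝒳} {E : Ω₀ → Set 𝒳} {A : Set Ω₀} {δ : ℝ}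
    {M : ℕ} {r : ℝ} {f : Ω₀ → 𝒳 → ℝ} {F : Ω₀ → ℝ} {ω : Ω₀}

lemma Setup.hE (S : Setup θ P E A δ M r f F) (ω : Ω₀) : MeasurableSet (E ω) := by
  have h : Measurable fun x : 𝒳 => (ω, x) := measurable_const.prodMk measurable_id
  exact h S.hEm

lemma Setup.c0_pos (S : Setup θ P E A δ M r f F) : 0 < 2 * (1 - δ)⁻¹ := by
  have := S.hδ1
  have : 0 < 1 - δ := by linarith
  positivity

/-- Summability of the weighted series. -/
def WS (θ : Ω₀ → Ω₀) (A : Set Ω₀) (F : Ω₀ → ℝ) (r : ℝ) (ω : Ω₀) : Prop :=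
  Summable fun k : ℕ => F (θ^[k] ω) * r ^ (vis θ A ω k)

lemma Tl_shift_aux (r : ℝ) (j k : ℕ) :
    F (θ^[k] (θ^[j] ω)) * r ^ (vis θ A (θ^[j] ω) k) * r ^ (vis θ A ω j)
      = F (θ^[j + k] ω) * r ^ (vis θ A ω (j + k)) := by
  rw [vis_add, pow_add, ← Function.iterate_add_apply, add_comm k j]; ring

lemma WS.shift (hr0 : 0 < r) (h : WS θ A F r ω) (j : ℕ) : WS θ A F r (θ^[j] ω) := by
  unfold WS at *
  have h1 := (summable_nat_add_iff j).2 h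
  have h2 := h1.mul_right ((r ^ (vis θ A ω j))⁻¹)
  refine h2.congr fun k => ?_
  rw [add_comm k j, ← Tl_shift_aux]
  field_simp

lemma Tl_shift (hr0 : 0 < r) (j n : ℕ) :
    Tl θ A F r (θ^[j] ω) n * r ^ (vis θ A ω j) = Tl θ A F r ω (j + n) := by
  unfold Tl
  rw [← tsum_mul_right]
  congr 1; funext k
  rw [Tl_shift_aux, add_assoc]

/-- Bound for the martingale differences. -/
def Bd (θ : Ω₀ → Ω₀) (A : Set Ω₀) (F : Ω₀ → ℝ) (r δ : ℝ) (ω : Ω₀) : ℝ :=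
  2 * (1 - δ)⁻¹ * Tl θ A F r (θ ω) 0

lemma Setup.Bd_nonneg (S : Setup θ P E A δ M r f F) (ω : Ω₀) : 0 ≤ Bd θ A F r δ ω :=
  mul_nonneg S.c0_pos.le (Tl_nonneg S.hF0 S.hr0 0)

lemma Setup.Dk_le (S : Setup θ P E A δ M r f F) (hg : GoodEnv θ P E A δ M ω) (hs : WS θ A F r ω)
    (n : ℕ) (x z : 𝒳) : |Dk θ P E f n ω x z| ≤ Bd θ A F r δ ω :=
  _root_.Dk_le S.hP S.hδ S.hδ1 S.hM S.hE S.hr0 S.hr1 S.hr S.hθ S.hPm S.hf S.hfF S.hF0 hg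
    (hs.shift S.hr0 1) n x z

lemma Setup.Dk_sub_le (S : Setup θ P E A δ M r f F) (hg : GoodEnv θ P E A δ M ω)
    (hs : WS θ A F r ω) {n m : ℕ} (hnm : n ≤ m) (x z : 𝒳) :
    |Dk θ P E f m ω x z - Dk θ P E f n ω x z| ≤ 2 * (1 - δ)⁻¹ * Tl θ A F r (θ ω) n :=
  _root_.Dk_sub_le S.hP S.hδ S.hδ1 S.hM S.hE S.hr0 S.hr1 S.hr S.hθ S.hPm S.hf S.hfF S.hF0 hg
    (hs.shift S.hr0 1) hnm x z

lemma Setup.measurable_Dk (S : Setup θ P E A δ M r f F) (n : ℕ) (ω : Ω₀) :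
    Measurable (Function.uncurry (Dk θ P E f n ω)) := by
  have h : Measurable fun q : 𝒳 × 𝒳 => ((ω, q.1), q.2) :=
    (measurable_const.prodMk measurable_fst).prodMk measurable_snd
  exact (_root_.measurable_Dk S.hθ S.hP S.hPm S.hEm S.hf n).comp h

lemma Setup.measurable_dk (S : Setup θ P E A δ M r f F) (n : ℕ) (ω : Ω₀) :
    Measurable (dk θ P E f n ω) :=
  (_root_.measurable_dk S.hθ S.hP S.hPm S.hEm S.hf n).comp (measurable_const.prodMk measurable_id)

lemma dk_nonneg (n : ℕ) (ω : Ω₀) (x : 𝒳) : 0 ≤ dk θ P E f n ω x :=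
  integral_nonneg fun _ => sq_nonneg _

lemma Setup.Dk_sq_le (S : Setup θ P E A δ M r f F) (hg : GoodEnv θ P E A δ M ω)
    (hs : WS θ A F r ω) (n : ℕ) (x z : 𝒳) :
    |(Dk θ P E f n ω x z) ^ 2| ≤ (Bd θ A F r δ ω) ^ 2 := by
  rw [abs_pow]
  exact pow_le_pow_left₀ (abs_nonneg _) (S.Dk_le hg hs n x z) 2

lemma Setup.dk_le (S : Setup θ P E A δ M r f F) (hg : GoodEnv θ P E A δ M ω) (hs : WS θ A F r ω)
    (n : ℕ) (x : 𝒳) : dk θ P E f n ω x ≤ (Bd θ A F r δ ω) ^ 2 := by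
  have := S.hP ω
  exact (le_abs_self _).trans (abs_integral_le_of_bound _ (S.Dk_sq_le hg hs n x))

lemma Setup.Dk_sq_int (S : Setup θ P E A δ M r f F) (hg : GoodEnv θ P E A δ M ω)
    (hs : WS θ A F r ω) (n : ℕ) (x : 𝒳) :
    Integrable (fun z => (Dk θ P E f n ω x z) ^ 2) (P ω x) := by
  have := S.hP ω
  have h : Measurable fun z : 𝒳 => (x, z) := measurable_const.prodMk measurable_id
  exact integrable_bdd (𝕜 := ℝ) (((S.measurable_Dk n ω).comp h).pow_const 2)
    (S.Dk_sq_le hg hs n x)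

lemma Setup.dk_sub_le (S : Setup θ P E A δ M r f F) (hg : GoodEnv θ P E A δ M ω)
    (hs : WS θ A F r ω) {n m : ℕ} (hnm : n ≤ m) (x : 𝒳) :
    |dk θ P E f m ω x - dk θ P E f n ω x|
      ≤ 2 * Bd θ A F r δ ω * (2 * (1 - δ)⁻¹ * Tl θ A F r (θ ω) n) := by
  have := S.hP ω
  unfold dk
  rw [← integral_sub (S.Dk_sq_int hg hs m x) (S.Dk_sq_int hg hs n x)]
  apply abs_integral_le_of_bound
  intro z
  have h1 := S.Dk_le hg hs n x z
  have h2 := S.Dk_le hg hs m x z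
  have h3 := S.Dk_sub_le hg hs hnm x z
  rw [sq_sub_sq, abs_mul]
  refine mul_le_mul ((abs_add_le _ _).trans (by linarith)) h3 (abs_nonneg _) ?_
  linarith [S.Bd_nonneg ω]

lemma Setup.dk_upper (S : Setup θ P E A δ M r f F) (hg : GoodEnv θ P E A δ M ω)
    (hs : WS θ A F r ω) {n m : ℕ} (hnm : n ≤ m) {η : ℝ} (hη : 0 < η) (x : 𝒳) :
    dk θ P E f n ω x ≤ (1 + η) * dk θ P E f m ω x
      + (1 + 1 / η) * (2 * (1 - δ)⁻¹ * Tl θ A F r (θ ω) n) ^ 2 := by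
  have := S.hP ω
  set τ := 2 * (1 - δ)⁻¹ * Tl θ A F r (θ ω) n
  have e : (1 + η) * dk θ P E f m ω x + (1 + 1 / η) * τ ^ 2
      = ∫ z, ((1 + η) * (Dk θ P E f m ω x z) ^ 2 + (1 + 1 / η) * τ ^ 2) ∂(P ω x) := by
    rw [integral_add ((S.Dk_sq_int hg hs m x).const_mul _) (integrable_const _), integral_const_mul]
    simp [dk]
  rw [e]
  refine integral_mono (S.Dk_sq_int hg hs n x)
    (((S.Dk_sq_int hg hs m x).const_mul _).add (integrable_const _)) fun z => ?_
  have h3 := S.Dk_sub_le hg hs hnm x z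
  simp only
  set a := Dk θ P E f n ω x z
  set b := Dk θ P E f m ω x z
  have h4 : (b - a) ^ 2 ≤ τ ^ 2 := by
    rw [← sq_abs (b - a)]; exact pow_le_pow_left₀ (abs_nonneg _) h3 2
  have h5 : a ^ 2 ≤ (1 + η) * b ^ 2 + (1 + 1 / η) * (b - a) ^ 2 := by
    have : 0 ≤ (η * b + (b - a)) ^ 2 / η := by positivity
    have e2 : (1 + η) * b ^ 2 + (1 + 1 / η) * (b - a) ^ 2 - a ^ 2
        = (η * b + (b - a)) ^ 2 / η := by
      field_simp; ring
    linarith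
  have h6 : 0 ≤ 1 + 1 / η := by positivity
  nlinarith [mul_le_mul_of_nonneg_left h4 h6]

open Classical in
/-- Truncated and scaled array of martingale differences. -/
def arr (θ : Ω₀ → Ω₀) (P : Ω₀ → Kernel 𝒳 𝒳) (E : Ω₀ → Set 𝒳) (f : Ω₀ → 𝒳 → ℝ) (ω : Ω₀) (n : ℕ)
    (c : ℝ) (J : Finset ℕ) (j : ℕ) (x z : 𝒳) : ℝ :=
  if j ∈ J then c * Dk θ P E f (n - j - 1) (θ^[j] ω) x z else 0

lemma Setup.mdiff (S : Setup θ P E A δ M r f F) (hg : GoodEnv θ P E A δ M ω)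
    (hs : WS θ A F r ω) (n : ℕ) (c : ℝ) (J : Finset ℕ) {b : ℝ} (hb : 0 ≤ b)
    (hJ : ∀ j ∈ J, |c| * Bd θ A F r δ (θ^[j] ω) ≤ b) :
    MDiff θ P ω (arr θ P E f ω n c J) b := by
  constructor
  · intro j
    by_cases hj : j ∈ J
    · have : arr θ P E f ω n c J j = fun x z => c * Dk θ P E f (n - j - 1) (θ^[j] ω) x z := by
        funext x z; simp [arr, hj]
      rw [this]
      exact (S.measurable_Dk _ _).const_mul c
    · have : arr θ P E f ω n c J j = fun x z => 0 := by
        funext x z; simp [arr, hj]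
      rw [this]
      exact measurable_const
  · intro j x z
    by_cases hj : j ∈ J
    · simp only [arr, if_pos hj, abs_mul]
      exact (mul_le_mul_of_nonneg_left (S.Dk_le (hg.shift j) (hs.shift S.hr0 j) _ x z)
        (abs_nonneg _)).trans (hJ j hj)
    · simpa [arr, hj] using hb
  · intro j x
    by_cases hj : j ∈ J
    · simp only [arr, if_pos hj]
      rw [integral_const_mul, integral_Dk S.hP S.hθ S.hPm S.hf S.hfF (hg.shift j), mul_zero]
    · simp [arr, hj]

lemma exists_bound (c : ℝ) (J : Finset ℕ) (B : ℕ → ℝ) :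
    ∃ b, 0 ≤ b ∧ ∀ j ∈ J, |c| * B j ≤ b := by
  refine ⟨∑ j ∈ J, |(|c| * B j)|, Finset.sum_nonneg fun _ _ => abs_nonneg _, fun j hj => ?_⟩
  exact (le_abs_self _).trans (Finset.single_le_sum (f := fun j => |(|c| * B j)|)
    (fun _ _ => abs_nonneg _) hj)

open Classical in
lemma cvar_arr (n : ℕ) (c : ℝ) (J : Finset ℕ) (j : ℕ) (x : 𝒳) :
    cvar θ P ω (arr θ P E f ω n c J) j x
      = if j ∈ J then c ^ 2 * dk θ P E f (n - j - 1) (θ^[j] ω) x else 0 := by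
  unfold cvar arr dk
  by_cases hj : j ∈ J
  · simp only [if_pos hj, mul_pow]
    rw [integral_const_mul]
  · simp [hj]

/-- Expected conditional variances. -/
def uu (θ : Ω₀ → Ω₀) (P : Ω₀ → Kernel 𝒳 𝒳) (E : Ω₀ → Set 𝒳) (f : Ω₀ → 𝒳 → ℝ) (ω : Ω₀)
    (κ : Measure (ℕ → 𝒳)) (n j : ℕ) : ℝ :=
  ∫ y, dk θ P E f (n - j - 1) (θ^[j] ω) (y j) ∂κ

lemma uu_nonneg (κ : Measure (ℕ → 𝒳)) (n j : ℕ) : 0 ≤ uu θ P E f ω κ n j :=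
  integral_nonneg fun _ => dk_nonneg _ _ _

lemma sum_cvar_arr (κ : Measure (ℕ → 𝒳)) (n : ℕ) (c : ℝ) (J : Finset ℕ)
    (hJ : J ⊆ Finset.range n) :
    ∑ j ∈ Finset.range n, ∫ y, cvar θ P ω (arr θ P E f ω n c J) j (y j) ∂κ
      = c ^ 2 * ∑ j ∈ J, uu θ P E f ω κ n j := by
  classical
  rw [Finset.mul_sum, ← Finset.sum_subset hJ]
  · refine Finset.sum_congr rfl fun j hj => ?_
    simp only [cvar_arr, if_pos hj]
    rw [integral_const_mul]; rfl
  · intro j _ hj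
    simp [cvar_arr, hj]

lemma msum_zero_mean {κ : Measure (ℕ → 𝒳)} [IsProbabilityMeasure κ]
    (hP : ∀ ω, IsMarkovKernel (P ω)) (hc : GoodChain θ P E A δ M ω κ)
    {ξ : ℕ → 𝒳 → 𝒳 → ℝ} {b : ℝ} (hξ : MDiff θ P ω ξ b) (n : ℕ) :
    ∫ y, msum ξ 0 n y ∂κ = 0 := by
  unfold msum
  rw [integral_finsetSum]
  · refine Finset.sum_eq_zero fun k _ => ?_
    have := hc.mart_zero hP hξ (0 + k) (fun _ => (1:ℝ)) measurable_const (fun _ => rfl) (a := 1)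
      (by simp)
    simpa using this
  · intro k _
    exact integrable_bdd (𝕜 := ℝ) (measurable_pairEval (hξ.meas _) _ _) fun y => hξ.bdd _ _ _

/-- The centered partial sums. -/
def Sbar (θ : Ω₀ → Ω₀) (f : Ω₀ → 𝒳 → ℝ) (ω : Ω₀) (κ : Measure (ℕ → 𝒳)) (n : ℕ) (y : ℕ → 𝒳) : ℝ :=
  ∑ j ∈ Finset.range n, f (θ^[j] ω) (y j) - ∫ y', ∑ j ∈ Finset.range n, f (θ^[j] ω) (y' j) ∂κ

/-- Error of the approximation by partial martingale sums. -/
lemma Setup.approx (S : Setup θ P E A δ M r f F) {κ : Measure (ℕ → 𝒳)} [IsProbabilityMeasure κ]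
    (hc : GoodChain θ P E A δ M ω κ) (hs : WS θ A F r ω) (n : ℕ) :
    ∃ e0 : ℝ, 0 ≤ e0 ∧ e0 ≤ (2 * (1 - δ)⁻¹ * Tl θ A F r ω 0) ^ 2 ∧
      ∀ J ⊆ Finset.range n, ∫ y, (Sbar θ f ω κ n y - msum (arr θ P E f ω n 1 J) 0 n y) ^ 2 ∂κ
        = e0 + ∑ j ∈ Finset.range n \ J, uu θ P E f ω κ n j := by
  classical
  have hg := hc.env
  have hMk := S.hP
  set m0 := ∫ y, gk θ P f n ω (y 0) ∂κ with hm0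
  set φ : (ℕ → 𝒳) → ℝ := fun y => gk θ P f n ω (y 0) - m0 with hφ
  have hgm : Measurable (gk θ P f n ω) :=
    (measurable_gk S.hθ S.hP S.hPm S.hf n).comp (measurable_const.prodMk measurable_id)
  have hgy : Measurable fun y : ℕ → 𝒳 => gk θ P f n ω (y 0) := hgm.comp (measurable_pi_apply 0)
  have hgi : Integrable (fun y : ℕ → 𝒳 => gk θ P f n ω (y 0)) κ :=
    integrable_bdd (𝕜 := ℝ) hgy fun y => abs_gk_le S.hP S.hfF n ω (y 0)
  set a0 := ∑ k ∈ Finset.range n, F (θ^[k] ω) with ha0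
  have hm0b : |m0| ≤ a0 := abs_integral_le_of_bound _ fun y => abs_gk_le S.hP S.hfF n ω (y 0)
  have hφm : Measurable φ := hgy.sub_const _
  have hφb : ∀ y, |φ y| ≤ a0 + a0 := fun y =>
    (abs_sub _ _).trans (add_le_add (abs_gk_le S.hP S.hfF n ω (y 0)) hm0b)
  have hφs : ∀ y, φ (stopAt 0 y) = φ y := fun y => by simp [hφ, stopAt]
  have hφae : ∀ᵐ y ∂κ, |φ y| ≤ 2 * (1 - δ)⁻¹ * Tl θ A F r ω 0 := by
    filter_upwards [hc.supp 0] with y hy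
    apply abs_sub_integral_le _ hgi
    filter_upwards [hc.supp 0] with y' hy'
    have := gk_sub_osc S.hP S.hδ S.hδ1 S.hM S.hE S.hr0 S.hr1 S.hr S.hf S.hfF S.hF0 hg hs
      (Nat.zero_le n) _ hy _ hy'
    simpa [gk] using this
  refine ⟨∫ y, (φ y) ^ 2 ∂κ, integral_nonneg fun _ => sq_nonneg _, ?_, fun J hJ => ?_⟩
  · have h2 : ∀ᵐ y ∂κ, ‖(φ y) ^ 2‖ ≤ (2 * (1 - δ)⁻¹ * Tl θ A F r ω 0) ^ 2 := by
      filter_upwards [hφae] with y hy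
      rw [norm_pow]
      exact pow_le_pow_left₀ (abs_nonneg _) hy 2
    have := norm_integral_le_of_norm_le_const h2
    refine (le_abs_self _).trans ?_
    simpa using this
  · obtain ⟨b, hb, hbJ⟩ := exists_bound 1 (Finset.range n) fun j => Bd θ A F r δ (θ^[j] ω)
    set D := fun j => Dk θ P E f (n - j - 1) (θ^[j] ω) with hD
    have mA := S.mdiff hg hs n 1 (Finset.range n) hb hbJ
    have mC := S.mdiff hg hs n 1 (Finset.range n \ J) hb fun j hj => hbJ j (Finset.mem_sdiff.1 hj).1
    have hDA : ∀ y, msum D 0 n y = msum (arr θ P E f ω n 1 (Finset.range n)) 0 n y := fun y => by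
      unfold msum
      refine Finset.sum_congr rfl fun k hk => ?_
      simp [arr, hD, Finset.mem_range.1 hk]
    have hsplit : ∀ y, msum (arr θ P E f ω n 1 (Finset.range n)) 0 n y
        = msum (arr θ P E f ω n 1 J) 0 n y + msum (arr θ P E f ω n 1 (Finset.range n \ J)) 0 n y := by
      intro y
      unfold msum
      rw [← Finset.sum_add_distrib]
      refine Finset.sum_congr rfl fun k hk => ?_
      have := Finset.mem_range.1 hk
      by_cases hkJ : k ∈ J <;> simp [arr, hkJ, this]
    have hmean : ∫ y', ∑ j ∈ Finset.range n, f (θ^[j] ω) (y' j) ∂κ = m0 := by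
      have e : ∫ y', ∑ j ∈ Finset.range n, f (θ^[j] ω) (y' j) ∂κ
          = ∫ y', (gk θ P f n ω (y' 0) + msum (arr θ P E f ω n 1 (Finset.range n)) 0 n y') ∂κ := by
        apply integral_congr_ae
        filter_upwards [ae_all_iff.2 hc.supp] with y hy
        rw [mart_decomp S.hP S.hθ S.hPm S.hf S.hfF n y hy, ← hDA]
      rw [e, integral_add hgi (integrable_bdd (𝕜 := ℝ) (mA.measurable_msum 0 n)
        (mA.abs_msum_le 0 n)), msum_zero_mean S.hP hc mA, add_zero]
    have e : ∫ y, (Sbar θ f ω κ n y - msum (arr θ P E f ω n 1 J) 0 n y) ^ 2 ∂κ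
        = ∫ y, (φ y + msum (arr θ P E f ω n 1 (Finset.range n \ J)) 0 n y) ^ 2 ∂κ := by
      apply integral_congr_ae
      filter_upwards [ae_all_iff.2 hc.supp] with y hy
      congr 1
      unfold Sbar
      rw [hmean, mart_decomp S.hP S.hθ S.hPm S.hf S.hfF n y hy]
      have h1 := hDA y
      have h2 := hsplit y
      simp only [hφ]
      rw [h1, h2]
      ring
    rw [e, hc.orth S.hP mC 0 n φ hφm hφs hφb]
    simp only [zero_add]
    rw [sum_cvar_arr κ n 1 _ Finset.sdiff_subset]
    simp

end Arrays

section Limit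
set_option linter.unusedSectionVars false
variable {Ω₀ : Type*} [MeasurableSpace Ω₀] {𝒳 : Type*} [MeasurableSpace 𝒳]

/-- Expected conditional variances, seen from the present. -/
def aa (θi : Ω₀ → Ω₀) (θ : Ω₀ → Ω₀) (P : Ω₀ → Kernel 𝒳 𝒳) (E : Ω₀ → Set 𝒳) (f : Ω₀ → 𝒳 → ℝ)
    (κw : Ω₀ → Measure (ℕ → 𝒳)) (l n : ℕ) (ω : Ω₀) : ℝ :=
  ∫ y, dk θ P E f n ω (y l) ∂(κw (θi^[l] ω))

/-- Asymptotic variance density. -/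
def vs (θi : Ω₀ → Ω₀) (θ : Ω₀ → Ω₀) (P : Ω₀ → Kernel 𝒳 𝒳) (E : Ω₀ → Set 𝒳) (f : Ω₀ → 𝒳 → ℝ)
    (κw : Ω₀ → Measure (ℕ → 𝒳)) (ω : Ω₀) : ℝ :=
  limsup (fun l => aa θi θ P E f κw l l ω) atTop

variable {θi θ : Ω₀ → Ω₀} {P : Ω₀ → Kernel 𝒳 𝒳} {E : Ω₀ → Set 𝒳} {A : Set Ω₀} {δ : ℝ}
    {M : ℕ} {r : ℝ} {f : Ω₀ → 𝒳 → ℝ} {F : Ω₀ → ℝ} {ω : Ω₀} {κw : Ω₀ → Measure (ℕ → 𝒳)}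

lemma Setup.measurable_aa (S : Setup θ P E A δ M r f F) (hθi : Measurable θi)
    (hκ : ∀ ω, IsProbabilityMeasure (κw ω))
    (hκm : ∀ s : Set (ℕ → 𝒳), MeasurableSet s → Measurable fun ω => κw ω s) (l n : ℕ) :
    Measurable (aa θi θ P E f κw l n) := by
  let K : Kernel Ω₀ (ℕ → 𝒳) :=
    ⟨fun ω => κw (θi^[l] ω), (Measure.measurable_of_measurable_coe _ hκm).comp (hθi.iterate l)⟩
  have : IsMarkovKernel K := ⟨fun ω => hκ _⟩
  have hm : Measurable fun q : Ω₀ × (ℕ → 𝒳) => dk θ P E f n q.1 (q.2 l) :=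
    (_root_.measurable_dk S.hθ S.hP S.hPm S.hEm S.hf n).comp
      (measurable_fst.prodMk ((measurable_pi_apply l).comp measurable_snd))
  exact (hm.stronglyMeasurable.integral_kernel_prod_right' (κ := K)).measurable

lemma Setup.measurable_vs (S : Setup θ P E A δ M r f F) (hθi : Measurable θi)
    (hκ : ∀ ω, IsProbabilityMeasure (κw ω))
    (hκm : ∀ s : Set (ℕ → 𝒳), MeasurableSet s → Measurable fun ω => κw ω s) :
    Measurable (vs θi θ P E f κw) :=
  Measurable.limsup fun l => S.measurable_aa hθi hκ hκm l l

lemma iter_inv (h1 : ∀ ω, θi (θ ω) = ω) (i j : ℕ) : θi^[i + j] (θ^[j] ω) = θi^[i] ω := by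
  rw [Function.iterate_add_apply]
  congr 1
  exact (Function.LeftInverse.iterate (f := θ) (g := θi) h1 j) ω

lemma iter_inv' (h2 : ∀ ω, θ (θi ω) = ω) (i : ℕ) : θ^[i] (θi^[i] ω) = ω :=
  (Function.LeftInverse.iterate (f := θi) (g := θ) h2 i) ω

lemma aa_nonneg (l n : ℕ) : 0 ≤ aa θi θ P E f κw l n ω := integral_nonneg fun _ => dk_nonneg _ _ _

lemma uu_eq_aa (h1 : ∀ ω, θi (θ ω) = ω) (n j : ℕ) :
    uu θ P E f ω (κw ω) n j = aa θi θ P E f κw j (n - j - 1) (θ^[j] ω) := by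
  unfold uu aa
  have := iter_inv (ω := ω) h1 0 j
  simp only [zero_add, Function.iterate_zero, id] at this
  rw [this]

lemma Setup.aa_shift (S : Setup θ P E A δ M r f F) (hκ : ∀ ω, IsProbabilityMeasure (κw ω))
    (h1 : ∀ ω, θi (θ ω) = ω) (h2 : ∀ ω, θ (θi ω) = ω)
    (hc : ∀ l, GoodChain θ P E A δ M (θi^[l] ω) (κw (θi^[l] ω))) (hs : WS θ A F r ω) (i j n : ℕ) :
    aa θi θ P E f κw (i + j) n (θ^[j] ω) = ∫ y, (∫ z, dk θ P E f n (θ^[j] ω) z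
      ∂(envKernel θ P j ω (y i))) ∂(κw (θi^[i] ω)) := by
  unfold aa
  rw [iter_inv h1]
  have hgω : GoodEnv θ P E A δ M ω := (hc 0).env
  have e2 := (hc i).multi S.hP i j (fun _ => (1:ℝ)) measurable_const (fun _ => rfl) (a := 1)
    (fun _ => by simp) (S.measurable_dk n (θ^[j] ω)) (b := (Bd θ A F r δ (θ^[j] ω)) ^ 2)
    (fun x => by
      rw [abs_of_nonneg (dk_nonneg _ _ _)]
      exact S.dk_le (hgω.shift j) (hs.shift S.hr0 j) n x)
  simp only [RCLike.ofReal_real_eq_id, id, one_mul] at e2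
  rw [iter_inv' h2] at e2
  exact e2

lemma Setup.aa_close (S : Setup θ P E A δ M r f F) (hκ : ∀ ω, IsProbabilityMeasure (κw ω))
    (h1 : ∀ ω, θi (θ ω) = ω) (h2 : ∀ ω, θ (θi ω) = ω)
    (hc : ∀ l, GoodChain θ P E A δ M (θi^[l] ω) (κw (θi^[l] ω))) (hs : WS θ A F r ω) (i j n : ℕ) :
    |aa θi θ P E f κw (i + j) n (θ^[j] ω) - aa θi θ P E f κw j n (θ^[j] ω)|
      ≤ (1 - δ)⁻¹ * (r ^ 2) ^ (vis θ A ω j) * (Bd θ A F r δ (θ^[j] ω)) ^ 2 := by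
  have hgω : GoodEnv θ P E A δ M ω := (hc 0).env
  have hMk := envKernel_isMarkov θ P S.hP
  have hb : ∀ x, |dk θ P E f n (θ^[j] ω) x| ≤ (Bd θ A F r δ (θ^[j] ω)) ^ 2 := fun x => by
      rw [abs_of_nonneg (dk_nonneg _ _ _)]
      exact S.dk_le (hgω.shift j) (hs.shift S.hr0 j) n x
  have hm := S.measurable_dk n (θ^[j] ω)
  have a0 := S.aa_shift hκ h1 h2 hc hs i j n
  have a1 := S.aa_shift hκ h1 h2 hc hs 0 j n
  rw [zero_add] at a1
  rw [a0, a1]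
  set H : 𝒳 → ℝ := fun x => ∫ z, dk θ P E f n (θ^[j] ω) z ∂(envKernel θ P j ω x) with hH
  have hHm : Measurable H := measurable_integral_kernel _ hm
  have hHb : ∀ x, |H x| ≤ (Bd θ A F r δ (θ^[j] ω)) ^ 2 := fun x => abs_integral_le_of_bound _ hb
  have hHy : ∀ i, Measurable fun y : ℕ → 𝒳 => H (y i) := fun i => hHm.comp (measurable_pi_apply i)
  have hosc := hgω.contr S.hP S.hδ S.hδ1 S.hM S.hE (pow_pos S.hr0 2)
    (pow_lt_one₀ S.hr0.le S.hr1 two_ne_zero) S.hr j hm hb (sq_nonneg (Bd θ A F r δ (θ^[j] ω)))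
    (fun x _ x' _ => by
      have p1 := dk_nonneg (θ := θ) (P := P) (E := E) (f := f) n (θ^[j] ω) x
      have p2 := dk_nonneg (θ := θ) (P := P) (E := E) (f := f) n (θ^[j] ω) x'
      have p3 := S.dk_le (hgω.shift j) (hs.shift S.hr0 j) n x
      have p4 := S.dk_le (hgω.shift j) (hs.shift S.hr0 j) n x'
      rw [abs_le]; constructor <;> linarith)
  have hi1 : ∀ i, Integrable (fun y : ℕ → 𝒳 => H (y i)) (κw (θi^[i] ω)) := fun i =>
    integrable_bdd (𝕜 := ℝ) (hHy i) fun y => hHb _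
  apply abs_sub_integral_le _ (hi1 0)
  filter_upwards [(hc 0).supp 0] with y hy
  rw [abs_sub_comm]
  apply abs_sub_integral_le _ (hi1 i)
  filter_upwards [(hc i).supp i] with y' hy'
  rw [iter_inv' h2] at hy'
  exact hosc _ hy _ hy'


lemma Setup.aa_le (S : Setup θ P E A δ M r f F) (hκ : ∀ ω, IsProbabilityMeasure (κw ω))
    (hg : GoodEnv θ P E A δ M ω) (hs : WS θ A F r ω) (l n : ℕ) :
    aa θi θ P E f κw l n ω ≤ (Bd θ A F r δ ω) ^ 2 := by
  refine (le_abs_self _).trans (abs_integral_le_of_bound _ fun y => ?_)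
  rw [abs_of_nonneg (dk_nonneg _ _ _)]
  exact S.dk_le hg hs n _

lemma Setup.bdd_aa (S : Setup θ P E A δ M r f F) (hκ : ∀ ω, IsProbabilityMeasure (κw ω))
    (hg : GoodEnv θ P E A δ M ω) (hs : WS θ A F r ω) :
    IsBoundedUnder (· ≤ ·) atTop (fun l => aa θi θ P E f κw l l ω) :=
  ⟨(Bd θ A F r δ ω) ^ 2, eventually_map.2 (Eventually.of_forall fun l => S.aa_le hκ hg hs l l)⟩

lemma cobdd_aa : IsCoboundedUnder (· ≤ ·) atTop (fun l => aa θi θ P E f κw l l ω) :=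
  IsBoundedUnder.isCoboundedUnder_le
    ⟨0, eventually_map.2 (Eventually.of_forall fun _ => aa_nonneg _ _)⟩

lemma Setup.vs_nonneg (S : Setup θ P E A δ M r f F) (hκ : ∀ ω, IsProbabilityMeasure (κw ω))
    (hg : GoodEnv θ P E A δ M ω) (hs : WS θ A F r ω) : 0 ≤ vs θi θ P E f κw ω :=
  le_limsup_of_frequently_le (Eventually.of_forall fun _ => aa_nonneg _ _).frequently
    (S.bdd_aa hκ hg hs)

lemma Setup.vs_le (S : Setup θ P E A δ M r f F) (hκ : ∀ ω, IsProbabilityMeasure (κw ω))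
    (hg : GoodEnv θ P E A δ M ω) (hs : WS θ A F r ω) :
    vs θi θ P E f κw ω ≤ (Bd θ A F r δ ω) ^ 2 :=
  limsup_le_of_le cobdd_aa (Eventually.of_forall fun l => S.aa_le hκ hg hs l l)

lemma Setup.aa_int (S : Setup θ P E A δ M r f F) (hκ : ∀ ω, IsProbabilityMeasure (κw ω))
    (hg : GoodEnv θ P E A δ M ω) (hs : WS θ A F r ω) (l n : ℕ) (ω' : Ω₀) :
    Integrable (fun y : ℕ → 𝒳 => dk θ P E f n ω (y l)) (κw ω') := by
  refine integrable_bdd (𝕜 := ℝ) ((S.measurable_dk n ω).comp (measurable_pi_apply l))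
    (a := (Bd θ A F r δ ω) ^ 2) fun y => ?_
  rw [Real.norm_eq_abs, abs_of_nonneg (dk_nonneg _ _ _)]
  exact S.dk_le hg hs n _

/-- Lower comparison. -/
lemma Setup.vs_lower (S : Setup θ P E A δ M r f F) (hκ : ∀ ω, IsProbabilityMeasure (κw ω))
    (h1 : ∀ ω, θi (θ ω) = ω) (h2 : ∀ ω, θ (θi ω) = ω)
    (hc : ∀ l, GoodChain θ P E A δ M (θi^[l] ω) (κw (θi^[l] ω))) (hs : WS θ A F r ω) (j n : ℕ) :
    vs θi θ P E f κw (θ^[j] ω) ≤ uu θ P E f ω (κw ω) n j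
      + (1 - δ)⁻¹ * (r ^ 2) ^ (vis θ A ω j) * (Bd θ A F r δ (θ^[j] ω)) ^ 2
      + 2 * Bd θ A F r δ (θ^[j] ω) *
        (2 * (1 - δ)⁻¹ * Tl θ A F r (θ^[j + 1] ω) (n - j - 1)) := by
  have hg : GoodEnv θ P E A δ M ω := (hc 0).env
  rw [uu_eq_aa h1]
  refine limsup_le_of_le cobdd_aa ?_
  filter_upwards [eventually_ge_atTop (j + (n - j - 1))] with l hl
  obtain ⟨i, rfl⟩ : ∃ i, l = i + j := ⟨l - j, by omega⟩
  have c1 := S.aa_close hκ h1 h2 hc hs i j (n - j - 1)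
  have c2 : aa θi θ P E f κw (i + j) (i + j) (θ^[j] ω)
      ≤ aa θi θ P E f κw (i + j) (n - j - 1) (θ^[j] ω) + 2 * Bd θ A F r δ (θ^[j] ω) *
        (2 * (1 - δ)⁻¹ * Tl θ A F r (θ^[j + 1] ω) (n - j - 1)) := by
    unfold aa
    rw [← sub_le_iff_le_add',
      ← integral_sub (S.aa_int hκ (hg.shift j) (hs.shift S.hr0 j) _ _ _)
        (S.aa_int hκ (hg.shift j) (hs.shift S.hr0 j) _ _ _)]
    have hκ' := hκ (θi^[i + j] (θ^[j] ω))
    refine (le_abs_self _).trans (abs_integral_le_of_bound _ fun y => ?_)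
    have := S.dk_sub_le (hg.shift j) (hs.shift S.hr0 j)
      (show n - j - 1 ≤ i + j by omega) (y (i + j))
    rwa [← Function.iterate_succ_apply' θ] at this
  have := (abs_le.1 c1).2
  linarith

/-- Upper comparison. -/
lemma Setup.vs_upper (S : Setup θ P E A δ M r f F) (hκ : ∀ ω, IsProbabilityMeasure (κw ω))
    (h1 : ∀ ω, θi (θ ω) = ω) (h2 : ∀ ω, θ (θi ω) = ω)
    (hc : ∀ l, GoodChain θ P E A δ M (θi^[l] ω) (κw (θi^[l] ω))) (hs : WS θ A F r ω) (j n : ℕ)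
    {η : ℝ} (hη : 0 < η) :
    uu θ P E f ω (κw ω) n j ≤ (1 + η) * (vs θi θ P E f κw (θ^[j] ω)
      + (1 - δ)⁻¹ * (r ^ 2) ^ (vis θ A ω j) * (Bd θ A F r δ (θ^[j] ω)) ^ 2)
      + (1 + 1 / η) * (2 * (1 - δ)⁻¹ * Tl θ A F r (θ^[j + 1] ω) (n - j - 1)) ^ 2 := by
  have hg : GoodEnv θ P E A δ M ω := (hc 0).env
  rw [uu_eq_aa h1]
  set X := (1 - δ)⁻¹ * (r ^ 2) ^ (vis θ A ω j) * (Bd θ A F r δ (θ^[j] ω)) ^ 2 with hX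
  set Y := (1 + 1 / η) * (2 * (1 - δ)⁻¹ * Tl θ A F r (θ^[j + 1] ω) (n - j - 1)) ^ 2 with hY
  set u := aa θi θ P E f κw j (n - j - 1) (θ^[j] ω)
  have key : (u - Y) / (1 + η) - X ≤ vs θi θ P E f κw (θ^[j] ω) := by
    refine le_limsup_of_frequently_le (Eventually.frequently ?_)
      (S.bdd_aa hκ (hg.shift j) (hs.shift S.hr0 j))
    filter_upwards [eventually_ge_atTop (j + (n - j - 1))] with l hl
    obtain ⟨i, rfl⟩ : ∃ i, l = i + j := ⟨l - j, by omega⟩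
    have c1 := S.aa_close hκ h1 h2 hc hs i j (i + j)
    have c2 : u ≤ (1 + η) * aa θi θ P E f κw j (i + j) (θ^[j] ω) + Y := by
      have hκ' := hκ (θi^[j] (θ^[j] ω))
      have hI : Integrable (fun y : ℕ → 𝒳 => (1 + η) * dk θ P E f (i + j) (θ^[j] ω) (y j))
          (κw (θi^[j] (θ^[j] ω))) :=
        (S.aa_int hκ (hg.shift j) (hs.shift S.hr0 j) _ _ _).const_mul _
      have e : (1 + η) * aa θi θ P E f κw j (i + j) (θ^[j] ω) + Y
          = ∫ y, ((1 + η) * dk θ P E f (i + j) (θ^[j] ω) (y j) + Y) ∂(κw (θi^[j] (θ^[j] ω))) := by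
        rw [integral_add hI (integrable_const _), integral_const_mul]
        simp [aa]
      rw [e]
      refine integral_mono (S.aa_int hκ (hg.shift j) (hs.shift S.hr0 j) _ _ _)
        (hI.add (integrable_const _)) fun y => ?_
      have := S.dk_upper (hg.shift j) (hs.shift S.hr0 j)
        (show n - j - 1 ≤ i + j by omega) hη (y j)
      rwa [← Function.iterate_succ_apply' θ] at this
    have c3 := (abs_le.1 c1).1
    have : (u - Y) / (1 + η) ≤ aa θi θ P E f κw j (i + j) (θ^[j] ω) := by
      rw [div_le_iff₀ (by linarith)]; linarith
    linarith
  have : (u - Y) / (1 + η) ≤ vs θi θ P E f κw (θ^[j] ω) + X := by linarith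
  rw [div_le_iff₀ (by linarith)] at this
  linarith

end Limit

section Determ
set_option linter.unusedSectionVars false
variable {Ω₀ : Type*} [MeasurableSpace Ω₀]

/-- Pathwise properties of a typical environment. -/
structure Dat (θ : Ω₀ → Ω₀) (A : Set Ω₀) (F : Ω₀ → ℝ) (p : ℝ) (ω : Ω₀) : Prop where
  hp : 0 < p
  lim : Tendsto (fun n : ℕ => (vis θ A ω n : ℝ) / n) atTop (nhds p)
  lin : ∃ C : ℝ, 0 ≤ C ∧ ∀ k : ℕ, F (θ^[k] ω) ≤ C * (k + 1)

variable {θ : Ω₀ → Ω₀} {A : Set Ω₀} {δ : ℝ} {r p : ℝ} {F : Ω₀ → ℝ} {ω : Ω₀}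

lemma vis_mono {a b : ℕ} (h : a ≤ b) : vis θ A ω a ≤ vis θ A ω b := by
  obtain ⟨c, rfl⟩ := Nat.exists_eq_add_of_le h
  rw [vis_add]; omega

lemma floor_lim {s : ℝ} (hs : 0 < s) :
    Tendsto (fun n : ℕ => ((⌊s * (n : ℝ)⌋₊ : ℕ) : ℝ) / n) atTop (nhds s) :=
  (tendsto_nat_floor_mul_div_atTop hs.le).comp tendsto_natCast_atTop_atTop

lemma floor_atTop {s : ℝ} (hs : 0 < s) :
    Tendsto (fun n : ℕ => ⌊s * (n : ℝ)⌋₊) atTop atTop :=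
  tendsto_nat_floor_atTop.comp (tendsto_natCast_atTop_atTop.const_mul_atTop hs)

/-- Composition of a Cesaro-type limit with a proportional time change. -/
lemma lim_floor {g : ℕ → ℝ} {L : ℝ} (hg : Tendsto (fun n : ℕ => g n / n) atTop (nhds L)) {s : ℝ}
    (hs : 0 < s) :
    Tendsto (fun n : ℕ => g ⌊s * (n : ℝ)⌋₊ / n) atTop (nhds (L * s)) := by
  have h1 := (hg.comp (floor_atTop hs)).mul (floor_lim hs)
  refine h1.congr' ?_
  filter_upwards [(floor_atTop hs).eventually_gt_atTop 0] with n hn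
  have : ((⌊s * (n : ℝ)⌋₊ : ℕ) : ℝ) ≠ 0 := by positivity
  simp only [Function.comp]
  field_simp

lemma Dat.gap (D : Dat θ A F p ω) {ε : ℝ} (hε : 0 < ε) (hε1 : ε < 1) :
    ∃ c : ℝ, 0 < c ∧ ∃ k0 : ℕ, ∀ k ≥ k0, ∀ m : ℕ, (m : ℝ) ≤ (1 - ε) * k →
      c * k ≤ vis θ A (θ^[m] ω) (k - m) := by
  have hs : 0 < 1 - ε := by linarith
  have h1 := D.lim.sub (lim_floor D.lim hs)
  have hpos : p * ε / 2 < p - p * (1 - ε) := by nlinarith [D.hp, mul_pos D.hp hε]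
  have h2 := h1.eventually (lt_mem_nhds hpos)
  refine ⟨p * ε / 2, by have := mul_pos D.hp hε; linarith, ?_⟩
  obtain ⟨k0, hk0⟩ := eventually_atTop.1 (h2.and (eventually_gt_atTop 0))
  refine ⟨k0, fun k hk m hm => ?_⟩
  obtain ⟨h3, h4⟩ := hk0 k hk
  have h4' : (0:ℝ) < k := by exact_mod_cast h4
  have hmk : m ≤ k := by
    have : (m:ℝ) ≤ k := by nlinarith
    exact_mod_cast this
  have hmf : m ≤ ⌊(1 - ε) * (k:ℝ)⌋₊ := Nat.le_floor hm
  have e := vis_add (θ := θ) (A := A) (ω := ω) m (k - m)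
  rw [Nat.add_sub_cancel' hmk] at e
  have e2 := vis_mono (θ := θ) (A := A) (ω := ω) hmf
  rw [← sub_div, lt_div_iff₀ h4'] at h3
  have e' : (vis θ A ω k : ℝ) = vis θ A ω m + vis θ A (θ^[m] ω) (k - m) := by exact_mod_cast e
  have e2' : (vis θ A ω m : ℝ) ≤ vis θ A ω ⌊(1 - ε) * (k:ℝ)⌋₊ := by exact_mod_cast e2
  linarith

lemma pow_le_of_gap (hr0 : 0 < r) (hr1 : r < 1) {c : ℝ} {v k : ℕ} (h : c * k ≤ v) :
    r ^ v ≤ (r ^ c) ^ k := by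
  rw [← Real.rpow_natCast, ← Real.rpow_natCast, ← Real.rpow_mul hr0.le]
  exact Real.rpow_le_rpow_of_exponent_ge hr0 hr1.le h

lemma summable_lin {C ρ : ℝ} (h0 : 0 ≤ ρ) (h1 : ρ < 1) :
    Summable fun k : ℕ => C * ((k : ℝ) + 1) * ρ ^ k := by
  have a : Summable fun k : ℕ => (k : ℝ) ^ 1 * ρ ^ k :=
    summable_pow_mul_geometric_of_norm_lt_one 1 (by rwa [Real.norm_eq_abs, abs_of_nonneg h0])
  have b : Summable fun k : ℕ => ρ ^ k := summable_geometric_of_lt_one h0 h1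
  refine ((a.add b).mul_left C).congr fun k => ?_
  ring

lemma Dat.tail (D : Dat θ A F p ω) (hr0 : 0 < r) (hr1 : r < 1) (hF0 : ∀ ω, 0 ≤ F ω)
    {ε : ℝ} (hε : 0 < ε) (hε1 : ε < 1) :
    ∃ T : ℕ → ℝ, Tendsto T atTop (nhds 0) ∧ ∀ᶠ n : ℕ in atTop, ∀ m : ℕ,
      (m : ℝ) ≤ (1 - ε) * n → Summable (fun k => F (θ^[n - m + k] (θ^[m] ω)) *
        r ^ (vis θ A (θ^[m] ω) (n - m + k))) ∧ Tl θ A F r (θ^[m] ω) (n - m) ≤ T n := by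
  obtain ⟨c, hc, k0, hk0⟩ := D.gap hε hε1
  obtain ⟨C, hC0, hC⟩ := D.lin
  set ρ := r ^ c with hρ
  have hρ0 : 0 ≤ ρ := Real.rpow_nonneg hr0.le c
  have hρ1 : ρ < 1 := Real.rpow_lt_one hr0.le hr1 hc
  have hsum := summable_lin (C := C) hρ0 hρ1
  refine ⟨fun n => ∑' k, (C * (((k + n : ℕ) : ℝ) + 1) * ρ ^ (k + n)),
    tendsto_sum_nat_add fun k : ℕ => C * ((k : ℝ) + 1) * ρ ^ k, ?_⟩
  filter_upwards [eventually_ge_atTop k0] with n hn m hm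
  have hmn : m ≤ n := by
    have : (m:ℝ) ≤ n := by nlinarith [(Nat.cast_nonneg n : (0:ℝ) ≤ n)]
    exact_mod_cast this
  have hterm : ∀ k, F (θ^[n - m + k] (θ^[m] ω)) * r ^ (vis θ A (θ^[m] ω) (n - m + k))
      ≤ C * (((k + n : ℕ) : ℝ) + 1) * ρ ^ (k + n) := by
    intro k
    have g := hk0 (k + n) (by omega) m (by
      push_cast; nlinarith [(Nat.cast_nonneg k : (0:ℝ) ≤ k)])
    rw [show k + n - m = n - m + k by omega] at g
    rw [← Function.iterate_add_apply, show n - m + k + m = k + n by omega]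
    exact mul_le_mul (hC _) (pow_le_of_gap hr0 hr1 g) (by positivity)
      (mul_nonneg hC0 (by positivity))
  have hs2 : Summable fun k : ℕ => C * (((k + n : ℕ) : ℝ) + 1) * ρ ^ (k + n) :=
    (summable_nat_add_iff n).2 hsum
  have hs1 : Summable (fun k => F (θ^[n - m + k] (θ^[m] ω)) *
        r ^ (vis θ A (θ^[m] ω) (n - m + k))) :=
    Summable.of_nonneg_of_le (fun k => mul_nonneg (hF0 _) (by positivity)) hterm hs2
  exact ⟨hs1, hs1.tsum_le_tsum hterm hs2⟩

lemma Dat.ws (D : Dat θ A F p ω) (hr0 : 0 < r) (hr1 : r < 1) (hF0 : ∀ ω, 0 ≤ F ω) :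
    WS θ A F r ω := by
  obtain ⟨T, -, h⟩ := D.tail hr0 hr1 hF0 (ε := 1/2) (by norm_num) (by norm_num)
  obtain ⟨n, hn⟩ := h.exists
  have := (hn 0 (by push_cast; positivity)).1
  simp only [Nat.sub_zero, Function.iterate_zero, id] at this
  unfold WS
  rw [← summable_nat_add_iff n]
  simpa only [add_comm n] using this

lemma Dat.Tl_zero (D : Dat θ A F p ω) (hr0 : 0 < r) (hr1 : r < 1) (hF0 : ∀ ω, 0 ≤ F ω) :
    Tendsto (fun n => Tl θ A F r ω n) atTop (nhds 0) := by
  have := tendsto_sum_nat_add fun k : ℕ => F (θ^[k] ω) * r ^ (vis θ A ω k)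
  simp only [add_comm _] at this
  refine this.congr fun n => ?_
  unfold Tl
  simp only [add_comm]

lemma Dat.vis_pow (D : Dat θ A F p ω) (hr0 : 0 < r) (hr1 : r < 1) :
    Tendsto (fun n => r ^ (vis θ A ω n)) atTop (nhds 0) := by
  obtain ⟨c, hc, k0, hk0⟩ := D.gap (ε := 1/2) (by norm_num) (by norm_num)
  have hρ0 : 0 ≤ r ^ c := Real.rpow_nonneg hr0.le c
  have hρ1 : r ^ c < 1 := Real.rpow_lt_one hr0.le hr1 hc
  refine squeeze_zero' (Eventually.of_forall fun n => by positivity) ?_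
    (tendsto_pow_atTop_nhds_zero_of_lt_one hρ0 hρ1)
  filter_upwards [eventually_ge_atTop k0] with n hn
  have := hk0 n hn 0 (by push_cast; positivity)
  exact pow_le_of_gap hr0 hr1 this

lemma Dat.Bd_pow (D : Dat θ A F p ω) (hr0 : 0 < r) (hr1 : r < 1) (hF0 : ∀ ω, 0 ≤ F ω)
    (hδ1 : δ < 1) :
    Tendsto (fun j => (r ^ 2) ^ (vis θ A ω j) * (Bd θ A F r δ (θ^[j] ω)) ^ 2) atTop (nhds 0) := by
  have hδ' : 0 < 1 - δ := by linarith
  have h1 : Tendsto (fun j => (2 * (1 - δ)⁻¹ * r⁻¹ * Tl θ A F r ω (j + 1)) ^ 2) atTop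
      (nhds ((2 * (1 - δ)⁻¹ * r⁻¹ * 0) ^ 2)) :=
    ((((D.Tl_zero hr0 hr1 hF0).comp (tendsto_add_atTop_nat 1)).const_mul _).pow 2)
  rw [mul_zero, zero_pow two_ne_zero] at h1
  refine squeeze_zero (fun j => by positivity) (fun j => ?_) h1
  have e := Tl_shift (θ := θ) (A := A) (F := F) (ω := ω) hr0 (j + 1) 0
  have hv : vis θ A ω (j + 1) ≤ vis θ A ω j + 1 := by
    rw [vis_add]
    have := vis_le (θ := θ) (A := A) (ω := θ^[j] ω) 1
    omega
  have hT : 0 ≤ Tl θ A F r (θ^[j + 1] ω) 0 := Tl_nonneg hF0 hr0 0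
  rw [add_zero] at e
  rw [← e, Bd, ← pow_mul, mul_comm 2, pow_mul, ← mul_pow, ← Function.iterate_succ_apply' θ]
  refine pow_le_pow_left₀ (by positivity) ?_ 2
  have h3 : r ^ (vis θ A ω j) ≤ r⁻¹ * r ^ (vis θ A ω (j + 1)) := by
    rw [le_inv_mul_iff₀ hr0, ← pow_succ']
    exact pow_le_pow_of_le_one hr0.le hr1.le hv
  calc _ ≤ (r⁻¹ * r ^ (vis θ A ω (j + 1))) * (2 * (1 - δ)⁻¹ * Tl θ A F r (θ^[j + 1] ω) 0) :=
        mul_le_mul_of_nonneg_right h3 (by positivity)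
    _ = _ := by ring

lemma cesaro_zero {g : ℕ → ℝ} (hg : Tendsto g atTop (nhds 0)) :
    Tendsto (fun n : ℕ => (∑ j ∈ Finset.range n, g j) / n) atTop (nhds 0) := by
  refine hg.cesaro.congr fun n => ?_
  rw [div_eq_inv_mul]

/-- Averages of contraction factors towards time `n`. -/
lemma Dat.avg_tau (D : Dat θ A F p ω) (hr0 : 0 < r) (hr1 : r < 1) :
    Tendsto (fun n : ℕ => (∑ j ∈ Finset.range n, (r ^ vis θ A (θ^[j + 1] ω) (n - j - 1)) ^ 2) / n)
      atTop (nhds 0) := by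
  rw [Metric.tendsto_atTop]
  intro ε' hε'
  set ε := min (ε' / 4) (1/2) with hεd
  have hε : 0 < ε := lt_min (by linarith) (by norm_num)
  have hε1 : ε < 1 := (min_le_right _ _).trans_lt (by norm_num)
  obtain ⟨c, hc, k0, hk0⟩ := D.gap hε hε1
  have hρ0 : 0 ≤ r ^ c := Real.rpow_nonneg hr0.le c
  have hρ1 : r ^ c < 1 := Real.rpow_lt_one hr0.le hr1 hc
  have l1 := tendsto_pow_atTop_nhds_zero_of_lt_one hρ0 hρ1
  have l2 := floor_lim (show 0 < 1 - ε by linarith)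
  have b1 := l1.eventually (gt_mem_nhds (show 0 < ε' / 4 by linarith))
  have b2 := l2.eventually (lt_mem_nhds (show (1 - ε) - ε' / 4 < 1 - ε by linarith))
  obtain ⟨n0, hn0⟩ := eventually_atTop.1 (b1.and (b2.and ((eventually_ge_atTop k0).and
    (eventually_gt_atTop 0))))
  refine ⟨n0, fun n hn => ?_⟩
  obtain ⟨c1, c2, c3, c4⟩ := hn0 n hn
  have c4' : (0:ℝ) < n := by exact_mod_cast c4
  set m := ⌊(1 - ε) * (n:ℝ)⌋₊ with hm
  have hmle : (m : ℝ) ≤ (1 - ε) * n := Nat.floor_le (by nlinarith)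
  have hmn : m ≤ n := by
    have : (m:ℝ) ≤ n := by nlinarith
    exact_mod_cast this
  have hpos : 0 ≤ (∑ j ∈ Finset.range n, (r ^ vis θ A (θ^[j + 1] ω) (n - j - 1)) ^ 2) / n :=
    div_nonneg (Finset.sum_nonneg fun _ _ => by positivity) c4'.le
  rw [Real.dist_eq, sub_zero, abs_of_nonneg hpos, div_lt_iff₀ c4']
  rw [Finset.range_eq_Ico, ← Finset.sum_Ico_consecutive _ (Nat.zero_le m) hmn]
  have s1 : ∑ j ∈ Finset.Ico 0 m, (r ^ vis θ A (θ^[j + 1] ω) (n - j - 1)) ^ 2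
      ≤ ∑ j ∈ Finset.Ico 0 m, (ε' / 4) := by
    refine Finset.sum_le_sum fun j hj => ?_
    rw [Finset.mem_Ico] at hj
    have hj1 : ((j + 1 : ℕ) : ℝ) ≤ (1 - ε) * n := by
      have : ((j + 1 : ℕ) : ℝ) ≤ m := by exact_mod_cast hj.2
      linarith
    have g := hk0 n c3 (j + 1) hj1
    rw [← Nat.sub_sub] at g
    have g2 := pow_le_of_gap hr0 hr1 g
    have g3 : r ^ vis θ A (θ^[j + 1] ω) (n - j - 1) ≤ 1 := pow_le_one₀ hr0.le hr1.le
    have g4 : 0 ≤ r ^ vis θ A (θ^[j + 1] ω) (n - j - 1) := by positivity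
    nlinarith
  have s2 : ∑ j ∈ Finset.Ico m n, (r ^ vis θ A (θ^[j + 1] ω) (n - j - 1)) ^ 2
      ≤ ∑ j ∈ Finset.Ico m n, (1:ℝ) := by
    refine Finset.sum_le_sum fun j hj => ?_
    exact pow_le_one₀ (by positivity) (pow_le_one₀ hr0.le hr1.le)
  simp only [Finset.sum_const, Nat.card_Ico, nsmul_eq_mul, Nat.cast_sub hmn, Nat.sub_zero,
    mul_one] at s1 s2
  rw [lt_div_iff₀ c4'] at c2
  have hε4 : ε ≤ ε' / 4 := min_le_left _ _
  have hmn' : (m:ℝ) ≤ n := by exact_mod_cast hmn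
  nlinarith

end Determ

section Ergo
set_option linter.unusedSectionVars false
variable {Ω₀ : Type*} [MeasurableSpace Ω₀] {𝒳 : Type*} [MeasurableSpace 𝒳]

open Classical in
/-- Indices with small martingale differences which are far from the final time. -/
def JJ (θ : Ω₀ → Ω₀) (A : Set Ω₀) (F : Ω₀ → ℝ) (r δ : ℝ) (ω : Ω₀) (K ε : ℝ) (n : ℕ) : Finset ℕ :=
  (Finset.range ⌊(1 - ε) * (n : ℝ)⌋₊).filter fun j => Bd θ A F r δ (θ^[j] ω) ≤ K

/-- Truncated variance density. -/
def vK (θi : Ω₀ → Ω₀) (θ : Ω₀ → Ω₀) (P : Ω₀ → Kernel 𝒳 𝒳) (E : Ω₀ → Set 𝒳) (f : Ω₀ → 𝒳 → ℝ)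
    (κw : Ω₀ → Measure (ℕ → 𝒳)) (A : Set Ω₀) (F : Ω₀ → ℝ) (r δ K : ℝ) : Ω₀ → ℝ :=
  {ω | Bd θ A F r δ ω ≤ K}.indicator (vs θi θ P E f κw)

variable {θi θ : Ω₀ → Ω₀} {P : Ω₀ → Kernel 𝒳 𝒳} {E : Ω₀ → Set 𝒳} {A : Set Ω₀} {δ : ℝ}
    {M : ℕ} {r p : ℝ} {f : Ω₀ → 𝒳 → ℝ} {F : Ω₀ → ℝ} {ω : Ω₀} {κw : Ω₀ → Measure (ℕ → 𝒳)}

lemma JJ_subset {K ε : ℝ} (hε : 0 < ε) (n : ℕ) :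
    JJ θ A F r δ ω K ε n ⊆ Finset.range n := by
  intro j hj
  rw [JJ, Finset.mem_filter, Finset.mem_range] at hj
  rw [Finset.mem_range]
  refine hj.1.trans_le (Nat.floor_le_of_le ?_)
  nlinarith [(Nat.cast_nonneg n : (0:ℝ) ≤ n)]

lemma Setup.low (S : Setup θ P E A δ M r f F) (hκ : ∀ ω, IsProbabilityMeasure (κw ω))
    (h1 : ∀ ω, θi (θ ω) = ω) (h2 : ∀ ω, θ (θi ω) = ω)
    (hc : ∀ l, GoodChain θ P E A δ M (θi^[l] ω) (κw (θi^[l] ω))) (D : Dat θ A F p ω)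
    {K ε : ℝ} (hK : 0 ≤ K) (hε : 0 < ε) (hε1 : ε < 1) {EK : ℝ}
    (hB : Tendsto (fun n : ℕ => bsum θ (vK θi θ P E f κw A F r δ K) n ω / n) atTop (nhds EK)) :
    ∃ z : ℕ → ℝ, Tendsto z atTop (nhds (EK * (1 - ε))) ∧ ∀ᶠ n : ℕ in atTop,
      z n ≤ (∑ j ∈ JJ θ A F r δ ω K ε n, uu θ P E f ω (κw ω) n j) / n := by
  classical
  have hs := D.ws S.hr0 S.hr1 S.hF0
  have hδ' : 0 < 1 - δ := by linarith [S.hδ1]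
  obtain ⟨T, hT, hTn⟩ := D.tail S.hr0 S.hr1 S.hF0 hε hε1
  have l1 := lim_floor hB (show 0 < 1 - ε by linarith)
  have l2 := cesaro_zero (D.vis_pow (pow_pos S.hr0 2) (pow_lt_one₀ S.hr0.le S.hr1 two_ne_zero))
  refine ⟨fun n => bsum θ (vK θi θ P E f κw A F r δ K) ⌊(1 - ε) * (n:ℝ)⌋₊ ω / n
    - (1 - δ)⁻¹ * K ^ 2 * ((∑ j ∈ Finset.range n, (r ^ 2) ^ (vis θ A ω j)) / n)
    - 2 * K * (2 * (1 - δ)⁻¹) * T n, ?_, ?_⟩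
  · have := (l1.sub (l2.const_mul ((1 - δ)⁻¹ * K ^ 2))).sub
      (hT.const_mul (2 * K * (2 * (1 - δ)⁻¹)))
    simpa using this
  filter_upwards [hTn, eventually_gt_atTop 0] with n hn hn0
  have hn0' : (0:ℝ) < n := by exact_mod_cast hn0
  have hT0 : 0 ≤ T n := by
    have := (hn 0 (by push_cast; nlinarith)).2
    exact (Tl_nonneg S.hF0 S.hr0 _).trans this
  set m := ⌊(1 - ε) * (n : ℝ)⌋₊ with hm
  have hmle : (m : ℝ) ≤ (1 - ε) * n := Nat.floor_le (by nlinarith)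
  have hmn : m ≤ n := by
    have : (m:ℝ) ≤ n := by nlinarith
    exact_mod_cast this
  have e1 : bsum θ (vK θi θ P E f κw A F r δ K) m ω
      = ∑ j ∈ JJ θ A F r δ ω K ε n, vs θi θ P E f κw (θ^[j] ω) := by
    unfold bsum JJ vK
    rw [Finset.sum_filter]
    refine Finset.sum_congr rfl fun j _ => ?_
    rw [Set.indicator_apply]; rfl
  have hterm : ∀ j ∈ JJ θ A F r δ ω K ε n, vs θi θ P E f κw (θ^[j] ω)
      ≤ uu θ P E f ω (κw ω) n j + (1 - δ)⁻¹ * K ^ 2 * (r ^ 2) ^ (vis θ A ω j)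
        + 2 * K * (2 * (1 - δ)⁻¹) * T n := by
    intro j hj
    rw [JJ, Finset.mem_filter, Finset.mem_range] at hj
    have a1 := S.vs_lower hκ h1 h2 hc hs j n
    have hj1 : ((j + 1 : ℕ) : ℝ) ≤ (1 - ε) * n := by
      have : ((j + 1 : ℕ) : ℝ) ≤ m := by exact_mod_cast hj.1
      linarith
    have a2 := (hn (j + 1) hj1).2
    rw [← Nat.sub_sub] at a2
    have b0 := S.Bd_nonneg (θ^[j] ω)
    have a3 : (1 - δ)⁻¹ * (r ^ 2) ^ (vis θ A ω j) * (Bd θ A F r δ (θ^[j] ω)) ^ 2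
        ≤ (1 - δ)⁻¹ * (r ^ 2) ^ (vis θ A ω j) * K ^ 2 :=
      mul_le_mul_of_nonneg_left (pow_le_pow_left₀ b0 hj.2 2)
        (mul_nonneg (by positivity) (by have := S.hr0; positivity))
    have a4 : 2 * Bd θ A F r δ (θ^[j] ω) *
        (2 * (1 - δ)⁻¹ * Tl θ A F r (θ^[j + 1] ω) (n - j - 1))
        ≤ 2 * K * (2 * (1 - δ)⁻¹ * T n) := by
      refine mul_le_mul (by linarith [hj.2]) (mul_le_mul_of_nonneg_left a2 (by positivity))
        (mul_nonneg (by positivity) (Tl_nonneg S.hF0 S.hr0 _)) (by positivity)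
    linarith
  have hsum := Finset.sum_le_sum hterm
  rw [← e1, Finset.sum_add_distrib, Finset.sum_add_distrib, Finset.sum_const, nsmul_eq_mul,
    ← Finset.mul_sum] at hsum
  have hsub := JJ_subset (θ := θ) (A := A) (F := F) (r := r) (δ := δ) (ω := ω) (K := K) hε n
  have c1 : ∑ j ∈ JJ θ A F r δ ω K ε n, (r ^ 2) ^ (vis θ A ω j)
      ≤ ∑ j ∈ Finset.range n, (r ^ 2) ^ (vis θ A ω j) :=
    Finset.sum_le_sum_of_subset_of_nonneg hsub fun _ _ _ => by have := S.hr0; positivity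
  have c2 : ((JJ θ A F r δ ω K ε n).card : ℝ) ≤ n := by
    have := Finset.card_le_card hsub
    rw [Finset.card_range] at this
    exact_mod_cast this
  have d1 : (1 - δ)⁻¹ * K ^ 2 * ∑ j ∈ JJ θ A F r δ ω K ε n, (r ^ 2) ^ (vis θ A ω j)
      ≤ (1 - δ)⁻¹ * K ^ 2 * ∑ j ∈ Finset.range n, (r ^ 2) ^ (vis θ A ω j) :=
    mul_le_mul_of_nonneg_left c1 (by positivity)
  have d2 : ((JJ θ A F r δ ω K ε n).card : ℝ) * (2 * K * (2 * (1 - δ)⁻¹) * T n)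
      ≤ n * (2 * K * (2 * (1 - δ)⁻¹) * T n) :=
    mul_le_mul_of_nonneg_right c2 (by positivity)
  rw [le_div_iff₀ hn0']
  have e2 : (bsum θ (vK θi θ P E f κw A F r δ K) m ω / n
    - (1 - δ)⁻¹ * K ^ 2 * ((∑ j ∈ Finset.range n, (r ^ 2) ^ (vis θ A ω j)) / n)
    - 2 * K * (2 * (1 - δ)⁻¹) * T n) * n = bsum θ (vK θi θ P E f κw A F r δ K) m ω
    - (1 - δ)⁻¹ * K ^ 2 * (∑ j ∈ Finset.range n, (r ^ 2) ^ (vis θ A ω j))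
    - n * (2 * K * (2 * (1 - δ)⁻¹) * T n) := by field_simp
  rw [e2]
  linarith

lemma Setup.up (S : Setup θ P E A δ M r f F) (hκ : ∀ ω, IsProbabilityMeasure (κw ω))
    (h1 : ∀ ω, θi (θ ω) = ω) (h2 : ∀ ω, θ (θi ω) = ω)
    (hc : ∀ l, GoodChain θ P E A δ M (θi^[l] ω) (κw (θi^[l] ω))) (D : Dat θ A F p ω)
    {K V EV : ℝ} (hfr : ∃ᶠ n : ℕ in atTop, Tl θ A F r (θ^[n] ω) 0 ≤ K)
    (hU : Tendsto (fun n : ℕ => (∑ j ∈ Finset.range n, uu θ P E f ω (κw ω) n j) / n) atTop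
      (nhds V))
    (hB : Tendsto (fun n : ℕ => bsum θ (vs θi θ P E f κw) n ω / n) atTop (nhds EV)) :
    V ≤ EV := by
  have hs := D.ws S.hr0 S.hr1 S.hF0
  have hδ' : 0 < 1 - δ := by linarith [S.hδ1]
  have key : ∀ η : ℝ, 0 < η → V ≤ (1 + η) * EV := by
    intro η hη
    have l1 := cesaro_zero (D.Bd_pow S.hr0 S.hr1 S.hF0 S.hδ1)
    have l2 := D.avg_tau S.hr0 S.hr1
    have l3 := ((hB.add (l1.const_mul ((1 - δ)⁻¹))).const_mul (1 + η)).add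
      (l2.const_mul ((1 + 1 / η) * (2 * (1 - δ)⁻¹ * K) ^ 2))
    simp only [mul_zero, add_zero] at l3
    refine le_of_tendsto_of_tendsto_of_frequently hU l3 ?_
    refine (hfr.and_eventually (eventually_gt_atTop 0)).mono fun n hn => ?_
    obtain ⟨hnK, hn0⟩ := hn
    have hn0' : (0:ℝ) < n := by exact_mod_cast hn0
    have hterm : ∀ j ∈ Finset.range n, uu θ P E f ω (κw ω) n j ≤
        (1 + η) * (vs θi θ P E f κw (θ^[j] ω) + (1 - δ)⁻¹ *
          ((r ^ 2) ^ (vis θ A ω j) * (Bd θ A F r δ (θ^[j] ω)) ^ 2))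
        + (1 + 1 / η) * (2 * (1 - δ)⁻¹ * K) ^ 2 *
          (r ^ vis θ A (θ^[j + 1] ω) (n - j - 1)) ^ 2 := by
      intro j hj
      rw [Finset.mem_range] at hj
      have a1 := S.vs_upper hκ h1 h2 hc hs j n hη
      have e := Tl_shift (θ := θ) (A := A) (F := F) (ω := θ^[j + 1] ω) S.hr0 (n - j - 1) 0
      rw [← Function.iterate_add_apply, show n - j - 1 + (j + 1) = n by omega, add_zero] at e
      have hT0 : 0 ≤ Tl θ A F r (θ^[n] ω) 0 := Tl_nonneg S.hF0 S.hr0 _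
      have hrp : 0 ≤ r ^ vis θ A (θ^[j + 1] ω) (n - j - 1) := by have := S.hr0; positivity
      have a2 : (2 * (1 - δ)⁻¹ * Tl θ A F r (θ^[j + 1] ω) (n - j - 1)) ^ 2
          ≤ (2 * (1 - δ)⁻¹ * K) ^ 2 * (r ^ vis θ A (θ^[j + 1] ω) (n - j - 1)) ^ 2 := by
        rw [← e, ← mul_pow]
        refine pow_le_pow_left₀ (by positivity) ?_ 2
        rw [← mul_assoc]
        exact mul_le_mul_of_nonneg_right (mul_le_mul_of_nonneg_left hnK (by positivity)) hrp
      have a3 := mul_le_mul_of_nonneg_left a2 (show 0 ≤ 1 + 1 / η by positivity)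
      rw [mul_assoc] at a1
      linarith
    have hsum := Finset.sum_le_sum hterm
    rw [Finset.sum_add_distrib, ← Finset.mul_sum, ← Finset.mul_sum, Finset.sum_add_distrib,
      ← Finset.mul_sum] at hsum
    rw [div_le_iff₀ hn0']
    refine hsum.trans (le_of_eq ?_)
    unfold bsum
    field_simp
  have l : Tendsto (fun η : ℝ => (1 + η) * EV) (nhdsWithin 0 (Set.Ioi 0)) (nhds ((1 + 0) * EV)) :=
    ((continuous_const.add continuous_id).mul continuous_const).continuousAt.continuousWithinAt
  rw [add_zero, one_mul] at l
  exact ge_of_tendsto l (eventually_mem_nhdsWithin.mono fun η hη => key η hη)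

end Ergo

section ErgoMain
set_option linter.unusedSectionVars false
variable {Ω₀ : Type*} [MeasurableSpace Ω₀] {𝒳 : Type*} [MeasurableSpace 𝒳]
variable {θi θ : Ω₀ → Ω₀} {P : Ω₀ → Kernel 𝒳 𝒳} {E : Ω₀ → Set 𝒳} {A : Set Ω₀} {δ : ℝ}
    {M : ℕ} {r p : ℝ} {f : Ω₀ → 𝒳 → ℝ} {F : Ω₀ → ℝ} {ω : Ω₀} {κw : Ω₀ → Measure (ℕ → 𝒳)}

lemma measurable_vis (hθ : Measurable θ) (hA : MeasurableSet A) (k : ℕ) :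
    Measurable fun ω => vis θ A ω k := by
  unfold vis
  exact Finset.measurable_sum _ fun i _ =>
    (measurable_const.indicator hA).comp (hθ.iterate (i + 1))

lemma Setup.measurable_Tl (S : Setup θ P E A δ M r f F) (n : ℕ) :
    Measurable fun ω => Tl θ A F r ω n := by
  have e : (fun ω => Tl θ A F r ω n) = fun ω =>
      (∑' k : ℕ, ENNReal.ofReal (F (θ^[n + k] ω) * r ^ (vis θ A ω (n + k)))).toReal := by
    funext ω
    rw [ENNReal.tsum_toReal_eq fun _ => ENNReal.ofReal_ne_top]
    unfold Tl
    congr 1; funext k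
    rw [ENNReal.toReal_ofReal (mul_nonneg (S.hF0 _) (by have := S.hr0; positivity))]
  rw [e]
  refine (Measurable.tsum fun k => ?_).ennreal_toReal
  refine ENNReal.measurable_ofReal.comp ((S.hFm.comp (S.hθ.iterate _)).mul ?_)
  exact (measurable_of_countable fun v : ℕ => r ^ v).comp (measurable_vis S.hθ S.hAm _)

lemma Setup.measurable_Bd (S : Setup θ P E A δ M r f F) :
    Measurable (Bd θ A F r δ) :=
  ((S.measurable_Tl 0).comp S.hθ).const_mul _

lemma ae_Dat {Pr : Measure Ω₀} [IsProbabilityMeasure Pr] (hT : Ergodic θ Pr)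
    (hA : MeasurableSet A) (hA0 : Pr A ≠ 0) (hFm : Measurable F) (hF0 : ∀ ω, 0 ≤ F ω)
    (hFi : Integrable F Pr) : ∀ᵐ ω ∂Pr, Dat θ A F (Pr.real A) ω := by
  have hθ : Measurable θ := hT.measurable
  have b1 := birkhoff_ergodic hT (g := fun ω => A.indicator (fun _ => (1:ℝ)) (θ ω))
    ((measurable_const.indicator hA).comp hθ)
    (hT.toMeasurePreserving.integrable_comp_of_integrable
      ((integrable_const (1:ℝ)).indicator hA))
  have b2 := birkhoff_ergodic hT hFm hFi
  have e1 : ∫ ω, A.indicator (fun _ => (1:ℝ)) (θ ω) ∂Pr = Pr.real A := by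
    have : ∫ ω, A.indicator (fun _ => (1:ℝ)) ω ∂Pr = ∫ ω, A.indicator (fun _ => (1:ℝ)) (θ ω) ∂Pr := by
      conv_lhs => rw [← hT.toMeasurePreserving.map_eq]
      rw [integral_map hθ.aemeasurable
        (measurable_const.indicator hA).aestronglyMeasurable]
    rw [← this, integral_indicator hA]
    simp
  rw [e1] at b1
  filter_upwards [b1, b2] with ω h1 h2
  refine ⟨?_, ?_, ?_⟩
  · exact ENNReal.toReal_pos hA0 (measure_ne_top _ _)
  · refine h1.congr fun n => ?_
    congr 1
    unfold bsum vis
    push_cast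
    refine Finset.sum_congr rfl fun i _ => ?_
    classical
    rw [← Function.iterate_succ_apply' θ]
    rw [Set.indicator_apply, Set.indicator_apply]
    split_ifs <;> simp
  · obtain ⟨C, hC⟩ := h2.bddAbove_range
    refine ⟨max C 0, le_max_right _ _, fun k => ?_⟩
    have h3 : bsum θ F (k + 1) ω / ((k + 1 : ℕ) : ℝ) ≤ C := hC ⟨k + 1, rfl⟩
    have hk : (0:ℝ) < ((k + 1 : ℕ) : ℝ) := by positivity
    rw [div_le_iff₀ hk] at h3
    have h4 : F (θ^[k] ω) ≤ bsum θ F (k + 1) ω :=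
      Finset.single_le_sum (f := fun j => F (θ^[j] ω)) (fun j _ => hF0 _)
        (Finset.mem_range.2 (Nat.lt_succ_self k))
    have h5 : C * ((k + 1 : ℕ) : ℝ) ≤ max C 0 * ((k + 1 : ℕ) : ℝ) :=
      mul_le_mul_of_nonneg_right (le_max_left _ _) hk.le
    push_cast at h3 h5
    linarith

/-- The truncated martingale variances capture almost all the variance. -/
theorem Setup.variance_capture (S : Setup θ P E A δ M r f F)
    (hκ : ∀ ω, IsProbabilityMeasure (κw ω))
    (hκm : ∀ s : Set (ℕ → 𝒳), MeasurableSet s → Measurable fun ω => κw ω s)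
    (hθi : Measurable θi)
    (h1 : ∀ ω, θi (θ ω) = ω) (h2 : ∀ ω, θ (θi ω) = ω)
    {Pr : Measure Ω₀} [IsProbabilityMeasure Pr] (hT : Ergodic θ Pr) (hA0 : Pr A ≠ 0)
    (hFi : Integrable F Pr)
    (hc : ∀ᵐ ω ∂Pr, ∀ l, GoodChain θ P E A δ M (θi^[l] ω) (κw (θi^[l] ω))) {V : ℝ}
    (hU : ∀ᵐ ω ∂Pr, Tendsto (fun n : ℕ =>
      (∑ j ∈ Finset.range n, uu θ P E f ω (κw ω) n j) / n) atTop (nhds V)) :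
    ∀ᵐ ω ∂Pr, ∀ η : ℝ, 0 < η → ∃ K : ℝ, 0 ≤ K ∧ ∃ ε : ℝ, 0 < ε ∧ ε < 1 ∧ ∀ᶠ n : ℕ in atTop,
      V - η ≤ (∑ j ∈ JJ θ A F r δ ω K ε n, uu θ P E f ω (κw ω) n j) / n := by
  have hD := ae_Dat hT S.hAm hA0 S.hFm S.hF0 hFi
  have hvm : Measurable (vs θi θ P E f κw) := S.measurable_vs hθi hκ hκm
  have hBm := S.measurable_Bd
  set v := vs θi θ P E f κw with hv
  have hvK : ∀ K : ℝ, Measurable (vK θi θ P E f κw A F r δ K) := fun K =>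
    hvm.indicator (hBm measurableSet_Iic)
  have hv0 : ∀ᵐ ω ∂Pr, 0 ≤ v ω ∧ v ω ≤ (Bd θ A F r δ ω) ^ 2 := by
    filter_upwards [hD, hc] with ω hd hcω
    have hs := hd.ws S.hr0 S.hr1 S.hF0
    have hg : GoodEnv θ P E A δ M ω := (hcω 0).env
    exact ⟨S.vs_nonneg hκ hg hs, S.vs_le hκ hg hs⟩
  have hvK0 : ∀ᵐ ω ∂Pr, ∀ K : ℝ, 0 ≤ vK θi θ P E f κw A F r δ K ω ∧
      vK θi θ P E f κw A F r δ K ω ≤ K ^ 2 ∧ vK θi θ P E f κw A F r δ K ω ≤ v ω := by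
    filter_upwards [hv0] with ω h K
    unfold vK
    by_cases hm : ω ∈ {ω | Bd θ A F r δ ω ≤ K}
    · rw [Set.indicator_of_mem hm]
      exact ⟨h.1, h.2.trans (pow_le_pow_left₀ (S.Bd_nonneg ω) hm 2), le_refl _⟩
    · rw [Set.indicator_of_notMem hm]
      exact ⟨le_refl _, sq_nonneg _, h.1⟩
  have hvKi : ∀ K : ℝ, Integrable (vK θi θ P E f κw A F r δ K) Pr := fun K => by
    refine Integrable.of_bound (hvK K).aestronglyMeasurable (K ^ 2) ?_
    filter_upwards [hvK0] with ω h
    rw [Real.norm_eq_abs, abs_of_nonneg (h K).1]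
    exact (h K).2.1
  have hB : ∀ᵐ ω ∂Pr, ∀ K : ℕ, Tendsto (fun n : ℕ =>
      bsum θ (vK θi θ P E f κw A F r δ K) n ω / n) atTop
      (nhds (∫ ω, vK θi θ P E f κw A F r δ K ω ∂Pr)) :=
    ae_all_iff.2 fun K => birkhoff_ergodic hT (hvK K) (hvKi K)
  -- first claim
  have claim1 : ∀ K : ℕ, ∫ ω, vK θi θ P E f κw A F r δ K ω ∂Pr ≤ V := by
    intro K
    obtain ⟨ω, ⟨hd, hcω, hUω, hBω⟩⟩ := (hD.and (hc.and (hU.and hB))).exists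
    set EK := ∫ ω, vK θi θ P E f κw A F r δ K ω ∂Pr
    have key : ∀ ε : ℝ, 0 < ε → ε < 1 → EK * (1 - ε) ≤ V := by
      intro ε hε hε1
      obtain ⟨z, hz, hzn⟩ := S.low hκ h1 h2 hcω hd (Nat.cast_nonneg K) hε hε1 (hBω K)
      refine le_of_tendsto_of_tendsto hz hUω ?_
      filter_upwards [hzn] with n hn
      refine hn.trans (div_le_div_of_nonneg_right ?_ (Nat.cast_nonneg n))
      exact Finset.sum_le_sum_of_subset_of_nonneg (JJ_subset hε n) fun j _ _ => uu_nonneg _ _ _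
    have l : Tendsto (fun ε : ℝ => EK * (1 - ε)) (nhdsWithin 0 (Set.Ioi 0))
        (nhds (EK * (1 - 0))) :=
      (continuous_const.mul (continuous_const.sub continuous_id)).continuousAt.continuousWithinAt
    rw [sub_zero, mul_one] at l
    refine le_of_tendsto l ?_
    have : ∀ᶠ ε : ℝ in nhdsWithin 0 (Set.Ioi 0), ε < 1 :=
      mem_nhdsWithin_of_mem_nhds (gt_mem_nhds zero_lt_one)
    filter_upwards [this, self_mem_nhdsWithin] with ε he he0
    exact key ε he0 he
  have hlim : ∀ ω, Tendsto (fun K : ℕ => vK θi θ P E f κw A F r δ K ω) atTop (nhds (v ω)) := by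
    intro ω
    refine tendsto_const_nhds.congr' ?_
    filter_upwards [eventually_ge_atTop ⌈Bd θ A F r δ ω⌉₊] with K hK
    unfold vK
    rw [Set.indicator_of_mem]
    have hK' : Bd θ A F r δ ω ≤ (K : ℝ) := Nat.ceil_le.1 hK
    exact hK'
  have hvi : Integrable v Pr := by
    refine ⟨hvm.aestronglyMeasurable, ?_⟩
    have a1 : ∫⁻ ω, ‖v ω‖ₑ ∂Pr
        ≤ liminf (fun K : ℕ => ∫⁻ ω, ‖vK θi θ P E f κw A F r δ K ω‖ₑ ∂Pr) atTop := by
      have : ∀ ω, ‖v ω‖ₑ = liminf (fun K : ℕ => ‖vK θi θ P E f κw A F r δ K ω‖ₑ) atTop :=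
        fun ω => ((hlim ω).enorm.liminf_eq).symm
      simp only [this]
      exact lintegral_liminf_le fun K => (hvK K).enorm
    have a2 : ∀ K : ℕ, ∫⁻ ω, ‖vK θi θ P E f κw A F r δ K ω‖ₑ ∂Pr ≤ ENNReal.ofReal V := by
      intro K
      rw [← ofReal_integral_norm_eq_lintegral_enorm (hvKi K)]
      refine ENNReal.ofReal_le_ofReal (le_trans (le_of_eq ?_) (claim1 K))
      refine integral_congr_ae ?_
      filter_upwards [hvK0] with ω h
      rw [Real.norm_eq_abs, abs_of_nonneg (h K).1]
    have a3 : liminf (fun K : ℕ => ∫⁻ ω, ‖vK θi θ P E f κw A F r δ K ω‖ₑ ∂Pr) atTop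
        ≤ ENNReal.ofReal V := by
      have := liminf_le_liminf (f := (atTop : Filter ℕ)) (Eventually.of_forall a2)
      rwa [liminf_const] at this
    exact (a1.trans a3).trans_lt ENNReal.ofReal_lt_top
  have hEK : Tendsto (fun K : ℕ => ∫ ω, vK θi θ P E f κw A F r δ K ω ∂Pr) atTop
      (nhds (∫ ω, v ω ∂Pr)) := by
    refine tendsto_integral_of_dominated_convergence v (fun K => (hvK K).aestronglyMeasurable)
      hvi (fun K => ?_) (Eventually.of_forall hlim)
    filter_upwards [hvK0] with ω h
    rw [Real.norm_eq_abs, abs_of_nonneg (h K).1]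
    exact (h K).2.2
  -- second claim
  have claim2 : V ≤ ∫ ω, v ω ∂Pr := by
    have hex : ∃ K : ℕ, Pr {ω | Tl θ A F r ω 0 ≤ K} ≠ 0 := by
      by_contra! hcon
      have hun : (⋃ K : ℕ, {ω | Tl θ A F r ω 0 ≤ K}) = Set.univ := by
        refine Set.eq_univ_of_forall fun ω => Set.mem_iUnion.2 ?_
        obtain ⟨k, hk⟩ := exists_nat_ge (Tl θ A F r ω 0)
        exact ⟨k, hk⟩
      have : Pr Set.univ = 0 := by
        rw [← hun]; exact measure_iUnion_null hcon
      simp at this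
    obtain ⟨K, hK⟩ := hex
    have hms : MeasurableSet {ω | Tl θ A F r ω 0 ≤ K} := (S.measurable_Tl 0) measurableSet_Iic
    have hrec := hT.toMeasurePreserving.conservative.ae_mem_imp_frequently_image_mem
      hms.nullMeasurableSet
    have hBv := birkhoff_ergodic hT hvm hvi
    obtain ⟨ω, hωm, hd, hcω, hUω, hBω, hrω⟩ := ((frequently_ae_mem_iff.2 hK).and_eventually
      (hD.and (hc.and (hU.and (hBv.and hrec))))).exists
    exact S.up hκ h1 h2 hcω hd (hrω hωm) hUω hBω
  filter_upwards [hD, hc, hB] with ω hd hcω hBω η hη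
  obtain ⟨K, hK⟩ := (hEK.eventually (lt_mem_nhds
    (show V - η / 3 < ∫ ω, v ω ∂Pr by linarith))).exists
  set EK := ∫ ω, vK θi θ P E f κw A F r δ K ω ∂Pr
  have hEK0 : 0 ≤ EK := integral_nonneg_of_ae (by
    filter_upwards [hvK0] with ω h using (h K).1)
  have hq : 0 < η / 3 / (EK + 1) := by positivity
  refine ⟨K, Nat.cast_nonneg K, min (1/2) (η / 3 / (EK + 1)), lt_min (by norm_num) hq,
    (min_le_left _ _).trans_lt (by norm_num), ?_⟩
  set ε := min (1/2) (η / 3 / (EK + 1))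
  have hε : 0 < ε := lt_min (by norm_num) hq
  have hε2 : ε * (EK + 1) ≤ η / 3 := by
    rw [← le_div_iff₀ (by linarith)]; exact min_le_right _ _
  obtain ⟨z, hz, hzn⟩ := S.low hκ h1 h2 hcω hd (Nat.cast_nonneg K) hε
    ((min_le_left _ _).trans_lt (by norm_num)) (hBω K)
  filter_upwards [hzn, hz.eventually (lt_mem_nhds (show EK * (1 - ε) - η / 3 < EK * (1 - ε) by
    linarith))] with n a1 a2
  nlinarith

end ErgoMain

section P12
set_option linter.unusedSectionVars false
variable {Ω₀ 𝒳 : Type*} [MeasurableSpace Ω₀] [MeasurableSpace 𝒳]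
variable {θ : Ω₀ → Ω₀} {P : Ω₀ → Kernel 𝒳 𝒳} {E : Ω₀ → Set 𝒳} {A : Set Ω₀} {δ : ℝ}
    {M : ℕ} {r p : ℝ} {f : Ω₀ → 𝒳 → ℝ} {F : Ω₀ → ℝ} {ω : Ω₀} {κ : Measure (ℕ → 𝒳)}

lemma Dat.vis_avg (D : Dat θ A F p ω) {q : ℝ} (hq0 : 0 < q) (hq1 : q < 1) {e : ℝ} (he : 0 < e)
    (he1 : e < 1) : ∀ᶠ n : ℕ in atTop, (⌈e * n⌉₊ : ℝ) ≤ 2 * (e * n) ∧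
      ∑ j ∈ Finset.range n, q ^ (vis θ A (θ^[j - ⌈e * n⌉₊] ω) (j - (j - ⌈e * n⌉₊)))
        ≤ 3 * e * n := by
  obtain ⟨c, hc, k0, hk⟩ := D.gap he he1
  have hρ1 : q ^ c < 1 := Real.rpow_lt_one hq0.le hq1 hc
  have hρ0 : 0 ≤ q ^ c := (Real.rpow_pos_of_pos hq0 c).le
  have hen : Tendsto (fun n : ℕ => e * (n : ℝ)) atTop atTop :=
    tendsto_natCast_atTop_atTop.const_mul_atTop he
  have hl : Tendsto (fun n : ℕ => ⌈e * (n : ℝ)⌉₊) atTop atTop := tendsto_nat_ceil_atTop.comp hen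
  have hpw := ((tendsto_pow_atTop_nhds_zero_of_lt_one hρ0 hρ1).comp hl).eventually
    (ge_mem_nhds he)
  filter_upwards [hpw, hl.eventually_ge_atTop k0, hen.eventually_ge_atTop 1] with n h1 h2 h3
  set l := ⌈e * (n : ℝ)⌉₊ with hl'
  have hl1 : (l : ℝ) < e * n + 1 := Nat.ceil_lt_add_one (by linarith)
  have hl0 : e * n ≤ (l : ℝ) := Nat.le_ceil _
  refine ⟨by linarith, ?_⟩
  have ht : ∀ j ∈ Finset.range n, q ^ (vis θ A (θ^[j - l] ω) (j - (j - l)))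
      ≤ (if j ∈ Finset.range l then 1 else 0) + e := by
    intro j hj
    have hjn : (j : ℝ) ≤ n := by exact_mod_cast (Finset.mem_range.1 hj).le
    split_ifs with hjl
    · have : q ^ (vis θ A (θ^[j - l] ω) (j - (j - l))) ≤ 1 := pow_le_one₀ hq0.le hq1.le
      linarith
    · have hlj : l ≤ j := by simpa using hjl
      have hg := hk j (h2.trans hlj) (j - l) (by
        rw [Nat.cast_sub hlj]; nlinarith)
      have h4 := pow_le_of_gap hq0 hq1 hg
      have h5 : (q ^ c) ^ j ≤ (q ^ c) ^ l := pow_le_pow_of_le_one hρ0 hρ1.le hlj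
      have h6 : (q ^ c) ^ l ≤ e := h1
      linarith
  refine (Finset.sum_le_sum ht).trans ?_
  rw [Finset.sum_add_distrib, Finset.sum_const, Finset.card_range, nsmul_eq_mul,
    Finset.sum_ite_mem, Finset.sum_const, nsmul_eq_mul, mul_one]
  have : ((Finset.range n ∩ Finset.range l).card : ℝ) ≤ l := by
    have := Finset.card_le_card (Finset.inter_subset_right (s₁ := Finset.range n) (s₂ := Finset.range l))
    rw [Finset.card_range] at this
    exact_mod_cast this
  nlinarith

lemma charfun_diff [IsProbabilityMeasure κ] {φ ψ : (ℕ → 𝒳) → ℝ} (hφ : Measurable φ)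
    (hψ : Measurable ψ) {a : ℝ} (ha : ∀ y, |φ y - ψ y| ≤ a) (c : ℝ) :
    ‖∫ y, Complex.exp (Complex.I * ((c * φ y : ℝ) : ℂ)) ∂κ
      - ∫ y, Complex.exp (Complex.I * ((c * ψ y : ℝ) : ℂ)) ∂κ‖
      ≤ |c| * √(∫ y, (φ y - ψ y) ^ 2 ∂κ) := by
  have hn : ∀ x : ℝ, ‖Complex.exp (Complex.I * (x : ℂ))‖ = 1 := fun x => by
    rw [mul_comm]; exact Complex.norm_exp_ofReal_mul_I x
  have hi : ∀ {φ : (ℕ → 𝒳) → ℝ}, Measurable φ →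
      Integrable (fun y => Complex.exp (Complex.I * ((c * φ y : ℝ) : ℂ))) κ := fun {φ} h =>
    integrable_bdd (a := 1) (by fun_prop) fun y => (hn _).le
  rw [← integral_sub (hi hφ) (hi hψ)]
  have hm : Measurable fun y => φ y - ψ y := hφ.sub hψ
  have hIntg : Integrable (fun y => |φ y - ψ y|) κ :=
    integrable_bdd (a := a) (hm.abs) fun y => by
      rw [Real.norm_eq_abs, abs_abs]; exact ha y
  calc _ ≤ ∫ y, |c| * |φ y - ψ y| ∂κ := by
        refine norm_integral_le_of_norm_le (hIntg.const_mul _) (ae_of_all _ fun y => ?_)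
        have e : Complex.exp (Complex.I * ((c * φ y : ℝ) : ℂ))
            - Complex.exp (Complex.I * ((c * ψ y : ℝ) : ℂ))
            = Complex.exp (Complex.I * ((c * ψ y : ℝ) : ℂ))
              * (Complex.exp (Complex.I * ((c * (φ y - ψ y) : ℝ) : ℂ)) - 1) := by
          rw [mul_sub, ← Complex.exp_add, mul_one]
          congr 2; push_cast; ring
        rw [e, norm_mul, hn, one_mul]
        refine (Real.norm_exp_I_mul_ofReal_sub_one_le).trans ?_
        rw [Real.norm_eq_abs, abs_mul]
    _ = |c| * ∫ y, |φ y - ψ y| ∂κ := integral_const_mul _ _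
    _ ≤ _ := mul_le_mul_of_nonneg_left (integral_abs_le_sqrt κ hm ha) (abs_nonneg _)

lemma exp_neg_diff {a b : ℝ} (ha : 0 ≤ a) (hb : 0 ≤ b) :
    ‖Complex.exp (-((a : ℝ) : ℂ)) - Complex.exp (-((b : ℝ) : ℂ))‖ ≤ |a - b| := by
  rw [← Complex.ofReal_neg, ← Complex.ofReal_neg, ← Complex.ofReal_exp, ← Complex.ofReal_exp,
    ← Complex.ofReal_sub, Complex.norm_real, Real.norm_eq_abs]
  have h1 := Real.add_one_le_exp (a - b)
  have h2 := Real.add_one_le_exp (b - a)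
  have e1 : Real.exp (-b) = Real.exp (-a) * Real.exp (a - b) := by rw [← Real.exp_add]; ring_nf
  have e2 : Real.exp (-a) = Real.exp (-b) * Real.exp (b - a) := by rw [← Real.exp_add]; ring_nf
  have a1 : Real.exp (-a) ≤ 1 := Real.exp_le_one_iff.2 (by linarith)
  have a0 := Real.exp_pos (-a)
  have b1 : Real.exp (-b) ≤ 1 := Real.exp_le_one_iff.2 (by linarith)
  have b0 := Real.exp_pos (-b)
  rcases le_total a b with h | h
  · have : |a - b| = b - a := by rw [abs_of_nonpos (by linarith)]; ring
    rw [this, abs_le]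
    have : Real.exp (-b) ≤ Real.exp (-a) := Real.exp_le_exp.2 (by linarith)
    constructor <;> nlinarith
  · rw [abs_of_nonneg (by linarith : 0 ≤ a - b), abs_le]
    have : Real.exp (-a) ≤ Real.exp (-b) := Real.exp_le_exp.2 (by linarith)
    constructor <;> nlinarith

lemma msum_arr_smul (n : ℕ) (c : ℝ) (J : Finset ℕ) (y : ℕ → 𝒳) :
    msum (arr θ P E f ω n c J) 0 n y = c * msum (arr θ P E f ω n 1 J) 0 n y := by
  unfold msum arr
  rw [Finset.mul_sum]
  refine Finset.sum_congr rfl fun k _ => ?_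
  split_ifs <;> simp

lemma Setup.measurable_Sbar (S : Setup θ P E A δ M r f F) (n : ℕ) :
    Measurable (Sbar θ f ω κ n) := by
  unfold Sbar
  refine Measurable.sub_const (Finset.measurable_sum _ fun j _ => ?_) _
  exact (S.hf.comp measurable_prodMk_left).comp (measurable_pi_apply j)

lemma Setup.abs_Sbar_le (S : Setup θ P E A δ M r f F) [IsProbabilityMeasure κ] (n : ℕ) :
    ∃ a : ℝ, ∀ y, |Sbar θ f ω κ n y| ≤ a := by
  refine ⟨(∑ j ∈ Finset.range n, F (θ^[j] ω))
    + |∫ y', ∑ j ∈ Finset.range n, f (θ^[j] ω) (y' j) ∂κ|, fun y => ?_⟩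
  unfold Sbar
  refine (abs_sub _ _).trans ?_
  gcongr
  exact (Finset.abs_sum_le_sum_abs _ _).trans (Finset.sum_le_sum fun j _ => S.hfF _ _)

end P12

section P13
set_option linter.unusedSectionVars false
variable {Ω₀ 𝒳 : Type*} [MeasurableSpace Ω₀] [MeasurableSpace 𝒳]
variable {θ : Ω₀ → Ω₀} {P : Ω₀ → Kernel 𝒳 𝒳} {E : Ω₀ → Set 𝒳} {A : Set Ω₀} {δ : ℝ}
    {M : ℕ} {r p : ℝ} {f : Ω₀ → 𝒳 → ℝ} {F : Ω₀ → ℝ} {ω : Ω₀} {κ : Measure (ℕ → 𝒳)}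

/-- Step (a)+(c): reduction to the truncated martingale, for one `n`. -/
lemma Setup.red (S : Setup θ P E A δ M r f F) [IsProbabilityMeasure κ]
    (hc : GoodChain θ P E A δ M ω κ) (hs : WS θ A F r ω) {K ε η V t : ℝ} (hε : 0 < ε) (hV : 0 ≤ V)
    {n : ℕ} (hn : 0 < n)
    (hU : |(∑ j ∈ Finset.range n, uu θ P E f ω κ n j) / n - V| ≤ η)
    (hJ : V - η ≤ (∑ j ∈ JJ θ A F r δ ω K ε n, uu θ P E f ω κ n j) / n)
    (he : (2 * (1 - δ)⁻¹ * Tl θ A F r ω 0) ^ 2 / n ≤ η) :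
    ‖∫ y, Complex.exp (Complex.I * ((t / √n * Sbar θ f ω κ n y : ℝ) : ℂ)) ∂κ
      - Complex.exp (-((t ^ 2 * V / 2 : ℝ) : ℂ))‖
    ≤ |t| * √(3 * η) + t ^ 2 * η / 2
      + ‖∫ y, Complex.exp (Complex.I *
          msum (arr θ P E f ω n (t / √n) (JJ θ A F r δ ω K ε n)) 0 n y) ∂κ
        - Complex.exp (-((∑ j ∈ Finset.range n, ∫ y, cvar θ P ω
          (arr θ P E f ω n (t / √n) (JJ θ A F r δ ω K ε n)) j (y j) ∂κ) / 2 : ℝ))‖ := by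
  classical
  have hn' : (0:ℝ) < n := by exact_mod_cast hn
  have hsq : √(n:ℝ) ^ 2 = n := Real.sq_sqrt hn'.le
  have hsp : 0 < √(n:ℝ) := Real.sqrt_pos.2 hn'
  set J := JJ θ A F r δ ω K ε n with hJdef
  have hJs : J ⊆ Finset.range n := JJ_subset hε n
  obtain ⟨e0, he0, he1, hap⟩ := S.approx hc hs n
  have hap := hap J hJs
  obtain ⟨b, hb, hbJ⟩ := exists_bound 1 J fun j => Bd θ A F r δ (θ^[j] ω)
  have hmd := S.mdiff hc.env hs n 1 J hb hbJ
  obtain ⟨a, ha⟩ := S.abs_Sbar_le (ω := ω) (κ := κ) n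
  have hA := charfun_diff (κ := κ) (S.measurable_Sbar (ω := ω) (κ := κ) n)
    (hmd.measurable_msum 0 n) (a := a + n * b)
    (fun y => (abs_sub _ _).trans (add_le_add (ha y) (hmd.abs_msum_le 0 n y))) (t / √n)
  rw [hap] at hA
  have hsum : ∑ j ∈ Finset.range n \ J, uu θ P E f ω κ n j
      = ∑ j ∈ Finset.range n, uu θ P E f ω κ n j - ∑ j ∈ J, uu θ P E f ω κ n j := by
    rw [eq_sub_iff_add_eq, Finset.sum_sdiff hJs]
  have hsd : 0 ≤ ∑ j ∈ Finset.range n \ J, uu θ P E f ω κ n j :=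
    Finset.sum_nonneg fun j _ => uu_nonneg _ _ _
  have hUJ0 : 0 ≤ ∑ j ∈ J, uu θ P E f ω κ n j := Finset.sum_nonneg fun j _ => uu_nonneg _ _ _
  set U := ∑ j ∈ Finset.range n, uu θ P E f ω κ n j
  set UJ := ∑ j ∈ J, uu θ P E f ω κ n j
  rw [abs_le] at hU
  have hb1 : |t / √n| * √(e0 + ∑ j ∈ Finset.range n \ J, uu θ P E f ω κ n j) ≤ |t| * √(3 * η) := by
    rw [abs_div, abs_of_pos hsp, div_mul_eq_mul_div, mul_div_assoc,
      ← Real.sqrt_div (by positivity)]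
    gcongr
    rw [hsum, add_div, sub_div]
    have : e0 / n ≤ η := (div_le_div_of_nonneg_right he1 hn'.le).trans he
    linarith
  have hcv := sum_cvar_arr (θ := θ) (P := P) (E := E) (f := f) (ω := ω) κ n (t / √n) J hJs
  have hC := exp_neg_diff (a := (∑ j ∈ Finset.range n, ∫ y, cvar θ P ω
          (arr θ P E f ω n (t / √n) J) j (y j) ∂κ) / 2) (b := t ^ 2 * V / 2)
          (by rw [hcv]; positivity) (by positivity)
  have hC2 : |(∑ j ∈ Finset.range n, ∫ y, cvar θ P ω
          (arr θ P E f ω n (t / √n) J) j (y j) ∂κ) / 2 - t ^ 2 * V / 2| ≤ t ^ 2 * η / 2 := by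
    rw [hcv]
    have : (t / √n) ^ 2 * ∑ j ∈ J, uu θ P E f ω κ n j = t ^ 2 * (UJ / n) := by
      rw [div_pow, hsq]; ring
    rw [this, show t ^ 2 * (UJ / n) / 2 - t ^ 2 * V / 2 = t ^ 2 / 2 * (UJ / n - V) by ring,
      abs_mul, abs_of_nonneg (by positivity : 0 ≤ t ^ 2 / 2),
      show t ^ 2 * η / 2 = t ^ 2 / 2 * η by ring]
    refine mul_le_mul_of_nonneg_left (abs_le.2 ⟨by linarith, ?_⟩) (by positivity)
    have : UJ / n ≤ U / n := div_le_div_of_nonneg_right (by linarith) hn'.le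
    linarith
  simp only [msum_arr_smul n (t / √n) J]
  have tri : ∀ x y z w : ℂ, ‖x - w‖ ≤ ‖x - y‖ + ‖z - w‖ + ‖y - z‖ := fun x y z w => by
    have := norm_add₃_le (a := x - y) (b := z - w) (c := y - z)
    rwa [show x - y + (z - w) + (y - z) = x - w by ring] at this
  refine (tri _ _ _ _).trans (add_le_add (add_le_add (hA.trans hb1) (hC.trans hC2)) le_rfl)

/-- Step (b). -/
lemma Setup.mart (S : Setup θ P E A δ M r f F) [IsProbabilityMeasure κ]
    (hc : GoodChain θ P E A δ M ω κ) (D : Dat θ A F p ω) {K ε : ℝ} (hK : 0 ≤ K) (hε : 0 < ε)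
    (t : ℝ) {e : ℝ} (he : 0 < e) :
    ∀ᶠ n : ℕ in atTop, ‖∫ y, Complex.exp (Complex.I *
          msum (arr θ P E f ω n (t / √n) (JJ θ A F r δ ω K ε n)) 0 n y) ∂κ
        - Complex.exp (-((∑ j ∈ Finset.range n, ∫ y, cvar θ P ω
          (arr θ P E f ω n (t / √n) (JJ θ A F r δ ω K ε n)) j (y j) ∂κ) / 2 : ℝ))‖ ≤ e := by
  have hs := D.ws S.hr0 S.hr1 S.hF0
  have hq0 : 0 < r ^ 2 := by have := S.hr0; positivity
  have hq1 : r ^ 2 < 1 := pow_lt_one₀ S.hr0.le S.hr1 (by norm_num)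
  have hδ' : 0 < 1 - δ := by linarith [S.hδ1]
  set B := |t| * K with hB
  have hB0 : 0 ≤ B := by positivity
  have hcont : Tendsto (fun x : ℝ => B ^ 3 * √(2 * x) + B ^ 2 * (1 - δ)⁻¹ * (3 * x))
      (nhdsWithin 0 (Set.Ioi 0)) (nhds 0) := by
    have : Continuous fun x : ℝ => B ^ 3 * √(2 * x) + B ^ 2 * (1 - δ)⁻¹ * (3 * x) := by fun_prop
    have h := this.tendsto 0
    simp only [mul_zero, Real.sqrt_zero, add_zero] at h
    exact h.mono_left nhdsWithin_le_nhds
  obtain ⟨x, hx, hx1, hx0⟩ := ((hcont.eventually (ge_mem_nhds (half_pos he))).and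
    (Ioo_mem_nhdsGT (zero_lt_one))).exists
  · have hsn : Tendsto (fun n : ℕ => √(n:ℝ)) atTop atTop :=
      Real.tendsto_sqrt_atTop.comp tendsto_natCast_atTop_atTop
    have hlim : Tendsto (fun n : ℕ => 2 * B ^ 3 / √(n:ℝ)) atTop (nhds 0) :=
      tendsto_const_nhds.div_atTop hsn
    filter_upwards [D.vis_avg hq0 hq1 hx1 hx0, hlim.eventually (ge_mem_nhds (half_pos he)),
      hsn.eventually_ge_atTop B, eventually_gt_atTop 0] with n hv h2 h3 hn
    have hn' : (0:ℝ) < n := by exact_mod_cast hn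
    have hsq : √(n:ℝ) ^ 2 = n := Real.sq_sqrt hn'.le
    have hsp : 0 < √(n:ℝ) := Real.sqrt_pos.2 hn'
    set l := ⌈x * (n:ℝ)⌉₊
    have hmd := S.mdiff hc.env hs n (t / √n) (JJ θ A F r δ ω K ε n) (b := B / √n) (by positivity)
      (fun j hj => by
        have : Bd θ A F r δ (θ^[j] ω) ≤ K := (Finset.mem_filter.1 hj).2
        rw [abs_div, abs_of_pos hsp, hB, mul_div_right_comm]
        gcongr)
    refine (hmd.charfun_bound S.hP S.hδ S.hδ1 S.hM S.hE hq0 hq1 S.hr hc (by positivity)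
      ((div_le_one hsp).2 h3) n l).trans ?_
    rw [Finset.sum_add_distrib, Finset.sum_const, Finset.card_range, nsmul_eq_mul,
      ← Finset.mul_sum, ← Finset.mul_sum]
    have e1 : (n:ℝ) * (2 * (B / √n) ^ 3 + (B / √n) ^ 3 * √l)
        = 2 * B ^ 3 / √n + B ^ 3 * (√l / √n) := by
      have : (n:ℝ) * (B / √n) ^ 3 = B ^ 3 / √n := by
        have h : √(n:ℝ) ^ 2 * (B / √n) ^ 3 = B ^ 3 / √n := by field_simp
        rwa [hsq] at h
      calc _ = 2 * ((n:ℝ) * (B / √n) ^ 3) + ((n:ℝ) * (B / √n) ^ 3) * √l := by ring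
        _ = _ := by rw [this]; ring
    have e2 : √(l:ℝ) / √n ≤ √(2 * x) := by
      rw [← Real.sqrt_div (Nat.cast_nonneg _)]
      refine Real.sqrt_le_sqrt ?_
      rw [div_le_iff₀ hn']; linarith [hv.1]
    have e3 : (B / √n) ^ 2 * ((1 - δ)⁻¹ * ∑ j ∈ Finset.range n,
        (r ^ 2) ^ (vis θ A (θ^[j - l] ω) (j - (j - l)))) ≤ B ^ 2 * (1 - δ)⁻¹ * (3 * x) := by
      rw [div_pow, hsq]
      calc _ ≤ B ^ 2 / n * ((1 - δ)⁻¹ * (3 * x * n)) := by gcongr; exact hv.2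
        _ = _ := by field_simp
    rw [e1]
    have e4 : B ^ 3 * (√l / √n) ≤ B ^ 3 * √(2 * x) := by gcongr
    linarith

theorem Setup.charfun_lim (S : Setup θ P E A δ M r f F) [IsProbabilityMeasure κ]
    (hc : GoodChain θ P E A δ M ω κ) (D : Dat θ A F p ω) {V : ℝ} (hV : 0 ≤ V)
    (hU : Tendsto (fun n : ℕ =>
      (∑ j ∈ Finset.range n, uu θ P E f ω κ n j) / n) atTop (nhds V))
    (hcap : ∀ η : ℝ, 0 < η → ∃ K : ℝ, 0 ≤ K ∧ ∃ ε : ℝ, 0 < ε ∧ ε < 1 ∧ ∀ᶠ n : ℕ in atTop,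
      V - η ≤ (∑ j ∈ JJ θ A F r δ ω K ε n, uu θ P E f ω κ n j) / n) (t : ℝ) :
    Tendsto (fun n : ℕ => ∫ y, Complex.exp (Complex.I * ((t / √n * Sbar θ f ω κ n y : ℝ) : ℂ)) ∂κ)
      atTop (nhds (Complex.exp (-((t ^ 2 * V / 2 : ℝ) : ℂ)))) := by
  rw [tendsto_iff_norm_sub_tendsto_zero]
  have hs := D.ws S.hr0 S.hr1 S.hF0
  have key : ∀ e : ℝ, 0 < e → ∀ᶠ n : ℕ in atTop,
      ‖∫ y, Complex.exp (Complex.I * ((t / √n * Sbar θ f ω κ n y : ℝ) : ℂ)) ∂κ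
      - Complex.exp (-((t ^ 2 * V / 2 : ℝ) : ℂ))‖ ≤ e := by
    intro e he
    have hcont : Tendsto (fun x : ℝ => |t| * √(3 * x) + t ^ 2 * x / 2)
        (nhdsWithin 0 (Set.Ioi 0)) (nhds 0) := by
      have : Continuous fun x : ℝ => |t| * √(3 * x) + t ^ 2 * x / 2 := by fun_prop
      have h := this.tendsto 0
      simp only [mul_zero, Real.sqrt_zero, add_zero, zero_div] at h
      exact h.mono_left nhdsWithin_le_nhds
    obtain ⟨η, hη, hη0⟩ := ((hcont.eventually (ge_mem_nhds (half_pos he))).and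
      self_mem_nhdsWithin).exists
    have hη0 : 0 < η := hη0
    obtain ⟨K, hK, ε, hε, hε1, hJ⟩ := hcap η hη0
    have hlim : Tendsto (fun n : ℕ => (2 * (1 - δ)⁻¹ * Tl θ A F r ω 0) ^ 2 / (n:ℝ)) atTop (nhds 0) :=
      tendsto_const_nhds.div_atTop tendsto_natCast_atTop_atTop
    filter_upwards [hJ, hlim.eventually (ge_mem_nhds hη0), S.mart hc D hK hε t (half_pos he),
      eventually_gt_atTop 0, (Metric.tendsto_nhds.1 hU) η hη0] with n h1 h2 h3 h4 h5
    rw [Real.dist_eq] at h5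
    have := S.red hc hs (t := t) hε hV h4 h5.le h1 h2
    linarith
  rw [Metric.tendsto_nhds]
  intro e he
  filter_upwards [key (e / 2) (half_pos he)] with n hn
  rw [Real.dist_eq, sub_zero, abs_of_nonneg (norm_nonneg _)]
  linarith

end P13

section P14
set_option linter.unusedSectionVars false

lemma cdf_lim {α : Type*} [MeasurableSpace α] {κ : Measure α} [IsProbabilityMeasure κ]
    {Z : ℕ → α → ℝ} (hZ : ∀ n, Measurable (Z n))
    (h : ∀ t : ℝ, Tendsto (fun n => ∫ y, Complex.exp (Complex.I * ((t * Z n y : ℝ) : ℂ)) ∂κ) atTop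
      (nhds (Complex.exp (-((t ^ 2 / 2 : ℝ) : ℂ))))) (t : ℝ) :
    Tendsto (fun n => (κ {y | Z n y ≤ t}).toReal) atTop (nhds (stdNormalCDF t)) := by
  let μ : ℕ → ProbabilityMeasure ℝ := fun n =>
    ⟨κ.map (Z n), Measure.isProbabilityMeasure_map (hZ n).aemeasurable⟩
  let μ₀ : ProbabilityMeasure ℝ := ⟨gaussianReal 0 1, inferInstance⟩
  have hconv : Tendsto μ atTop (nhds μ₀) := by
    rw [ProbabilityMeasure.tendsto_iff_tendsto_charFun]
    intro s
    have e1 : ∀ n, charFun ((μ n : Measure ℝ)) s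
        = ∫ y, Complex.exp (Complex.I * ((s * Z n y : ℝ) : ℂ)) ∂κ := fun n => by
      rw [charFun_apply_real]
      change ∫ x, _ ∂(κ.map (Z n)) = _
      rw [integral_map (hZ n).aemeasurable (by fun_prop)]
      refine integral_congr_ae (ae_of_all _ fun y => ?_)
      simp only
      congr 1; push_cast; ring
    have e2 : charFun ((μ₀ : Measure ℝ)) s = Complex.exp (-((s ^ 2 / 2 : ℝ) : ℂ)) := by
      change charFun (gaussianReal 0 1) s = _
      rw [charFun_gaussianReal]
      congr 1; push_cast; simp
    simp only [e1, e2]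
    exact h s
  have hfr : (μ₀ : Measure ℝ) (frontier (Set.Iic t)) = 0 := by
    change gaussianReal 0 1 _ = 0
    rw [frontier_Iic]
    have : NullSingletonClass (gaussianReal 0 1) := nullSingletonClass_gaussianReal one_ne_zero
    exact measure_singleton t
  have := ProbabilityMeasure.tendsto_measure_of_null_frontier_of_tendsto' hconv hfr
  have h2 := (ENNReal.tendsto_toReal (measure_ne_top (gaussianReal 0 1) (Set.Iic t))).comp this
  refine h2.congr fun n => ?_
  change (κ.map (Z n) (Set.Iic t)).toReal = _
  rw [Measure.map_apply (hZ n) measurableSet_Iic]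
  rfl

lemma ergodic_of_mixing {Ω₁ : Type*} [MeasurableSpace Ω₁] {Pr : Measure Ω₁} [IsProbabilityMeasure Pr]
    {θ : Ω₁ → Ω₁} (hθ : MeasurePreserving θ Pr Pr) (hm : StrongMixing Pr θ) : Ergodic θ Pr := by
  refine ⟨hθ, ⟨fun s hs hinv => ?_⟩⟩
  have h := hm s s hs hs
  have e : ∀ n, s ∩ θ^[n] ⁻¹' s = s := fun n => by
    have : θ^[n] ⁻¹' s = s := by
      induction n with
      | zero => rfl
      | succ n ih => rw [Function.iterate_succ, Set.preimage_comp, ih, hinv]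
    rw [this, Set.inter_self]
  simp only [e] at h
  have h2 := tendsto_nhds_unique h tendsto_const_nhds
  rw [eventuallyConst_set']
  by_cases h0 : Pr s = 0
  · left; exact ae_eq_empty.2 h0
  · right
    have : Pr s = 1 := by
      have h3 : Pr s * Pr s = Pr s * 1 := by rw [h2, mul_one]
      exact (ENNReal.mul_right_inj h0 (measure_ne_top _ _)).1 h3
    exact ae_eq_univ.2 ((prob_compl_eq_zero_iff hs).2 this)

variable {Ω₀ 𝒳 : Type*} [MeasurableSpace Ω₀] [MeasurableSpace 𝒳]
variable {θ : Ω₀ → Ω₀} {P : Ω₀ → Kernel 𝒳 𝒳} {E : Ω₀ → Set 𝒳} {A : Set Ω₀} {δ : ℝ}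
    {M : ℕ} {r p : ℝ} {f : Ω₀ → 𝒳 → ℝ} {F : Ω₀ → ℝ} {ω : Ω₀} {κ : Measure (ℕ → 𝒳)}

lemma Setup.U_lim (S : Setup θ P E A δ M r f F) [IsProbabilityMeasure κ]
    (hc : GoodChain θ P E A δ M ω κ) (hs : WS θ A F r ω) {s : ℝ}
    (hlim : Tendsto (fun n : ℕ => √((∫ y, (Sbar θ f ω κ n y) ^ 2 ∂κ) / n)) atTop (nhds s)) :
    Tendsto (fun n : ℕ => (∑ j ∈ Finset.range n, uu θ P E f ω κ n j) / n) atTop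
      (nhds (s ^ 2)) := by
  choose e0 h0 h1 h2 using fun n => S.approx hc hs n
  have h3 : ∀ n, ∫ y, (Sbar θ f ω κ n y) ^ 2 ∂κ
      = e0 n + ∑ j ∈ Finset.range n, uu θ P E f ω κ n j := fun n => by
    have := h2 n ∅ (by simp)
    rw [Finset.sdiff_empty] at this
    rw [← this]
    simp [msum, arr]
  have h4 := hlim.pow 2
  have hz : Tendsto (fun n : ℕ => e0 n / n) atTop (nhds 0) :=
    squeeze_zero (fun n => div_nonneg (h0 n) (Nat.cast_nonneg _))
      (fun n => div_le_div_of_nonneg_right (h1 n) (Nat.cast_nonneg _))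
      (tendsto_const_nhds.div_atTop tendsto_natCast_atTop_atTop)
  have h5 := h4.sub hz
  rw [sub_zero] at h5
  refine h5.congr fun n => ?_
  rw [Real.sq_sqrt (div_nonneg (integral_nonneg fun y => sq_nonneg _) (Nat.cast_nonneg _)), h3]
  ring

end P14

section P15
set_option linter.unusedSectionVars false

section shifts
variable {𝒵 : Type*} [MeasurableSpace 𝒵]

lemma shiftInv_shift (ω : ℤ → 𝒵) : shiftInv (shift ω) = ω := by
  funext i; simp [shift, shiftInv]

lemma shift_shiftInv (ω : ℤ → 𝒵) : shift (shiftInv ω) = ω := by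
  funext i; simp [shift, shiftInv]

lemma measurable_shiftInv : Measurable (shiftInv (𝒴 := 𝒵)) :=
  measurable_pi_lambda _ fun i => measurable_pi_apply _

lemma measurable_shift : Measurable (shift (𝒴 := 𝒵)) :=
  measurable_pi_lambda _ fun i => measurable_pi_apply _

lemma shiftInv_mp {Pr : Measure (ℤ → 𝒵)} (h : MeasurePreserving (shift (𝒴 := 𝒵)) Pr Pr) :
    MeasurePreserving (shiftInv (𝒴 := 𝒵)) Pr Pr := by
  let e : (ℤ → 𝒵) ≃ᵐ (ℤ → 𝒵) :=
    { toFun := shift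
      invFun := shiftInv
      left_inv := shiftInv_shift
      right_inv := shift_shiftInv
      measurable_toFun := measurable_shift
      measurable_invFun := measurable_shiftInv }
  exact MeasurePreserving.symm e h

lemma ae_all_shifts {Pr : Measure (ℤ → 𝒵)} (h : MeasurePreserving (shift (𝒴 := 𝒵)) Pr Pr)
    {Q : (ℤ → 𝒵) → Prop} (hQ : ∀ᵐ ω ∂Pr, Q ω) :
    ∀ᵐ ω ∂Pr, ∀ l k : ℕ, Q (shift^[k] (shiftInv^[l] ω)) := by
  rw [ae_all_iff]; intro l
  rw [ae_all_iff]; intro k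
  exact ((shiftInv_mp h).iterate l).quasiMeasurePreserving.ae
    ((h.iterate k).quasiMeasurePreserving.ae hQ)

lemma shiftInv_iter_shift {n k : ℕ} (h : n ≤ k) (ω : ℤ → 𝒵) :
    shiftInv^[n] (shift^[k] ω) = shift^[k - n] ω := by
  obtain ⟨m, rfl⟩ := Nat.exists_eq_add_of_le h
  rw [Nat.add_sub_cancel_left, Function.iterate_add_apply]
  exact (Function.LeftInverse.iterate shiftInv_shift n) _

end shifts

variable {𝒵 𝒳 : Type*} [MeasurableSpace 𝒵] [MeasurableSpace 𝒳]

lemma goodChain_of {Xs : (ℤ → 𝒵) → Set 𝒳} (hXs : MeasurableSet {q : (ℤ → 𝒵) × 𝒳 | q.2 ∈ Xs q.1})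
    {P : (ℤ → 𝒵) → Kernel 𝒳 𝒳} (hPMarkov : ∀ ω, IsMarkovKernel (P ω))
    {nrv : (ℤ → 𝒵) → ℕ} {grv : (ℤ → 𝒵) → ℝ} {mrv : (ℤ → 𝒵) → Measure 𝒳}
    (hmrv : ∀ ω, IsProbabilityMeasure (mrv ω)) {δ : ℝ} {M : ℕ}
    {κ : Measure (ℕ → 𝒳)} {ω : ℤ → 𝒵}
    (h1 : ∀ i : ℕ, ∀ x ∈ Xs (shift^[i] ω), P (shift^[i] ω) x (Xs (shift (shift^[i] ω))) = 1)
    (h2 : ∀ i : ℕ, mrv (shift^[i] ω) (Xs (shift^[i] ω)) = 1)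
    (h3 : ∀ i : ℕ, ∀ x ∈ Xs (shiftInv^[nrv (shift^[i] ω)] (shift^[i] ω)), ∀ Γ : Set 𝒳,
      MeasurableSet Γ → Γ ⊆ Xs (shift^[i] ω) →
      ENNReal.ofReal (grv (shift^[i] ω)) * mrv (shift^[i] ω) Γ
        ≤ envKernel shift P (nrv (shift^[i] ω)) (shiftInv^[nrv (shift^[i] ω)] (shift^[i] ω)) x Γ)
    (h4 : ∀ k : ℕ, ∀ᵐ y ∂κ, y k ∈ Xs (shift^[k] ω))
    (h5 : ∀ (k : ℕ) (Γ : Set 𝒳), MeasurableSet Γ →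
      (κ[(fun y => Γ.indicator (fun _ => (1 : ℝ)) (y (k + 1))) | pathSigma 𝒳 k])
        =ᵐ[κ] fun y => (P (shift^[k] ω) (y k) Γ).toReal) :
    GoodChain shift P Xs {ω | δ ≤ grv ω ∧ nrv ω ≤ M} δ M ω κ := by
  have hE : ∀ ω, MeasurableSet (Xs ω) := fun ω => measurable_prodMk_left hXs
  refine ⟨⟨fun k x hx => ?_, fun k hk => ?_⟩, h4, h5⟩
  · rw [Function.iterate_succ_apply']
    have hm := hPMarkov (shift^[k] ω)
    exact (prob_compl_eq_zero_iff (hE _)).2 (h1 k x hx)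
  · obtain ⟨hk1, hk2⟩ := hk
    refine ⟨nrv (shift^[k] ω), hk2, fun hnk => ⟨mrv (shift^[k] ω), hmrv _, fun x hx => ?_⟩⟩
    have hsh := shiftInv_iter_shift hnk ω
    have h := h3 k
    rw [hsh] at h
    rw [Measure.le_iff]
    intro s hs
    have hms := h x hx (s ∩ Xs (shift^[k] ω)) (hs.inter (hE _)) Set.inter_subset_right
    have hp := hmrv (shift^[k] ω)
    have e : mrv (shift^[k] ω) (s ∩ Xs (shift^[k] ω)) = mrv (shift^[k] ω) s := by
      refine measure_inter_conull ?_
      exact ((prob_compl_eq_zero_iff (hE _)).2 (h2 k))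
    rw [e] at hms
    rw [Measure.smul_apply, smul_eq_mul]
    calc _ ≤ ENNReal.ofReal (grv (shift^[k] ω)) * mrv (shift^[k] ω) s := by
          gcongr
      _ ≤ _ := hms
      _ ≤ _ := measure_mono Set.inter_subset_left

/-- truncated observable -/
def ftr (Xs : (ℤ → 𝒵) → Set 𝒳) (f : (ℤ → 𝒵) → 𝒳 → ℝ) (F' : (ℤ → 𝒵) → ℝ) (ω : ℤ → 𝒵) (x : 𝒳) : ℝ :=
  Set.indicator {q : (ℤ → 𝒵) × 𝒳 | q.2 ∈ Xs q.1 ∧ |f q.1 q.2| ≤ F' q.1} (Function.uncurry f) (ω, x)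

lemma ftr_eq {Xs : (ℤ → 𝒵) → Set 𝒳} {f : (ℤ → 𝒵) → 𝒳 → ℝ} {F' : (ℤ → 𝒵) → ℝ} {ω : ℤ → 𝒵} {x : 𝒳}
    (h1 : x ∈ Xs ω) (h2 : |f ω x| ≤ F' ω) : ftr Xs f F' ω x = f ω x := by
  have h : (ω, x) ∈ {q : (ℤ → 𝒵) × 𝒳 | q.2 ∈ Xs q.1 ∧ |f q.1 q.2| ≤ F' q.1} := ⟨h1, h2⟩
  unfold ftr
  rw [Set.indicator_of_mem h]
  rfl

lemma ftr_le {Xs : (ℤ → 𝒵) → Set 𝒳} {f : (ℤ → 𝒵) → 𝒳 → ℝ} {F' : (ℤ → 𝒵) → ℝ}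
    (h0 : ∀ ω, 0 ≤ F' ω) (ω : ℤ → 𝒵) (x : 𝒳) : |ftr Xs f F' ω x| ≤ F' ω := by
  unfold ftr
  by_cases h : (ω, x) ∈ {q : (ℤ → 𝒵) × 𝒳 | q.2 ∈ Xs q.1 ∧ |f q.1 q.2| ≤ F' q.1}
  · rw [Set.indicator_of_mem h]; exact h.2
  · rw [Set.indicator_of_notMem h, abs_zero]; exact h0 ω

lemma measurable_ftr {Xs : (ℤ → 𝒵) → Set 𝒳} {f : (ℤ → 𝒵) → 𝒳 → ℝ} {F' : (ℤ → 𝒵) → ℝ}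
    (hXs : MeasurableSet {q : (ℤ → 𝒵) × 𝒳 | q.2 ∈ Xs q.1}) (hf : Measurable (Function.uncurry f))
    (hF' : Measurable F') : Measurable (Function.uncurry (ftr Xs f F')) := by
  have hs : MeasurableSet {q : (ℤ → 𝒵) × 𝒳 | |f q.1 q.2| ≤ F' q.1} :=
    measurableSet_le hf.abs (hF'.comp measurable_fst)
  exact hf.indicator (hXs.inter hs)

lemma exists_root {δ : ℝ} (h0 : 0 < δ) (h1 : δ < 1) {M : ℕ} (hM : 1 ≤ M) :
    ∃ r : ℝ, 0 < r ∧ r < 1 ∧ (r ^ 2) ^ M = 1 - δ := by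
  have hM' : (2 * M : ℕ) ≠ 0 := by omega
  have hpos : (0:ℝ) < ((2 * M : ℕ) : ℝ)⁻¹ := by positivity
  refine ⟨(1 - δ) ^ (((2 * M : ℕ) : ℝ)⁻¹), Real.rpow_pos_of_pos (by linarith) _,
    Real.rpow_lt_one (by linarith) (by linarith) hpos, ?_⟩
  rw [← pow_mul]
  exact Real.rpow_inv_natCast_pow (by linarith) hM'

end P15

/-- **Theorem (quenched CLT for Markov chains in random environment).**
Under Assumption (A) with `a > 5` and Assumption (B) with `p > 2`, if `Σ > 0` then for
`Pr`-a.e. `ω` and all `t ∈ ℝ`,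
`κ_ω{ n^{−1/2} S̄_n^ω f ≤ t Σ } → Φ(t) = (2π)^{−1/2} ∫_{−∞}^t e^{−x²/2} dx`. -/
theorem quenched_CLT_random_env
    {𝒴 𝒳 : Type*} [MeasurableSpace 𝒴] [MeasurableSpace 𝒳]
    (Pr : Measure (ℤ → 𝒴)) [IsProbabilityMeasure Pr]
    (hshift : MeasurePreserving (shift (𝒴 := 𝒴)) Pr Pr)
    (hmixθ : StrongMixing Pr (shift (𝒴 := 𝒴)))
    (Xs : (ℤ → 𝒴) → Set 𝒳) (hXs : MeasurableSet {q : (ℤ → 𝒴) × 𝒳 | q.2 ∈ Xs q.1})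
    (P : (ℤ → 𝒴) → Kernel 𝒳 𝒳) (hPMarkov : ∀ ω, IsMarkovKernel (P ω))
    (hPmeas : ∀ Γ : Set 𝒳, MeasurableSet Γ → Measurable fun q : (ℤ → 𝒴) × 𝒳 => P q.1 q.2 Γ)
    (hPfib : ∀ᵐ ω ∂Pr, ∀ x ∈ Xs ω, P ω x (Xs (shift ω)) = 1)
    (nrv : (ℤ → 𝒴) → ℕ) (hnrv : Measurable nrv)
    (grv : (ℤ → 𝒴) → ℝ) (hgrv : Measurable grv) (hgrv01 : ∀ ω, grv ω ∈ Set.Ioo (0 : ℝ) 1)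
    (mrv : (ℤ → 𝒴) → Measure 𝒳) (hmrv : ∀ ω, IsProbabilityMeasure (mrv ω))
    (hmrv_meas : ∀ Γ : Set 𝒳, MeasurableSet Γ → Measurable fun ω => mrv ω Γ)
    (hmrv_supp : ∀ᵐ ω ∂Pr, mrv ω (Xs ω) = 1)
    (hDoeb : ∀ᵐ ω ∂Pr, ∀ x ∈ Xs (shiftInv^[nrv ω] ω), ∀ Γ : Set 𝒳, MeasurableSet Γ →
      Γ ⊆ Xs ω →
      ENNReal.ofReal (grv ω) * mrv ω Γ
        ≤ envKernel shift P (nrv ω) (shiftInv^[nrv ω] ω) x Γ)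
    -- Assumption (A)
    (δ : ℝ) (hδ : 0 < δ) (M : ℕ) (hM : 1 ≤ M)
    (hA : 0 < Pr {ω | δ ≤ grv ω ∧ nrv ω ≤ M})
    (b : ℕ → ℝ) (Ar Br : ℕ → Set (ℤ → 𝒴))
    (hAr : ∀ r : ℕ, MeasurableSet[cylSigma 𝒴 (Set.Icc (-(r : ℤ)) r)] (Ar r))
    (hBr_meas : ∀ r, MeasurableSet (Br r))
    (hBr : ∀ r, Pr (Br r) ≤ ENNReal.ofReal (b r))
    (hsub : ∀ r, Ar r ⊆ {ω | δ ≤ grv ω ∧ nrv ω ≤ M} ∪ Br r)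
    (p₀ : ℝ) (hp₀pos : 0 < p₀)
    (hp₀ : Tendsto (fun r => (Pr (Ar r)).toReal) atTop (nhds p₀))
    (hmixcond : (∃ c, ∀ r : ℕ, 1 ≤ r → alphaMix Pr r ≤ c * r * b r) ∨
      (1 + atTop.limsup (psiUMix Pr)) * ENNReal.ofReal (1 - p₀ * (1 - δ)) < 1)
    -- the Markov chain `(X_{ω,k})` in the random environment and its law `κ_ω`
    (κw : (ℤ → 𝒴) → Measure (ℕ → 𝒳)) (hκprob : ∀ ω, IsProbabilityMeasure (κw ω))
    (hκmeas : ∀ s : Set (ℕ → 𝒳), MeasurableSet s → Measurable fun ω => κw ω s)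
    (hκsupp : ∀ᵐ ω ∂Pr, ∀ k : ℕ, ∀ᵐ y ∂(κw ω), y k ∈ Xs (shift^[k] ω))
    (hκMarkov : ∀ᵐ ω ∂Pr, ∀ (k : ℕ) (Γ : Set 𝒳), MeasurableSet Γ →
      ((κw ω)[(fun y => Γ.indicator (fun _ => (1 : ℝ)) (y (k + 1))) | pathSigma 𝒳 k])
        =ᵐ[κw ω] fun y => (P (shift^[k] ω) (y k) Γ).toReal)
    -- the observable `f` and Assumption (B)
    (f : (ℤ → 𝒴) → 𝒳 → ℝ) (hf : Measurable (Function.uncurry f))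
    (p : ℝ) (hp : 2 < p)
    (F : (ℤ → 𝒴) → ℝ) (hFb : ∀ ω, ∀ x ∈ Xs ω, |f ω x| ≤ F ω)
    (hFLp : MemLp F (ENNReal.ofReal p) Pr)
    (hdecay : (∃ a : ℝ, 5 < a ∧ ∃ c, ∀ r : ℕ, 1 ≤ r → b r ≤ c * (r : ℝ) ^ (-a)) ∨
      (∃ a η : ℝ, 0 < a ∧ 0 < η ∧
        ∃ c, ∀ r : ℕ, 1 ≤ r → b r ≤ c * Real.exp (-a * (r : ℝ) ^ η)))
    (Sig : ℝ) (hSigpos : 0 < Sig)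
    (hSig : ∀ᵐ ω ∂Pr,
      Tendsto (fun n : ℕ => Real.sqrt (variance (pathSum f ω n) (κw ω) / n))
        atTop (nhds Sig)) :
    ∀ᵐ ω ∂Pr, ∀ t : ℝ,
      Tendsto (fun n : ℕ =>
          (κw ω {y | (n : ℝ) ^ (-(1 / 2 : ℝ)) *
              (pathSum f ω n y - ∫ y', pathSum f ω n y' ∂(κw ω)) ≤ t * Sig}).toReal)
        atTop (nhds (stdNormalCDF t)) := by
  have hT : Ergodic (shift (𝒴 := 𝒴)) Pr := ergodic_of_mixing hshift hmixθ
  obtain ⟨ω₀, hω₀⟩ : {ω | δ ≤ grv ω ∧ nrv ω ≤ M}.Nonempty := nonempty_of_measure_ne_zero hA.ne'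
  have hδ1 : δ < 1 := lt_of_le_of_lt hω₀.1 (hgrv01 ω₀).2
  obtain ⟨r, hr0, hr1, hr⟩ := exists_root hδ hδ1 hM
  have hAm : MeasurableSet {ω | δ ≤ grv ω ∧ nrv ω ≤ M} :=
    (measurableSet_le measurable_const hgrv).inter (measurableSet_le hnrv measurable_const)
  obtain ⟨F₁, hF₁m, hF₁⟩ := hFLp.1
  set F' : (ℤ → 𝒴) → ℝ := fun ω => |F₁ ω| with hF'
  have hF'm : Measurable F' := hF₁m.measurable.abs
  have hF'0 : ∀ ω, 0 ≤ F' ω := fun ω => abs_nonneg _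
  have hFi : Integrable F Pr := hFLp.integrable (by
    rw [← ENNReal.ofReal_one]; exact ENNReal.ofReal_le_ofReal (by linarith))
  have hF'i : Integrable F' Pr := (hFi.congr hF₁).abs
  set A := {ω : ℤ → 𝒴 | δ ≤ grv ω ∧ nrv ω ≤ M} with hAdef
  set g := ftr Xs f F' with hg
  have S : Setup shift P Xs A δ M r g F' :=
    ⟨hPMarkov, hδ, hδ1, hM, hXs, hr0, hr1, hr, measurable_shift, hPmeas,
      measurable_ftr hXs hf hF'm, ftr_le hF'0, hF'0, hF'm, hAm⟩
  have hc : ∀ᵐ ω ∂Pr, ∀ l, GoodChain shift P Xs A δ M (shiftInv^[l] ω) (κw (shiftInv^[l] ω)) := by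
    filter_upwards [ae_all_shifts hshift hPfib, ae_all_shifts hshift hmrv_supp,
      ae_all_shifts hshift hDoeb, ae_all_shifts hshift hκsupp, ae_all_shifts hshift hκMarkov]
      with ω a1 a2 a3 a4 a5 l
    exact goodChain_of hXs hPMarkov hmrv (a1 l) (a2 l) (a3 l) (a4 l 0) (a5 l 0)
  have hD := ae_Dat hT hAm hA.ne' hF'm hF'0 hF'i
  have heq : ∀ᵐ ω ∂Pr, ∀ n : ℕ, ∀ᵐ y ∂(κw ω), pathSum f ω n y
      = ∑ j ∈ Finset.range n, g (shift^[j] ω) (y j) := by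
    filter_upwards [ae_all_shifts hshift hF₁, hκsupp] with ω a1 a2 n
    filter_upwards [ae_all_iff.2 a2] with y hy
    refine Finset.sum_congr rfl fun j _ => ?_
    refine (ftr_eq (hy j) ((hFb _ _ (hy j)).trans ?_)).symm
    rw [show F (shift^[j] ω) = F₁ (shift^[j] ω) from a1 0 j]
    exact le_abs_self _
  have hU : ∀ᵐ ω ∂Pr, Tendsto (fun n : ℕ =>
      (∑ j ∈ Finset.range n, uu shift P Xs g ω (κw ω) n j) / n) atTop (nhds (Sig ^ 2)) := by
    filter_upwards [hc, hD, heq, hSig] with ω a1 a2 a3 a4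
    have hpr := hκprob ω
    refine S.U_lim (a1 0) (a2.ws hr0 hr1 hF'0) (a4.congr fun n => ?_)
    have hm : Measurable fun y : ℕ → 𝒳 => ∑ j ∈ Finset.range n, g (shift^[j] ω) (y j) :=
      Finset.measurable_sum _ fun j _ =>
        (S.hf.comp measurable_prodMk_left).comp (measurable_pi_apply j)
    rw [variance_congr (a3 n), variance_eq_integral hm.aemeasurable]
    rfl
  have hcap := S.variance_capture hκprob hκmeas measurable_shiftInv shiftInv_shift shift_shiftInv
    hT hA.ne' hF'i hc hU
  filter_upwards [hc, hD, heq, hU, hcap] with ω a1 a2 a3 a4 a5 t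
  have hpr := hκprob ω
  have a0 : GoodChain shift P Xs A δ M ω (κw ω) := a1 0
  have hcf := S.charfun_lim a0 a2 (sq_nonneg Sig) a4 a5
  have hlim := cdf_lim (κ := κw ω) (Z := fun n y => Sbar shift g ω (κw ω) n y / (√n * Sig))
    (fun n => (S.measurable_Sbar n).div_const _) (fun s => by
      have h := hcf (s / Sig)
      have e1 : (s / Sig) ^ 2 * Sig ^ 2 / 2 = s ^ 2 / 2 := by field_simp
      rw [e1] at h
      refine h.congr fun n => ?_
      refine integral_congr_ae (ae_of_all _ fun y => ?_)
      have e2 : s / Sig / √n * Sbar shift g ω (κw ω) n y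
          = s * (Sbar shift g ω (κw ω) n y / (√n * Sig)) := by
        rw [div_div, mul_comm Sig]; ring
      simp only
      rw [e2]) t
  refine hlim.congr fun n => ?_
  congr 1
  refine measure_congr ?_
  have hI : ∫ y', pathSum f ω n y' ∂(κw ω)
      = ∫ y', ∑ j ∈ Finset.range n, g (shift^[j] ω) (y' j) ∂(κw ω) := integral_congr_ae (a3 n)
  filter_upwards [a3 n] with y hy
  refine propext ?_
  change Sbar shift g ω (κw ω) n y / (√n * Sig) ≤ t ↔ (n : ℝ) ^ (-(1 / 2 : ℝ)) *
              (pathSum f ω n y - ∫ y', pathSum f ω n y' ∂(κw ω)) ≤ t * Sig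
  rw [hI, hy, Real.rpow_neg (Nat.cast_nonneg n), ← Real.sqrt_eq_rpow, ← div_div,
    div_le_iff₀ hSigpos, div_eq_inv_mul]
  rfl

end
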